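/- arXiv:math/0611522 — 2 statements merged into one kernel-verified Lean document; each statement's English description precedes it below -/
import Mathlib

section
/- Let r and l be positive integers, d a positive integer dividing l, and ζ_d a primitive d-th root of unity. Then Q'_{(r^l)}(x; q, ζ_d) = (−1)^{rl(d−1)/d} · (p_d^{l/d} ∘ h_r)(x). -/
open MvPolynomial

noncomputable section MacdonaldPreliminaries

/-! ### Base fields: `KK = ℂ(q)` and `FF = ℂ(q)(t)` -/

/-- The field `ℂ(q)` of rational functions in the indeterminate `q`. -/
abbrev KK : Type := RatFunc ℂ

/-- The field `ℂ(q)(t) = ℂ(q,t)`, rational functions in `t` over `ℂ(q)`. -/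
abbrev FF : Type := RatFunc KK

/-- The indeterminate `q`, as an element of `ℂ(q)`. -/
def qK : KK := RatFunc.X

/-- The indeterminate `q`, as an element of `ℂ(q,t)`. -/
def qF : FF := RatFunc.C qK

/-- The indeterminate `t`, as an element of `ℂ(q,t)`. -/
def tF : FF := RatFunc.X

/-! ### The ring of symmetric functions

We model the ring `Λ_R` of symmetric functions over `R` as the free commutative
`R`-algebra on the power sums `p₁, p₂, p₃, …`, i.e. as the polynomial ring in
countably many variables `X k`, `k : ℕ+`, where `X k` represents the power sum `p_k`. -/

/-- The ring of symmetric functions over `R`: polynomials in the power sums `p_k = X k`. -/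
abbrev SymFn (R : Type) [CommSemiring R] : Type := MvPolynomial ℕ+ R

section Core

variable {R : Type} [Field R]

/-- The power sum `p_d` for `d : ℕ`, with `p_0 = 1` by convention. -/
def pN (d : ℕ) : SymFn R := if h : 0 < d then X (⟨d, h⟩ : ℕ+) else 1

/-- `p_λ = ∏ p_{λᵢ}` for a partition `λ` given as a multiset of positive parts. -/
def pPar (lam : Multiset ℕ+) : SymFn R := (lam.map fun k => (X k : SymFn R)).prod

/-- The complete homogeneous symmetric functions, defined by Newton's recursion
`n·h_n = ∑_{i=1}^n p_i · h_{n-i}` with `h_0 = 1`. -/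
def hsym : ℕ → SymFn R
  | 0 => 1
  | (n+1) => (((n : R) + 1)⁻¹) • ∑ i ∈ Finset.range (n+1),
      (X (⟨i+1, Nat.succ_pos i⟩ : ℕ+) : SymFn R) * hsym (n - i)
decreasing_by exact Nat.lt_succ_of_le (Nat.sub_le n i)

/-- `h_z` for an integer index, vanishing for negative `z` (used in Jacobi–Trudi). -/
def hInt (z : ℤ) : SymFn R := if 0 ≤ z then hsym (R := R) z.toNat else 0

/-- The parts of a partition (a multiset of positive integers), sorted decreasingly. -/
def descParts (lam : Multiset ℕ+) : List ℕ :=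
  ((lam.map fun a : ℕ+ => (a : ℕ)).sort (· ≤ ·)).reverse

/-- The weight `|λ|` of a partition. -/
def wt (lam : Multiset ℕ+) : ℕ := (lam.map fun a : ℕ+ => (a : ℕ)).sum

/-- The Schur function `s_λ`, via the Jacobi–Trudi formula
`s_λ = det(h_{λᵢ - i + j})₁≤i,j≤ℓ`. -/
def schur (lam : Multiset ℕ+) : SymFn R :=
  Matrix.det (Matrix.of fun i j : Fin (Multiset.card lam) =>
    hInt (R := R) ((((descParts lam).getD i 0 : ℕ) : ℤ) + (j : ℤ) - (i : ℤ)))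

/-- `h_ν = ∏ h_{νⱼ}` for a partition `ν`. -/
def hPar (nu : Multiset ℕ+) : SymFn R := (nu.map fun a => hsym (R := R) (a : ℕ)).prod

/-! ### Inner products -/

/-- The `(q,t)`-deformed weight `z_λ(q,t)` attached to the monomial `∏ (X k)^(m k)`,
namely `∏_k (m k)! · k^(m k) · ((1-q^k)/(1-t^k))^(m k)`. -/
def zwtQT (q t : R) (m : ℕ+ →₀ ℕ) : R :=
  ∏ k ∈ m.support,
    ((Nat.factorial (m k) : R) * ((k : ℕ) : R) ^ (m k) *
      ((1 - q ^ (k : ℕ)) / (1 - t ^ (k : ℕ))) ^ (m k))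

/-- The Macdonald inner product `⟨·,·⟩_{q,t}`, defined on the power sum basis by
`⟨p_λ, p_μ⟩_{q,t} = δ_{λμ} z_λ(q,t)`. -/
def innerQT (q t : R) (f g : SymFn R) : R :=
  ∑ m ∈ f.support, MvPolynomial.coeff m f * MvPolynomial.coeff m g * zwtQT q t m

/-- The classical weight `z_λ = ∏_k (m k)! k^(m k)` attached to a monomial. -/
def zwtH (m : ℕ+ →₀ ℕ) : R :=
  ∏ k ∈ m.support, ((Nat.factorial (m k) : R) * ((k : ℕ) : R) ^ (m k))

/-- The standard Hall inner product, `⟨p_λ, p_μ⟩ = δ_{λμ} z_λ`. -/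
def innerH (f g : SymFn R) : R :=
  ∑ m ∈ f.support, MvPolynomial.coeff m f * MvPolynomial.coeff m g * zwtH (R := R) m

/-- The internal (Kronecker) product `⋆`, determined by `p_λ ⋆ p_μ = δ_{λμ} z_λ p_λ`. -/
def star (f g : SymFn R) : SymFn R :=
  ∑ m ∈ f.support,
    MvPolynomial.monomial m (MvPolynomial.coeff m f * MvPolynomial.coeff m g * zwtH (R := R) m)

/-! ### Dominance order and the Macdonald basis -/

/-- Sum of the `k` largest parts of `λ`. -/
def pSum (lam : Multiset ℕ+) (k : ℕ) : ℕ := ((descParts lam).take k).sum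

/-- `μ` is strictly dominated by `λ`: same weight, `μ ≠ λ`, and all partial sums of the
decreasingly sorted parts of `μ` are at most those of `λ`. -/
def StrictDom (mu lam : Multiset ℕ+) : Prop :=
  mu ≠ lam ∧ wt mu = wt lam ∧ ∀ k, pSum mu k ≤ pSum lam k

/-- Characterization of the Macdonald basis `P_λ(x;q,t)` (obtained from the Schur basis by
Gram–Schmidt orthogonalization w.r.t. `⟨·,·⟩_{q,t}`): `P_λ` is unitriangular with respect to
the Schur functions of strictly dominated partitions, and the `P_λ` are pairwise orthogonal. -/
def IsMacdonaldBasis (q t : R) (P : Multiset ℕ+ → SymFn R) : Prop :=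
  (∀ lam, P lam - schur lam ∈
      Submodule.span R ((schur (R := R)) '' {mu | StrictDom mu lam})) ∧
  (∀ lam mu, lam ≠ mu → innerQT q t (P lam) (P mu) = 0)

/-- `Q_λ = P_λ / ⟨P_λ, P_λ⟩_{q,t}`. -/
def Qfam (q t : R) (P : Multiset ℕ+ → SymFn R) (lam : Multiset ℕ+) : SymFn R :=
  (innerQT q t (P lam) (P lam))⁻¹ • P lam

/-- The algebra endomorphism of `Λ_R` rescaling each power sum: `p_k ↦ g k · p_k`. -/
def scaleHom (g : ℕ+ → R) : SymFn R →ₐ[R] SymFn R :=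
  aeval fun k : ℕ+ => (C (g k) * X k : SymFn R)

/-- The modified Macdonald polynomial `Q'_λ(x;q,t) = Q_λ(((1-q)/(1-t))·x; q,t)`,
the image of `Q_λ` under `p_k ↦ ((1-q^k)/(1-t^k))·p_k`. -/
def Qprime (q t : R) (P : Multiset ℕ+ → SymFn R) (lam : Multiset ℕ+) : SymFn R :=
  scaleHom (fun k => (1 - q ^ (k : ℕ)) / (1 - t ^ (k : ℕ))) (Qfam q t P lam)

/-! ### Plethysm -/

/-- Plethysm by the power sum on the left: `p_l ∘ f`, the ring endomorphism `p_k ↦ p_{lk}`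
applied to `f`. -/
def plethP (l : ℕ+) : SymFn R →ₐ[R] SymFn R :=
  aeval fun k : ℕ+ => (X (l * k) : SymFn R)

/-- General plethysm `g ∘ f`: the algebra homomorphism in `g` sending `p_k` to `p_k ∘ f`. -/
def pleth (g f : SymFn R) : SymFn R :=
  aeval (fun k : ℕ+ => plethP k f) g

/-! ### Cells of a partition: arms, legs, the constants `c_μ`, `c'_μ` and `n(μ)` -/

/-- Arm length of the (0-indexed) cell `(i,j)` of `λ`: `λ_i - j - 1`. -/
def armM (lam : Multiset ℕ+) (i j : ℕ) : ℕ := (descParts lam).getD i 0 - (j + 1)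

/-- Leg length of the (0-indexed) cell `(i,j)` of `λ`: the number of cells below it
in the same column. -/
def legM (lam : Multiset ℕ+) (i j : ℕ) : ℕ :=
  ((List.range (descParts lam).length).filter
    (fun i' => decide (i < i') && decide (j < (descParts lam).getD i' 0))).length

/-- Product of a quantity over all cells of the partition `λ`. -/
def cellProd {S : Type} [CommMonoid S] (lam : Multiset ℕ+) (f : ℕ → ℕ → S) : S :=
  ∏ i ∈ Finset.range (descParts lam).length,
    ∏ j ∈ Finset.range ((descParts lam).getD i 0), f i j

/-- `c_μ(q,t) = ∏_{s∈μ} (1 - q^{a(s)} t^{l(s)+1})`. -/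
def cLow (q t : R) (lam : Multiset ℕ+) : R :=
  cellProd lam fun i j => 1 - q ^ (armM lam i j) * t ^ (legM lam i j + 1)

/-- `c'_μ(q,t) = ∏_{s∈μ} (1 - q^{a(s)+1} t^{l(s)})`. -/
def cUp (q t : R) (lam : Multiset ℕ+) : R :=
  cellProd lam fun i j => 1 - q ^ (armM lam i j + 1) * t ^ (legM lam i j)

/-- `n(λ) = ∑ (i-1)·λ_i`. -/
def nInv (lam : Multiset ℕ+) : ℕ :=
  ∑ i ∈ Finset.range (descParts lam).length, i * (descParts lam).getD i 0

/-- The modified Macdonald polynomial of Haglund–Haiman–Loehr,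
`H̃_μ(x;q,t) = t^{n(μ)} J_μ(x/(1-t⁻¹); q, t⁻¹)`, where `J_μ(x;q,t) = c_μ(q,t) P_μ(x;q,t)`
and `Pinv` is the Macdonald basis at parameters `(q, t⁻¹)`. -/
def Htilde (q t : R) (Pinv : Multiset ℕ+ → SymFn R) (lam : Multiset ℕ+) : SymFn R :=
  C (t ^ nInv lam) *
    scaleHom (fun k => (1 - (t⁻¹) ^ (k : ℕ))⁻¹) (C (cLow q t⁻¹ lam) * Pinv lam)

/-! ### Cyclic characters -/

/-- The Ramanujan (Von Sterneck) sum `c(j,d)`: the sum of the `j`-th powers of the primitive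
`d`-th roots of unity (computed in the domain `R`). -/
def cRam [IsDomain R] (j d : ℕ) : R := ∑ z ∈ primitiveRoots d R, z ^ j

/-- The Frobenius characteristic `l_k^{(j)} = (1/k) ∑_{d ∣ k} c(j,d) p_d^{k/d}` of the
representation of `S_k` induced from the `j`-th character of the cyclic subgroup generated
by a `k`-cycle. -/
def lchar [IsDomain R] (k j : ℕ) : SymFn R :=
  ((k : R))⁻¹ • ∑ d ∈ Nat.divisors k, (cRam (R := R) j d) • ((pN (R := R) d) ^ (k / d))

end Core

/-! ### Specialization `t = ζ` and evaluation maps -/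

/-- Evaluation of a rational function in `t` over `ℂ(q)` at a point `c : ℂ(q)`. -/
def evalT (c : KK) (x : FF) : KK := RatFunc.eval (RingHom.id KK) c x

/-- Coefficientwise specialization `t = c` of a symmetric function over `ℂ(q,t)`. -/
def specT (c : KK) (f : SymFn FF) : SymFn KK :=
  ∑ m ∈ f.support, MvPolynomial.monomial m (evalT c (MvPolynomial.coeff m f))

/-- Evaluation `f ↦ f(1, ζ, ζ², …, ζ^{l-1}; q, ζ)`: substitute the finite alphabet
`x_i = ζ^{i-1}` (`1 ≤ i ≤ l`) and then specialize `t = ζ`. -/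
def macEvalRoots (l : ℕ) (z : ℂ) (f : SymFn FF) : KK :=
  evalT (RatFunc.C z)
    ((aeval fun k : ℕ+ =>
        ∑ i ∈ Finset.range l, (RatFunc.C (RatFunc.C z) : FF) ^ (i * (k : ℕ))) f)

/-- Evaluation of a symmetric function over `ℂ(q,t)` at the finite alphabet
`(1, t, t², …, t^{l-1})`. -/
def evalAlphT (l : ℕ) : SymFn FF →ₐ[FF] FF :=
  aeval fun k : ℕ+ => ∑ i ∈ Finset.range l, tF ^ (i * (k : ℕ))

/-- Congruence to `0` modulo the cyclotomic polynomial `Φ_l(t)` for a rational function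
in `t`: `x = Φ_l(t) · (a/b)` with `b` coprime to `Φ_l`. -/
def CongrModPhi (l : ℕ) (x : FF) : Prop :=
  ∃ a b : Polynomial KK, IsCoprime b (Polynomial.cyclotomic l KK) ∧
    x = algebraMap (Polynomial KK) FF (Polynomial.cyclotomic l KK) *
      (algebraMap (Polynomial KK) FF a / algebraMap (Polynomial KK) FF b)

/-- The finite set of all partitions of `n`, as multisets of positive integers. -/
def partitionsOf (n : ℕ) : Finset (Multiset ℕ+) :=
  Finset.univ.image fun pi : Nat.Partition n =>
    pi.parts.attach.map fun a => (⟨a.1, pi.parts_pos a.2⟩ : ℕ+)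

end MacdonaldPreliminaries

noncomputable section

open MvPolynomial


/-- exponent vectors of power sum monomials, i.e. partitions by multiplicities -/
abbrev Pt : Type := ℕ+ →₀ ℕ

def wF : Pt →+ ℕ := Finsupp.weight (fun k : ℕ+ => (k : ℕ))
def dgF : Pt →+ ℕ := Finsupp.weight (fun _ : ℕ+ => 1)
def sqF : Pt →+ ℕ := Finsupp.weight (fun k : ℕ+ => (k : ℕ) ^ 2)
def depF (d : ℕ) : Pt →+ ℕ := Finsupp.weight (fun k : ℕ+ => if d ∣ (k : ℕ) then 1 else 0)

theorem wF_single (k : ℕ+) (e : ℕ) : wF (Finsupp.single k e) = e * k := by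
  simp [wF, Finsupp.weight_single]
theorem dgF_single (k : ℕ+) (e : ℕ) : dgF (Finsupp.single k e) = e := by
  simp [dgF, Finsupp.weight_single]
theorem sqF_single (k : ℕ+) (e : ℕ) : sqF (Finsupp.single k e) = e * (k : ℕ) ^ 2 := by
  simp [sqF, Finsupp.weight_single]
theorem depF_single (d : ℕ) (k : ℕ+) (e : ℕ) :
    depF d (Finsupp.single k e) = e * (if d ∣ (k : ℕ) then 1 else 0) := by
  simp [depF, Finsupp.weight_single]

/-! ### Pairings -/

section Pairing
variable {R : Type} [Field R]

def pairL (w : Pt → R) : SymFn R →ₗ[R] SymFn R →ₗ[R] R :=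
  (basisMonomials ℕ+ R).constr R (fun m => w m • lcoeff R m)

theorem pairL_monomial (w : Pt → R) (m : Pt) (a : R) (g : SymFn R) :
    pairL w (monomial m a) g = a * coeff m g * w m := by
  have : (monomial m a : SymFn R) = a • (basisMonomials ℕ+ R m) := by
    simp [coe_basisMonomials, smul_monomial]
  rw [this, map_smul, pairL, Module.Basis.constr_basis]
  simp [lcoeff]
  ring

theorem pairL_eq_sum (w : Pt → R) (f g : SymFn R) :
    pairL w f g = ∑ m ∈ f.support, coeff m f * coeff m g * w m := by
  conv_lhs => rw [← support_sum_monomial_coeff f]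
  rw [map_sum, LinearMap.sum_apply]
  simp [pairL_monomial]

theorem pairL_monomial_right (w : Pt → R) (m : Pt) (a : R) (g : SymFn R) :
    pairL w g (monomial m a) = a * coeff m g * w m := by
  classical
  rw [pairL_eq_sum]
  by_cases h : m ∈ g.support
  · rw [Finset.sum_eq_single m]
    · rw [coeff_monomial, if_pos rfl]; ring
    · intro b _ hb; simp [coeff_monomial, hb.symm]
    · intro h'; exact absurd h h'
  · rw [Finset.sum_eq_zero]
    · simp [notMem_support_iff.mp h]
    · intro b hb
      have : m ≠ b := by rintro rfl; exact h hb
      simp [coeff_monomial, this]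

theorem pairL_comm (w : Pt → R) (f g : SymFn R) : pairL w f g = pairL w g f := by
  induction f using MvPolynomial.induction_on' with
  | monomial u a => rw [pairL_monomial, pairL_monomial_right]
  | add p q hp hq => rw [map_add, LinearMap.add_apply, map_add, hp, hq]

theorem innerQT_eq (q t : R) (f g : SymFn R) : innerQT q t f g = pairL (zwtQT q t) f g := by
  rw [pairL_eq_sum]; rfl

def pairH : SymFn R →ₗ[R] SymFn R →ₗ[R] R := pairL (zwtH (R := R))

theorem coeff_scaleHom (g : ℕ+ → R) (m : Pt) (f : SymFn R) :
    coeff m (scaleHom g f) = (m.prod fun k e => g k ^ e) * coeff m f := by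
  classical
  induction f using MvPolynomial.induction_on' with
  | monomial u a =>
    have : scaleHom g (monomial u a) = monomial u (a * u.prod fun k e => g k ^ e) := by
      rw [scaleHom, aeval_monomial, MvPolynomial.algebraMap_eq]
      simp only [mul_pow, Finsupp.prod_mul]
      rw [← mul_assoc, monomial_eq (s := u), C_mul]
      congr 2
      simp [Finsupp.prod, map_prod]
    rw [this, coeff_monomial, coeff_monomial]
    split_ifs with h
    · subst h; ring
    · simp
  | add p q hp hq => simp [hp, hq, mul_add]

end Pairing

section Zlem
variable {R : Type} [Field R]

theorem zwtH_eq_prod (m : Pt) (s : Finset ℕ+) (hs : m.support ⊆ s) :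
    zwtH (R := R) m = ∏ k ∈ s, ((Nat.factorial (m k) : R) * ((k : ℕ) : R) ^ (m k)) := by
  rw [zwtH]
  apply Finset.prod_subset hs
  intro x _ hx
  simp [Finsupp.notMem_support_iff.mp hx]

theorem zwtH_add_single (m : Pt) (k : ℕ+) :
    zwtH (R := R) (m + Finsupp.single k 1) = zwtH (R := R) m * ((m k : R) + 1) * (k : ℕ) := by
  classical
  have h1 : m.support ⊆ insert k m.support := Finset.subset_insert _ _
  have h2 : (m + Finsupp.single k 1).support ⊆ insert k m.support := by
    intro x hx
    by_cases hxk : x = k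
    · simp [hxk]
    · simp [Finsupp.single_apply, Ne.symm hxk] at hx ⊢
      tauto
  rw [zwtH_eq_prod _ _ h1, zwtH_eq_prod _ _ h2,
    ← Finset.mul_prod_erase _ _ (Finset.mem_insert_self k m.support),
    ← Finset.mul_prod_erase _ _ (Finset.mem_insert_self k m.support)]
  have : ∏ x ∈ (insert k m.support).erase k, (((m + Finsupp.single k 1 : Pt) x).factorial : R) *
      ((x : ℕ) : R) ^ ((m + Finsupp.single k 1 : Pt) x) =
      ∏ x ∈ (insert k m.support).erase k, ((m x).factorial : R) * ((x : ℕ) : R) ^ (m x) := by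
    apply Finset.prod_congr rfl
    intro x hx
    have : k ≠ x := (Finset.ne_of_mem_erase hx).symm
    simp [Finsupp.single_apply, this]
  rw [this]
  simp [Nat.factorial_succ, pow_succ]
  ring

theorem zwtH_ne_zero [CharZero R] (m : Pt) : zwtH (R := R) m ≠ 0 := by
  rw [zwtH, Finset.prod_ne_zero_iff]
  intro k _
  have := Nat.factorial_ne_zero (m k)
  exact mul_ne_zero (Nat.cast_ne_zero.mpr this) (pow_ne_zero _ (Nat.cast_ne_zero.mpr k.ne_zero))

end Zlem


/-! ### Newton series -/

section Newt
variable {S : Type} [CommRing S]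

def NewtPS (A Y : PowerSeries S) : Prop :=
  PowerSeries.constantCoeff Y = 1 ∧ PowerSeries.derivative S Y = A * Y

theorem NewtPS.mul {A B Y Z : PowerSeries S} (h1 : NewtPS A Y) (h2 : NewtPS B Z) :
    NewtPS (A + B) (Y * Z) := by
  refine ⟨by simp [h1.1, h2.1], ?_⟩
  rw [Derivation.leibniz, h1.2, h2.2, smul_eq_mul, smul_eq_mul]
  ring

theorem NewtPS.prod {ι : Type} (s : Finset ι) (A Y : ι → PowerSeries S)
    (h : ∀ i ∈ s, NewtPS (A i) (Y i)) : NewtPS (∑ i ∈ s, A i) (∏ i ∈ s, Y i) := by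
  classical
  induction s using Finset.induction_on with
  | empty => exact ⟨by simp, by simp⟩
  | insert a s ha ih =>
    rw [Finset.sum_insert ha, Finset.prod_insert ha]
    exact (h a (by simp)).mul (ih fun i hi => h i (by simp [hi]))

theorem newtPS_iff (a y : ℕ → S) : NewtPS (PowerSeries.mk a) (PowerSeries.mk y) ↔
    y 0 = 1 ∧ ∀ n, y (n + 1) * (n + 1) = ∑ i ∈ Finset.range (n + 1), a i * y (n - i) := by
  unfold NewtPS
  refine and_congr (by simp [← PowerSeries.coeff_zero_eq_constantCoeff_apply]) ?_
  rw [PowerSeries.ext_iff]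
  refine forall_congr' fun n => ?_
  rw [PowerSeries.coeff_derivative, PowerSeries.coeff_mul,
    Finset.Nat.sum_antidiagonal_eq_sum_range_succ_mk]
  simp

theorem NewtPS.unique [IsDomain S] [CharZero S] {A Y Z : PowerSeries S}
    (h1 : NewtPS A Y) (h2 : NewtPS A Z) : Y = Z := by
  have e1 : Y = PowerSeries.mk fun n => PowerSeries.coeff n Y := by ext; simp
  have e2 : Z = PowerSeries.mk fun n => PowerSeries.coeff n Z := by ext; simp
  have e3 : A = PowerSeries.mk fun n => PowerSeries.coeff n A := by ext; simp
  rw [e3, e1] at h1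
  rw [e3, e2] at h2
  rw [newtPS_iff] at h1 h2
  ext n
  induction n using Nat.strong_induction_on with
  | _ n ih =>
    rcases n with _ | n
    · rw [h1.1, h2.1]
    · have hn : ((n : S) + 1) ≠ 0 := Nat.cast_add_one_ne_zero n
      apply mul_right_cancel₀ hn
      rw [h1.2, h2.2]
      apply Finset.sum_congr rfl
      intro i _
      rw [ih (n - i) (by omega)]

theorem NewtPS.map {T : Type} [CommRing T] (φ : S →+* T) {A Y : PowerSeries S}
    (h : NewtPS A Y) : NewtPS (PowerSeries.map φ A) (PowerSeries.map φ Y) := by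
  have e1 : Y = PowerSeries.mk fun n => PowerSeries.coeff n Y := by ext; simp
  have e3 : A = PowerSeries.mk fun n => PowerSeries.coeff n A := by ext; simp
  rw [e3, e1, newtPS_iff] at h
  have f1 : PowerSeries.map φ Y = PowerSeries.mk fun n => φ (PowerSeries.coeff n Y) := by
    ext; simp
  have f3 : PowerSeries.map φ A = PowerSeries.mk fun n => φ (PowerSeries.coeff n A) := by
    ext; simp
  rw [f1, f3, newtPS_iff]
  refine ⟨by simp [h.1], fun n => ?_⟩
  have := congrArg φ (h.2 n)
  simpa using this

/-- geometric series -/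
theorem newtPS_geom (u : S) :
    NewtPS (PowerSeries.mk fun n => u ^ (n + 1)) (PowerSeries.mk fun n => u ^ n) := by
  rw [newtPS_iff]
  refine ⟨by simp, fun n => ?_⟩
  rw [Finset.sum_congr rfl (g := fun _ => u ^ (n + 1))]
  · simp; ring
  · intro i hi
    have : i ≤ n := by simp at hi; omega
    rw [← pow_add]; congr 1; omega

theorem newtPS_twist (z : S) (a y : ℕ → S) (h : NewtPS (PowerSeries.mk a) (PowerSeries.mk y)) :
    NewtPS (PowerSeries.mk fun n => z ^ (n + 1) * a n) (PowerSeries.mk fun n => z ^ n * y n) := by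
  rw [newtPS_iff] at h ⊢
  refine ⟨by simp [h.1], fun n => ?_⟩
  rw [mul_assoc, h.2, Finset.mul_sum]
  apply Finset.sum_congr rfl
  intro i hi
  have : i ≤ n := by simp at hi; omega
  have e : n + 1 = (i + 1) + (n - i) := by omega
  rw [e, pow_add]; ring_nf

end Newt

section Hsym
variable {R : Type} [Field R] [CharZero R]

theorem hsym_zero : hsym (R := R) 0 = 1 := by rw [hsym]

theorem hsym_newton (n : ℕ) : hsym (R := R) (n + 1) * ((n : SymFn R) + 1) =
    ∑ i ∈ Finset.range (n + 1), X (Nat.succPNat i) * hsym (R := R) (n - i) := by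
  rw [hsym]
  have h : ((n : R) + 1) ≠ 0 := Nat.cast_add_one_ne_zero n
  have e : ((n : SymFn R) + 1) = C ((n : R) + 1) := by simp
  rw [e, mul_comm, ← smul_eq_C_mul, smul_smul, mul_inv_cancel₀ h, one_smul]
  rfl

theorem hsym_newtPS : NewtPS (S := SymFn R)
    (PowerSeries.mk fun n => X (Nat.succPNat n)) (PowerSeries.mk (hsym (R := R))) := by
  rw [newtPS_iff]
  exact ⟨hsym_zero, hsym_newton⟩

theorem map_hsym {R' : Type} [Field R'] [CharZero R'] (φ : R →+* R') (n : ℕ) :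
    MvPolynomial.map φ (hsym (R := R) n) = hsym (R := R') n := by
  have h1 := (hsym_newtPS (R := R)).map (MvPolynomial.map φ)
  have h2 := hsym_newtPS (R := R')
  have e : PowerSeries.map (MvPolynomial.map φ)
      (PowerSeries.mk fun n => (X (Nat.succPNat n) : SymFn R)) =
      PowerSeries.mk fun n => X (Nat.succPNat n) := by
    refine PowerSeries.ext fun i => ?_
    rw [PowerSeries.coeff_map, PowerSeries.coeff_mk, PowerSeries.coeff_mk, map_X]
  rw [e] at h1
  have := congrArg (PowerSeries.coeff n) (h1.unique h2)
  simpa using this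

theorem hsym_newton' (n : ℕ) : hsym (R := R) n * (n : SymFn R) =
    ∑ i ∈ Finset.range n, X (Nat.succPNat i) * hsym (R := R) (n - 1 - i) := by
  rcases n with _ | n
  · simp
  · rw [Nat.cast_succ, hsym_newton]; rfl

def kder (k : ℕ+) : Derivation R (SymFn R) (SymFn R) := ((k : ℕ) : R) • pderiv k

theorem kder_X (k i : ℕ+) : kder k (X i : SymFn R) = if i = k then ((k : ℕ) : SymFn R) else 0 := by
  classical
  rw [kder, Derivation.smul_apply, pderiv_X]
  by_cases h : i = k
  · subst h; simp [smul_eq_C_mul]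
  · simp [h, Pi.single_apply, Ne.symm h]

theorem kder_hsym (k : ℕ+) (n : ℕ) : kder k (hsym (R := R) n) =
    if (k : ℕ) ≤ n then hsym (n - k) else 0 := by
  induction n using Nat.strong_induction_on with
  | _ n ih =>
    rcases n with _ | n
    · have := k.pos
      rw [hsym_zero, if_neg (by omega)]; simp
    · have hn : ((n : SymFn R) + 1) ≠ 0 := Nat.cast_add_one_ne_zero n
      apply mul_right_cancel₀ hn
      have h1 := congrArg (kder k) (hsym_newton (R := R) n)
      rw [Derivation.leibniz] at h1
      have e0 : kder k ((n : SymFn R) + 1) = 0 := by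
        have : ((n : SymFn R) + 1) = C ((n : R) + 1) := by simp
        rw [this, kder, Derivation.smul_apply, pderiv_C, smul_zero]
      rw [e0, smul_zero, zero_add, smul_eq_mul, mul_comm, map_sum] at h1
      rw [h1]
      have e1 : ∀ i ∈ Finset.range (n + 1),
          kder k (X (Nat.succPNat i) * hsym (R := R) (n - i)) =
          (if i + 1 = k then (k : ℕ) * hsym (R := R) (n + 1 - k) else 0) +
          (if i < n + 1 - k then X (Nat.succPNat i) *
            hsym (R := R) (n + 1 - k - 1 - i) else 0) := by
        intro i hi
        have hi' : i ≤ n := by simp at hi; omega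
        rw [Derivation.leibniz, ih (n - i) (by omega), kder_X, smul_eq_mul, smul_eq_mul, add_comm]
        congr 1
        · by_cases h : i + 1 = k
          · have h' : (Nat.succPNat i) = k := PNat.eq h
            rw [if_pos h, if_pos h', mul_comm, ← h]; congr 2; omega
          · have h' : ¬ (Nat.succPNat i) = k := fun h' => h (by rw [← h']; rfl)
            rw [if_neg h, if_neg h', mul_zero]
        · have := k.pos
          by_cases h : i < n + 1 - k
          · rw [if_pos h, if_pos (by omega)]; congr 2; omega
          · rw [if_neg h, if_neg (by omega), mul_zero]
      rw [Finset.sum_congr rfl e1, Finset.sum_add_distrib]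
      have hk := k.pos
      by_cases hkn : (k : ℕ) ≤ n + 1
      · rw [if_pos hkn, Finset.sum_eq_single ((k : ℕ) - 1), if_pos (by omega),
          ← Finset.sum_filter]
        · have : Finset.filter (fun i => i < n + 1 - (k : ℕ)) (Finset.range (n + 1)) =
              Finset.range (n + 1 - k) := by
            ext i; simp; omega
          rw [this, ← hsym_newton', Nat.cast_sub hkn]
          push_cast; ring
        · intro i _ hi; rw [if_neg (by omega)]
        · intro h; exact absurd (Finset.mem_range.mpr (by omega)) h
      · rw [if_neg hkn, zero_mul, Finset.sum_eq_zero, Finset.sum_eq_zero, add_zero]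
        · intro i hi; rw [if_neg (by omega)]
        · intro i hi; rw [if_neg (by simp at hi; omega)]

/-- adjointness -/
theorem pairH_mul_X (k : ℕ+) (g f : SymFn R) :
    pairH g (f * X k) = pairH (kder k g) f := by
  classical
  induction g using MvPolynomial.induction_on' with
  | add p q hp hq => simp only [map_add, LinearMap.add_apply, hp, hq]
  | monomial m a =>
    rw [kder, Derivation.smul_apply, pderiv_monomial, map_smul, LinearMap.smul_apply, pairH,
      pairL_monomial, pairL_monomial, coeff_mul_X']
    by_cases h : k ∈ m.support
    · rw [if_pos h]
      have h1 : m k ≠ 0 := Finsupp.mem_support_iff.mp h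
      have h2 : m - Finsupp.single k 1 + Finsupp.single k 1 = m := by
        ext i
        by_cases hi : k = i
        · subst hi; simp; omega
        · simp [Finsupp.single_apply, hi]
      conv_lhs => rw [← h2, zwtH_add_single, h2]
      have h3 : (((m - Finsupp.single k 1 : Pt) k : ℕ) : R) + 1 = (m k : R) := by
        have : (m - Finsupp.single k 1 : Pt) k + 1 = m k := by simp; omega
        rw [← this]; push_cast; ring
      rw [h3, smul_eq_mul]; ring
    · rw [if_neg h, Finsupp.notMem_support_iff.mp h]; simp

theorem coeff_zero_hsym (n : ℕ) : coeff 0 (hsym (R := R) n) = if n = 0 then 1 else 0 := by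
  rcases n with _ | n
  · simp [hsym_zero]
  · have h := congrArg constantCoeff (hsym_newton (R := R) n)
    rw [map_sum, map_mul] at h
    simp only [map_mul, constantCoeff_X, zero_mul, Finset.sum_const_zero] at h
    have : constantCoeff ((n : SymFn R) + 1) = (n : R) + 1 := by simp
    rw [this] at h
    have hn : ((n : R) + 1) ≠ 0 := Nat.cast_add_one_ne_zero n
    simpa [hn, constantCoeff_eq] using h

/-- products of `h`'s -/
def hA {l : ℕ} (α : Fin l →₀ ℕ) : SymFn R := ∏ i, hsym (α i)

def evl (l : ℕ) : SymFn R →ₐ[R] MvPolynomial (Fin l) R :=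
  aeval fun k : ℕ+ => ∑ i, (X i : MvPolynomial (Fin l) R) ^ (k : ℕ)

theorem der_prod {A : Type} [CommRing A] [Algebra R A] (D : Derivation R A A) {ι : Type}
    [DecidableEq ι] (s : Finset ι) (f : ι → A) :
    D (∏ i ∈ s, f i) = ∑ i ∈ s, (∏ j ∈ s.erase i, f j) * D (f i) := by
  induction s using Finset.induction_on with
  | empty => simp
  | insert a s ha ih =>
    rw [Finset.prod_insert ha, Derivation.leibniz, ih, Finset.sum_insert ha,
      Finset.erase_insert ha, smul_eq_mul, smul_eq_mul, Finset.mul_sum, add_comm]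
    congr 1
    apply Finset.sum_congr rfl
    intro i hi
    have hia : a ≠ i := by rintro rfl; exact ha hi
    rw [Finset.erase_insert_of_ne hia, Finset.prod_insert (by simp [ha])]
    ring

theorem kder_hA {l : ℕ} (k : ℕ+) (α : Fin l →₀ ℕ) : kder k (hA (R := R) α) =
    ∑ i, if (k : ℕ) ≤ α i then hA (R := R) (α - Finsupp.single i (k : ℕ)) else 0 := by
  classical
  rw [hA, der_prod]
  apply Finset.sum_congr rfl
  intro i _
  rw [kder_hsym]
  split_ifs with h
  · rw [hA, ← Finset.mul_prod_erase _ _ (Finset.mem_univ i), mul_comm]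
    congr 1
    · simp
    · apply Finset.prod_congr rfl
      intro j hj
      have : i ≠ j := (Finset.ne_of_mem_erase hj).symm
      simp [Finsupp.single_apply, this]
  · simp

theorem pairH_hA {l : ℕ} (f : SymFn R) : ∀ α : Fin l →₀ ℕ,
    pairH (hA α) f = coeff α (evl l f) := by
  classical
  induction f using MvPolynomial.induction_on with
  | C a =>
    intro α
    rw [show (C a : SymFn R) = monomial 0 a from rfl, pairH, pairL_monomial_right, hA]
    rw [show (monomial 0 a : SymFn R) = algebraMap R _ a from rfl, AlgHom.commutes,
      MvPolynomial.algebraMap_eq, coeff_C]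
    rw [← constantCoeff_eq, map_prod]
    simp only [constantCoeff_eq, coeff_zero_hsym]
    by_cases h : 0 = α
    · subst h; simp [zwtH]
    · have : ∃ i, α i ≠ 0 := by
        by_contra h'; push Not at h'; apply h; ext i; simp [h']
      obtain ⟨i, hi⟩ := this
      rw [Finset.prod_eq_zero (Finset.mem_univ i) (by simp [hi])]
      simp [h]
  | add p q hp hq => intro α; simp [hp, hq]
  | mul_X p k hp =>
    intro α
    rw [pairH_mul_X, kder_hA, map_sum, LinearMap.sum_apply, map_mul]
    have : evl l (X k : SymFn R) = ∑ i, monomial (Finsupp.single i (k : ℕ)) (1 : R) := by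
      simp [evl, X_pow_eq_monomial]
    rw [this, Finset.mul_sum, coeff_sum]
    apply Finset.sum_congr rfl
    intro i _
    rw [coeff_mul_monomial']
    have e : (Finsupp.single i (k : ℕ) ≤ α) ↔ (k : ℕ) ≤ α i := by simp
    by_cases h : (k : ℕ) ≤ α i
    · rw [if_pos h, if_pos (e.mpr h), hp, mul_one]
    · rw [if_neg h, if_neg (fun h' => h (e.mp h'))]; simp

end Hsym


/-! ### Partitions as exponent vectors -/

def toF (k : ℕ) : Pt := if h : 0 < k then Finsupp.single (⟨k, h⟩ : ℕ+) 1 else 0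

theorem toF_zero : toF 0 = 0 := by simp [toF]
theorem toF_coe (k : ℕ+) : toF (k : ℕ) = Finsupp.single k 1 := by
  have := k.pos
  rw [toF, dif_pos this]; rfl
theorem toF_cases (k : ℕ) : (k = 0) ∨ ∃ k' : ℕ+, k = (k' : ℕ) := by
  rcases Nat.eq_zero_or_pos k with h | h
  · exact Or.inl h
  · exact Or.inr ⟨⟨k, h⟩, rfl⟩
theorem wF_toF (k : ℕ) : wF (toF k) = k := by
  rcases toF_cases k with h | ⟨k, rfl⟩
  · simp [h, toF_zero]
  · rw [toF_coe, wF_single, one_mul]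
theorem dgF_toF (k : ℕ) : dgF (toF k) ≤ 1 := by
  rcases toF_cases k with h | ⟨k, rfl⟩
  · simp [h, toF_zero]
  · rw [toF_coe, dgF_single]
theorem sqF_toF (k : ℕ) : sqF (toF k) = k ^ 2 := by
  rcases toF_cases k with h | ⟨k, rfl⟩
  · simp [h, toF_zero]
  · rw [toF_coe, sqF_single, one_mul]

def eP {l : ℕ} (α : Fin l → ℕ) : Pt := ∑ i, toF (α i)

theorem wF_eP {l : ℕ} (α : Fin l → ℕ) : wF (eP α) = ∑ i, α i := by
  simp [eP, wF_toF]
theorem sqF_eP {l : ℕ} (α : Fin l → ℕ) : sqF (eP α) = ∑ i, α i ^ 2 := by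
  simp [eP, sqF_toF]
theorem dgF_eP {l : ℕ} (α : Fin l → ℕ) : dgF (eP α) ≤ l := by
  rw [eP, map_sum]
  calc ∑ i, dgF (toF (α i)) ≤ ∑ i : Fin l, 1 := Finset.sum_le_sum fun i _ => dgF_toF _
    _ = l := by simp

theorem sum_getD {A : Type} [AddCommMonoid A] (g : ℕ → A) (g0 : g 0 = 0) (L : List ℕ) :
    ∀ l, L.length ≤ l → ∑ i : Fin l, g (L.getD i 0) = (L.map g).sum := by
  induction L with
  | nil => intro l _; simp [g0]
  | cons a L ih =>
    intro l hl
    rcases l with _ | l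
    · simp at hl
    · rw [Fin.sum_univ_succ]
      simp at hl
      simp [← ih l hl]

theorem descParts_length (nu : Multiset ℕ+) : (descParts nu).length = Multiset.card nu := by
  simp [descParts]

theorem descParts_coe (nu : Multiset ℕ+) :
    ((descParts nu : List ℕ) : Multiset ℕ) = nu.map fun a : ℕ+ => (a : ℕ) := by
  rw [descParts, Multiset.coe_reverse, Multiset.sort_eq]

theorem sum_map_descParts {A : Type} [AddCommMonoid A] (g : ℕ → A) (nu : Multiset ℕ+) :
    ((descParts nu).map g).sum = (nu.map fun a : ℕ+ => g a).sum := by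
  rw [← Multiset.sum_coe, ← Multiset.map_coe, descParts_coe, Multiset.map_map]
  rfl

def toPt (nu : Multiset ℕ+) : Pt := Multiset.toFinsupp nu

theorem toPt_eq (nu : Multiset ℕ+) : toPt nu = (nu.map fun a : ℕ+ => toF a).sum := by
  induction nu using Multiset.induction_on with
  | empty => simp [toPt]
  | cons a s ih =>
    rw [Multiset.map_cons, Multiset.sum_cons, ← ih, toPt, toPt, ← Multiset.singleton_add, map_add,
      Multiset.toFinsupp_singleton, toF_coe]

theorem toPt_eP (nu : Multiset ℕ+) (l : ℕ) (hl : Multiset.card nu ≤ l) :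
    toPt nu = eP (fun i : Fin l => (descParts nu).getD i 0) := by
  rw [toPt_eq, eP, sum_getD toF toF_zero _ _ (by rwa [descParts_length]), sum_map_descParts]

theorem dgF_toPt (nu : Multiset ℕ+) : dgF (toPt nu) = Multiset.card nu := by
  rw [toPt_eq, ← AddMonoidHom.coe_coe, map_multiset_sum, Multiset.map_map]
  have : ∀ a : ℕ+, dgF (toF a) = 1 := fun a => by rw [toF_coe, dgF_single]
  simp [this]

theorem wF_toPt (nu : Multiset ℕ+) : wF (toPt nu) = wt nu := by
  rw [toPt_eq, map_multiset_sum, Multiset.map_map]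
  simp [wF_toF, wt]

def ofPt (m : Pt) : Multiset ℕ+ := Finsupp.toMultiset m
theorem toPt_ofPt (m : Pt) : toPt (ofPt m) = m := by simp [toPt, ofPt]
theorem ofPt_toPt (m : Multiset ℕ+) : ofPt (toPt m) = m := by simp [toPt, ofPt]

theorem exists_eP (m : Pt) (l : ℕ) (h : dgF m ≤ l) : ∃ α : Fin l → ℕ, m = eP α := by
  have h1 : Multiset.card (ofPt m) ≤ l := by rwa [← dgF_toPt, toPt_ofPt]
  have h2 := toPt_eP (ofPt m) l h1
  rw [toPt_ofPt] at h2
  exact ⟨_, h2⟩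

section
variable {R : Type} [Field R] [CharZero R]

def hF (m : Pt) : SymFn R := m.prod fun k e => hsym (R := R) (k : ℕ) ^ e

theorem hF_add (a b : Pt) : hF (R := R) (a + b) = hF a * hF b := by
  rw [hF, Finsupp.prod_add_index']; rfl
  · simp
  · intro k e f; rw [pow_add]
theorem hF_zero : hF (R := R) 0 = 1 := by simp [hF]
theorem hF_single (k : ℕ+) (e : ℕ) : hF (R := R) (Finsupp.single k e) = hsym (k : ℕ) ^ e := by
  rw [hF, Finsupp.prod_single_index]; simp
theorem hF_toF (k : ℕ) : hF (R := R) (toF k) = hsym k := by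
  rcases toF_cases k with h | ⟨k, rfl⟩
  · simp [h, toF_zero, hF_zero, hsym_zero]
  · rw [toF_coe, hF_single, pow_one]
theorem hF_sum {ι : Type} (s : Finset ι) (f : ι → Pt) :
    hF (R := R) (∑ i ∈ s, f i) = ∏ i ∈ s, hF (f i) := by
  classical
  induction s using Finset.induction_on with
  | empty => simp [hF_zero]
  | insert a s ha ih => rw [Finset.sum_insert ha, Finset.prod_insert ha, hF_add, ih]
theorem hF_eP {l : ℕ} (α : Fin l → ℕ) : hF (R := R) (eP α) = ∏ i, hsym (α i) := by
  rw [eP, hF_sum]; simp [hF_toF]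
theorem hF_eP' {l : ℕ} (α : Fin l →₀ ℕ) : hF (R := R) (eP α) = hA α := by
  rw [hF_eP, hA]

/-! ### power series facts in finitely many variables -/

abbrev SV (R : Type) [Field R] (l : ℕ) : Type := MvPolynomial (Fin l) R

theorem evl_hsym_ps (l : ℕ) : (PowerSeries.mk fun n => evl (R := R) l (hsym n)) =
    ∏ i : Fin l, PowerSeries.mk fun n => (X i : SV R l) ^ n := by
  have h1 := (hsym_newtPS (R := R)).map (evl (R := R) l : SymFn R →+* SV R l)
  have h2 := NewtPS.prod Finset.univ _ _ (fun (i : Fin l) _ => newtPS_geom (X i : SV R l))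
  have e : PowerSeries.map (evl (R := R) l : SymFn R →+* SV R l)
      (PowerSeries.mk fun n => X (Nat.succPNat n)) =
      ∑ i : Fin l, PowerSeries.mk fun n => (X i : SV R l) ^ (n + 1) := by
    ext1 n
    rw [PowerSeries.coeff_map, PowerSeries.coeff_mk, map_sum]
    simp [evl]
  rw [e] at h1
  rw [← h1.unique h2]
  ext1 n
  simp

def EE (l : ℕ) (s : Finset (Fin l)) : Polynomial (SV R l) :=
  ∏ i ∈ s, (1 - Polynomial.C (X i) * Polynomial.X)

theorem EE_natDegree (l : ℕ) (s : Finset (Fin l)) : (EE (R := R) l s).natDegree ≤ s.card := by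
  refine (Polynomial.natDegree_prod_le _ _).trans ?_
  rw [Finset.card_eq_sum_ones]
  apply Finset.sum_le_sum
  intro i _
  compute_degree

theorem geom_inv {S : Type} [CommRing S] (u : S) :
    (1 - PowerSeries.C u * PowerSeries.X) * (PowerSeries.mk fun n => u ^ n) = 1 := by
  ext n
  rcases n with _ | n
  · simp [sub_mul, mul_assoc]
  · rw [sub_mul, one_mul, map_sub, mul_assoc, PowerSeries.coeff_C_mul,
      PowerSeries.coeff_succ_X_mul]
    simp [PowerSeries.coeff_one]; ring

theorem EE_mul_H (l : ℕ) (s : Finset (Fin l)) :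
    (EE (R := R) l s : PowerSeries (SV R l)) * (PowerSeries.mk fun n => evl (R := R) l (hsym n)) =
    ∏ i ∈ sᶜ, PowerSeries.mk fun n => (X i : SV R l) ^ n := by
  rw [evl_hsym_ps, ← Finset.prod_mul_prod_compl s, ← mul_assoc]
  convert one_mul _
  have : (EE (R := R) l s : PowerSeries (SV R l)) =
      ∏ i ∈ s, (1 - PowerSeries.C (X i : SV R l) * PowerSeries.X) := by
    rw [EE, ← Polynomial.coeToPowerSeries.ringHom_apply, map_prod]
    simp
  rw [this, ← Finset.prod_mul_distrib]
  apply Finset.prod_eq_one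
  intro i _
  exact geom_inv _

def HI {S : Type} [Zero S] (H : ℕ → S) (z : ℤ) : S := if 0 ≤ z then H z.toNat else 0

theorem convLem {S : Type} [CommRing S] (E H : PowerSeries S) (k N : ℕ)
    (hE : ∀ n, k ≤ n → PowerSeries.coeff n E = 0) :
    ∑ j : Fin k, HI (fun n => PowerSeries.coeff n H) ((N : ℤ) + j - (k - 1)) *
      PowerSeries.coeff (k - 1 - j) E = PowerSeries.coeff N (E * H) := by
  rw [PowerSeries.coeff_mul, Finset.Nat.sum_antidiagonal_eq_sum_range_succ_mk]
  rw [Fin.sum_univ_eq_sum_range (fun j => HI (fun n => PowerSeries.coeff n H) ((N : ℤ) + j - (k - 1)) *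
      PowerSeries.coeff (k - 1 - j) E)]
  rw [← Finset.sum_range_reflect]
  let g : ℕ → S := fun n => PowerSeries.coeff n E * HI (fun n => PowerSeries.coeff n H) ((N : ℤ) - n)
  have h1 : ∑ j ∈ Finset.range k, HI (fun n => PowerSeries.coeff n H)
      ((N : ℤ) + ((k - 1 - j : ℕ) : ℤ) - (k - 1)) * PowerSeries.coeff (k - 1 - (k - 1 - j)) E
      = ∑ j ∈ Finset.range k, g j := by
    apply Finset.sum_congr rfl
    intro j hj
    simp at hj
    have e1 : k - 1 - (k - 1 - j) = j := by omega
    have e2 : (N : ℤ) + ((k - 1 - j : ℕ) : ℤ) - (k - 1) = N - j := by omega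
    rw [e1, e2, mul_comm]
  have h2 : ∑ j ∈ Finset.range N.succ, PowerSeries.coeff j E * PowerSeries.coeff (N - j) H =
      ∑ j ∈ Finset.range N.succ, g j := by
    apply Finset.sum_congr rfl
    intro j hj
    simp at hj
    simp only [g, HI]
    rw [if_pos (by omega)]
    congr 3; omega
  rw [h1, h2]
  have h3 : ∑ j ∈ Finset.range k, g j = ∑ j ∈ Finset.range (max k (N+1)), g j := by
    apply Finset.sum_subset
    · intro x hx; simp at hx ⊢; omega
    · intro x _ hx
      simp at hx
      simp [g, hE x hx]
  have h4 : ∑ j ∈ Finset.range (N+1), g j = ∑ j ∈ Finset.range (max k (N+1)), g j := by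
    apply Finset.sum_subset
    · intro x hx; simp at hx ⊢; omega
    · intro x _ hx
      simp at hx
      simp only [g, HI]
      rw [if_neg (by omega), mul_zero]
  rw [h3, Nat.succ_eq_add_one, h4]

theorem schur_eq (nu : Multiset ℕ+) (k : ℕ) (h : Multiset.card nu = k) : schur (R := R) nu =
    Matrix.det (Matrix.of fun i j : Fin k =>
    hInt (R := R) ((((descParts nu).getD i 0 : ℕ) : ℤ) + (j : ℤ) - (i : ℤ))) := by
  subst h; rfl

theorem evl_hInt (l : ℕ) (z : ℤ) : evl (R := R) l (hInt z) =
    HI (fun n => PowerSeries.coeff n (PowerSeries.mk fun n => evl (R := R) l (hsym n))) z := by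
  rw [hInt, HI]
  split_ifs <;> simp

theorem descParts_pos (nu : Multiset ℕ+) (i : ℕ) (hi : i < Multiset.card nu) :
    0 < (descParts nu).getD i 0 := by
  rw [← descParts_length] at hi
  have h : (descParts nu).getD i 0 ∈ descParts nu := by
    rw [List.getD_eq_getElem _ _ hi]; exact List.getElem_mem hi
  rw [← Multiset.mem_coe, descParts_coe, Multiset.mem_map] at h
  obtain ⟨a, _, ha⟩ := h
  rw [← ha]; exact a.pos

/-- S1 -/
theorem evl_schur_eq_zero (l : ℕ) (nu : Multiset ℕ+) (h : l < Multiset.card nu) :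
    evl (R := R) l (schur nu) = 0 := by
  rw [schur_eq nu _ rfl, AlgHom.map_det]
  apply Matrix.exists_mulVec_eq_zero_iff.mp
  set k := Multiset.card nu
  set E := (EE (R := R) l Finset.univ : PowerSeries (SV R l)) with hEdef
  have hE : ∀ n, k ≤ n → PowerSeries.coeff n E = 0 := by
    intro n hn
    rw [hEdef, Polynomial.coeff_coe]
    apply Polynomial.coeff_eq_zero_of_natDegree_lt
    have := EE_natDegree (R := R) l Finset.univ
    simp at this
    omega
  refine ⟨fun j => PowerSeries.coeff (k - 1 - j) E, ?_, ?_⟩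
  · intro h0
    have h1 := congrFun h0 ⟨k - 1, by omega⟩
    simp [hEdef, EE, Polynomial.coeff_zero_prod] at h1
  · ext1 i
    simp only [Matrix.mulVec, dotProduct, AlgHom.mapMatrix_apply, Matrix.map_apply, Matrix.of_apply,
      evl_hInt]
    have hpos := descParts_pos nu i i.2
    set a := (descParts nu).getD i 0
    have hi : (i : ℕ) < k := i.2
    have := convLem E (PowerSeries.mk fun n => evl (R := R) l (hsym n)) k (a + (k - 1) - i) hE
    rw [EE_mul_H] at this
    simp only [Finset.compl_univ, Finset.prod_empty] at this
    rw [PowerSeries.coeff_one, if_neg (by omega)] at this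
    rw [Pi.zero_apply, ← this]
    apply Finset.sum_congr rfl
    intro j _
    congr 2
    omega

theorem pairH_hF_schur_eq_zero (l : ℕ) (nu : Multiset ℕ+) (h : l < Multiset.card nu) (m : Pt)
    (hm : dgF m ≤ l) : pairH (hF m) (schur (R := R) nu) = 0 := by
  obtain ⟨α, rfl⟩ := exists_eP m l hm
  have : hF (R := R) (eP α) = hA (Finsupp.equivFunOnFinite.symm α) := by
    rw [hF_eP, hA]; rfl
  rw [this, pairH_hA, evl_schur_eq_zero l nu h, coeff_zero]

theorem descParts_replicate (l : ℕ) (r : ℕ+) :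
    descParts (Multiset.replicate l r) = List.replicate l (r : ℕ) := by
  rw [List.eq_replicate_iff]
  constructor
  · rw [descParts_length]; simp
  · intro b hb
    rw [← Multiset.mem_coe, descParts_coe, Multiset.mem_map] at hb
    obtain ⟨a, ha, rfl⟩ := hb
    rw [Multiset.eq_of_mem_replicate ha]

def JT (R : Type) [Field R] (l r : ℕ) : Matrix (Fin l) (Fin l) (SV R l) := Matrix.of fun i j =>
  HI (fun n => PowerSeries.coeff n (PowerSeries.mk fun n => evl (R := R) l (hsym n)))
    ((r : ℤ) + (j : ℤ) - (i : ℤ))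

theorem JT_mul (l r : ℕ) : JT R l r * Matrix.of (fun j k : Fin l => PowerSeries.coeff (l - 1 - j)
    (EE (R := R) l (Finset.univ.erase k) : PowerSeries (SV R l))) =
    Matrix.of fun i k : Fin l => (X k : SV R l) ^ (r + (l - 1 - i)) := by
  ext1 i k
  rw [Matrix.mul_apply]
  set E := (EE (R := R) l (Finset.univ.erase k) : PowerSeries (SV R l)) with hEdef
  have hE : ∀ n, l ≤ n → PowerSeries.coeff n E = 0 := by
    intro n hn
    rw [hEdef, Polynomial.coeff_coe]
    apply Polynomial.coeff_eq_zero_of_natDegree_lt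
    have := EE_natDegree (R := R) l (Finset.univ.erase k)
    simp at this
    have := k.2
    omega
  have hi := i.2
  have := convLem E (PowerSeries.mk fun n => evl (R := R) l (hsym n)) l (r + (l - 1 - i)) hE
  rw [EE_mul_H] at this
  have hc : (Finset.univ.erase k)ᶜ = {k} := by ext x; simp
  rw [hc, Finset.prod_singleton, PowerSeries.coeff_mk] at this
  rw [Matrix.of_apply, ← this]
  apply Finset.sum_congr rfl
  intro j _
  simp only [JT, Matrix.of_apply]
  congr 2
  omega

/-- S2 -/
theorem evl_schur_rect (l : ℕ) (r : ℕ+) :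
    evl (R := R) l (schur (Multiset.replicate l r)) = ∏ i : Fin l, (X i) ^ (r : ℕ) := by
  rw [schur_eq _ l (by simp), AlgHom.map_det, descParts_replicate]
  have e1 : (evl (R := R) l).mapMatrix (Matrix.of fun i j : Fin l =>
      hInt (R := R) ((((List.replicate l (r : ℕ)).getD i 0 : ℕ) : ℤ) + (j : ℤ) - (i : ℤ))) = JT R l r := by
    ext1 i j
    simp [evl_hInt, JT]
  rw [e1]
  set M := Matrix.of (fun j k : Fin l => PowerSeries.coeff (l - 1 - j)
    (EE (R := R) l (Finset.univ.erase k) : PowerSeries (SV R l)))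
  set B := Matrix.of fun i k : Fin l => (X k : SV R l) ^ (0 + (l - 1 - i)) with hB
  have h0 : JT R l 0 * M = B := JT_mul l 0
  have h1 : JT R l r * M = B * Matrix.diagonal (fun k => (X k : SV R l) ^ (r : ℕ)) := by
    rw [JT_mul]
    ext1 i k
    rw [Matrix.mul_diagonal, hB, Matrix.of_apply, Matrix.of_apply, ← pow_add]
    congr 1; omega
  have d0 : (JT R l 0).det = 1 := by
    rw [Matrix.det_of_isUpperTriangular]
    · apply Finset.prod_eq_one
      intro i _
      simp [JT, HI, hsym_zero]
    · intro i j hij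
      simp only [id] at hij
      simp only [JT, Matrix.of_apply, HI]
      rw [if_neg]
      have : (j : ℕ) < i := hij
      omega
  have dM : M.det = B.det := by rw [← h0, Matrix.det_mul, d0, one_mul]
  have dB : B.det ≠ 0 := by
    have : B = ((Matrix.vandermonde (fun i : Fin l => (X i : SV R l))).submatrix id Fin.revPerm).transpose := by
      ext1 i j
      simp only [hB, Matrix.of_apply, Matrix.transpose_apply, Matrix.submatrix_apply,
        Matrix.vandermonde_apply, id, Fin.revPerm_apply, Fin.val_rev]
      congr 1; omega
    rw [this, Matrix.det_transpose, Matrix.det_permute']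
    apply mul_ne_zero
    · rcases Int.units_eq_one_or (Equiv.Perm.sign (Fin.revPerm (n := l))) with h | h <;> simp [h]
    · rw [Matrix.det_vandermonde_ne_zero_iff]
      exact X_injective
  have := congrArg Matrix.det h1
  rw [Matrix.det_mul, Matrix.det_mul, dM, Matrix.det_diagonal, mul_comm] at this
  exact mul_left_cancel₀ dB this

theorem eP_const (l : ℕ) (r : ℕ+) :
    eP (fun _ : Fin l => (r : ℕ)) = Finsupp.single (r : ℕ+) l := by
  rw [eP, Finset.sum_const, Finset.card_univ, Fintype.card_fin]
  rw [toF_coe]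
  simp

theorem pairH_hF_schur_rect (l : ℕ) (r : ℕ+) (m : Pt) (hm : dgF m ≤ l) :
    pairH (hF m) (schur (R := R) (Multiset.replicate l r)) =
      if m = Finsupp.single (r : ℕ+) l then 1 else 0 := by
  classical
  have key : ∀ α : Fin l → ℕ, pairH (hF (eP α)) (schur (R := R) (Multiset.replicate l r)) =
      if α = (fun _ => (r : ℕ)) then 1 else 0 := by
    intro α
    have : hF (R := R) (eP α) = hA (Finsupp.equivFunOnFinite.symm α) := by
      rw [hF_eP, hA]; rfl
    rw [this, pairH_hA, evl_schur_rect]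
    have e : (∏ i : Fin l, (X i : SV R l) ^ (r : ℕ)) =
        monomial (Finsupp.equivFunOnFinite.symm (fun _ => (r : ℕ))) 1 := by
      rw [monomial_eq, Finsupp.prod_fintype _ _ (by simp)]
      simp
    rw [e, coeff_monomial]
    congr 1
    rw [Equiv.apply_eq_iff_eq]; exact propext eq_comm
  obtain ⟨α, rfl⟩ := exists_eP m l hm
  by_cases h : eP α = Finsupp.single (r : ℕ+) l
  · rw [if_pos h, h, ← eP_const, key, if_pos rfl]
  · rw [if_neg h, key, if_neg]
    rintro rfl
    exact h (eP_const l r)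

end


theorem descParts_anti (nu : Multiset ℕ+) (i j : ℕ) (h : i ≤ j) :
    (descParts nu).getD j 0 ≤ (descParts nu).getD i 0 := by
  have hp : List.Pairwise (fun a b => b ≤ a) (descParts nu) := by
    rw [descParts, List.pairwise_reverse]
    exact Multiset.pairwise_sort _ _
  rcases lt_or_ge j (descParts nu).length with hj | hj
  · rcases h.lt_or_eq with h' | rfl
    · rw [List.getD_eq_getElem _ _ hj, List.getD_eq_getElem _ _ (h'.trans hj)]
      exact List.pairwise_iff_getElem.mp hp i j _ _ h'
    · exact le_rfl
  · rw [List.getD_eq_default _ _ hj]; exact Nat.zero_le _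

def UpS (m : Pt) : Set Pt := {m' | wF m' = wF m ∧ dgF m' ≤ dgF m ∧ sqF m < sqF m'}
def UpE (m : Pt) : Set Pt := {m' | wF m' = wF m ∧ dgF m' ≤ dgF m ∧ (m' = m ∨ sqF m < sqF m')}

theorem perm_mono_eq_one {k : ℕ} (σ : Equiv.Perm (Fin k)) (h : ∀ i j, i < j → σ i ≤ σ j) :
    σ = 1 := by
  have hs : StrictMono σ := fun i j hij =>
    lt_of_le_of_ne (h i j hij) (fun e => hij.ne (σ.injective e))
  let e : Fin k ≃o Fin k := hs.orderIsoOfSurjective _ σ.surjective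
  have : e = OrderIso.refl _ := Subsingleton.elim _ _
  ext1 i
  exact congrFun (congrArg DFunLike.coe this) i

theorem rearr {k : ℕ} (a : Fin k → ℤ) (ha : StrictAnti a) (σ : Equiv.Perm (Fin k)) (hσ : σ ≠ 1) :
    ∑ i, (a i + (i : ℤ)) ^ 2 < ∑ i, (a (σ i) + (i : ℤ)) ^ 2 := by
  have hav : Antivary a (fun i : Fin k => (i : ℤ)) := by
    intro i j hij
    exact (ha (by simpa using hij)).le
  have key : ∑ i, a i * (i : ℤ) < ∑ i, a (σ i) * (i : ℤ) := by
    rw [hav.sum_mul_lt_sum_comp_perm_mul_iff]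
    intro h
    apply hσ
    apply perm_mono_eq_one
    intro i j hij
    have := h (i := i) (j := j) (by simpa using hij)
    exact ha.le_iff_ge.mp this
  have e1 : ∑ i, (a (σ i)) ^ 2 = ∑ i, (a i) ^ 2 := Equiv.sum_comp σ (fun i => a i ^ 2)
  simp only [add_sq, Finset.sum_add_distrib, mul_assoc, ← Finset.mul_sum]
  rw [e1]
  linarith

section
variable {R : Type} [Field R] [CharZero R]

theorem schur_tri (nu : Multiset ℕ+) : schur (R := R) nu - hF (toPt nu) ∈
    Submodule.span R (hF (R := R) '' UpS (toPt nu)) := by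
  classical
  set k := Multiset.card nu with hk
  set b : Fin k → ℕ := fun i => (descParts nu).getD i 0 with hb
  set a : Fin k → ℤ := fun i => (b i : ℤ) - i with ha
  have haanti : StrictAnti a := by
    intro i j hij
    have h1 : b j ≤ b i := descParts_anti nu i j (le_of_lt hij)
    have h2 : (i : ℕ) < j := hij
    simp only [ha]; omega
  have hpt : toPt nu = eP b := toPt_eP nu k le_rfl
  have hdg : dgF (eP b) = k := by rw [← hpt, dgF_toPt]
  rw [schur_eq nu k rfl, Matrix.det_apply', ← Finset.add_sum_erase _ _ (Finset.mem_univ 1)]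
  have e1 : ((Equiv.Perm.sign (1 : Equiv.Perm (Fin k)) : ℤ) : SymFn R) * ∏ i, (Matrix.of fun i j : Fin k =>
      hInt (R := R) ((((descParts nu).getD i 0 : ℕ) : ℤ) + (j : ℤ) - (i : ℤ)))
      ((1 : Equiv.Perm (Fin k)) i) i = hF (toPt nu) := by
    rw [hpt, hF_eP]
    simp [hInt, hb]
    refine Finset.prod_congr rfl fun x _ => ?_
    congr 1
    omega
  rw [e1, add_sub_cancel_left]
  apply Submodule.sum_mem
  intro σ hσ
  have hσ1 : σ ≠ 1 := (Finset.mem_erase.mp hσ).1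
  have hs : ∀ y : SymFn R, y ∈ Submodule.span R (hF (R := R) '' UpS (toPt nu)) →
      ((Equiv.Perm.sign σ : ℤ) : SymFn R) * y ∈ Submodule.span R (hF (R := R) '' UpS (toPt nu)) := by
    intro y hy
    rcases Int.units_eq_one_or (Equiv.Perm.sign σ) with h | h
    · simpa [h] using hy
    · simpa [h] using hy
  apply hs
  by_cases hneg : ∃ i, a (σ i) + (i : ℤ) < 0
  · obtain ⟨i, hi⟩ := hneg
    rw [Finset.prod_eq_zero (Finset.mem_univ i)]
    · exact Submodule.zero_mem _
    · rw [Matrix.of_apply, hInt, if_neg]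
      simp only [ha, hb] at hi
      omega
  · push Not at hneg
    set α : Fin k → ℕ := fun i => (a (σ i) + (i : ℤ)).toNat with hα
    have hαc : ∀ i, (α i : ℤ) = a (σ i) + i := fun i => Int.toNat_of_nonneg (hneg i)
    apply Submodule.subset_span
    refine ⟨eP α, ⟨?_, ?_, ?_⟩, ?_⟩
    · rw [hpt, wF_eP, wF_eP]
      zify
      simp only [hαc, Finset.sum_add_distrib]
      rw [Equiv.sum_comp σ a, ← Finset.sum_add_distrib]
      apply Finset.sum_congr rfl
      intro i _; simp only [ha]; ring
    · rw [hpt, hdg]; exact dgF_eP α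
    · rw [hpt, sqF_eP, sqF_eP]
      zify
      simp only [hαc]
      convert rearr a haanti σ hσ1 using 3 with i
      simp only [ha]; ring
    · rw [hF_eP]
      apply Finset.prod_congr rfl
      intro i _
      rw [Matrix.of_apply, hInt, if_pos]
      · congr 1
        simp only [hα, ha, hb]
        congr 1; ring
      · have := hneg i
        simp only [ha, hb] at this
        omega

theorem sqF_le (m : Pt) : sqF m ≤ wF m ^ 2 := by
  induction m using Finsupp.induction_linear with
  | zero => simp
  | add f g hf hg => rw [map_add, map_add, add_sq]; nlinarith
  | single k e =>
    rw [sqF_single, wF_single, mul_pow]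
    exact Nat.mul_le_mul_right _ (Nat.le_self_pow (by norm_num) e)

theorem UpS_trans {m m' m'' : Pt} (h : m' ∈ UpS m) (h' : m'' ∈ UpE m') : m'' ∈ UpS m := by
  obtain ⟨h1, h2, h3⟩ := h
  obtain ⟨h1', h2', h3'⟩ := h'
  refine ⟨h1'.trans h1, h2'.trans h2, ?_⟩
  rcases h3' with rfl | h3'
  · exact h3
  · exact h3.trans h3'

theorem UpS_sub_UpE (m : Pt) : UpS m ⊆ UpE m := fun _ h => ⟨h.1, h.2.1, Or.inr h.2.2⟩
theorem self_mem_UpE (m : Pt) : m ∈ UpE m := ⟨rfl, le_rfl, Or.inl rfl⟩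

theorem tri_span {A : Type} [AddCommGroup A] [Module R A] (x y : Pt → A) (ε : Pt → R)
    (hε : ∀ m, ε m ≠ 0)
    (h : ∀ m, y m - ε m • x m ∈ Submodule.span R (x '' UpS m)) :
    ∀ m, x m ∈ Submodule.span R (y '' UpE m) := by
  have : ∀ N m, wF m ^ 2 - sqF m = N → x m ∈ Submodule.span R (y '' UpE m) := by
    intro N
    induction N using Nat.strong_induction_on with
    | _ N ih =>
      intro m hm
      have h1 : Submodule.span R (x '' UpS m) ≤ Submodule.span R (y '' UpE m) := by
        rw [Submodule.span_le]
        rintro _ ⟨m', hm', rfl⟩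
        have hlt : wF m' ^ 2 - sqF m' < N := by
          have := sqF_le m'
          have h2 := hm'.2.2
          have h3 := hm'.1
          rw [h3] at this ⊢
          omega
        refine Submodule.span_mono (Set.image_mono ?_) (ih _ hlt m' rfl)
        intro m'' hm''
        exact UpS_sub_UpE _ (UpS_trans hm' hm'')
      have h2 := h1 (h m)
      have h3 : y m ∈ Submodule.span R (y '' UpE m) :=
        Submodule.subset_span ⟨m, self_mem_UpE m, rfl⟩
      have h4 := Submodule.smul_mem _ (ε m)⁻¹ (Submodule.sub_mem _ h3 h2)
      rwa [sub_sub_cancel, smul_smul, inv_mul_cancel₀ (hε m), one_smul] at h4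
  exact fun m => this _ m rfl

theorem mul_mem_span_image {A : Type} [CommRing A] [Algebra R A] (x y z : Pt → A)
    {S T U : Set Pt} (hU : ∀ a ∈ S, ∀ b ∈ T, x a * y b ∈ Submodule.span R (z '' U)) {f g : A}
    (hf : f ∈ Submodule.span R (x '' S)) (hg : g ∈ Submodule.span R (y '' T)) :
    f * g ∈ Submodule.span R (z '' U) := by
  have h := Submodule.mul_mem_mul hf hg
  rw [Submodule.span_mul_span] at h
  refine Submodule.span_le.mpr ?_ h
  rintro _ ⟨_, ⟨a, ha, rfl⟩, _, ⟨b, hb, rfl⟩, rfl⟩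
  exact hU a ha b hb

/-- homogeneous piece spanned by products of `h` -/
def VH (R : Type) [Field R] (n : ℕ) : Submodule R (SymFn R) :=
  Submodule.span R (hF (R := R) '' {m | wF m = n})

theorem VH_mul {a b : ℕ} {f g : SymFn R} (hf : f ∈ VH R a) (hg : g ∈ VH R b) :
    f * g ∈ VH R (a + b) := by
  refine mul_mem_span_image (R := R) hF hF hF ?_ hf hg
  intro u hu v hv
  rw [← hF_add]
  refine Submodule.subset_span ⟨_, ?_, rfl⟩
  rw [Set.mem_ofPred_eq, map_add, hu, hv]

theorem hsym_mem_VH (n : ℕ) : hsym (R := R) n ∈ VH R n :=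
  Submodule.subset_span ⟨toF n, wF_toF n, hF_toF n⟩

theorem one_mem_VH : (1 : SymFn R) ∈ VH R 0 := by
  have := hsym_mem_VH (R := R) 0
  rwa [hsym_zero] at this

theorem X_mem_VH : ∀ n : ℕ, (X (Nat.succPNat n) : SymFn R) ∈ VH R (n + 1) := by
  intro n
  induction n using Nat.strong_induction_on with
  | _ n ih =>
    have h := hsym_newton (R := R) n
    rw [Finset.sum_range_succ, Nat.sub_self, hsym_zero, mul_one] at h
    have h' := (sub_eq_of_eq_add' h).symm
    rw [h']
    apply Submodule.sub_mem
    · have e : ((n : SymFn R) + 1) = C ((n : R) + 1) := by simp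
      rw [e, mul_comm, ← smul_eq_C_mul]
      exact Submodule.smul_mem _ _ (hsym_mem_VH _)
    · apply Submodule.sum_mem
      intro i hi
      have hi' : i < n := by simpa using hi
      have := VH_mul (ih i hi') (hsym_mem_VH (R := R) (n - i))
      rwa [show i + 1 + (n - i) = n + 1 by omega] at this

theorem X_mem_VH' (k : ℕ+) : (X k : SymFn R) ∈ VH R k := by
  have := X_mem_VH (R := R) ((k : ℕ) - 1)
  have e : Nat.succPNat ((k : ℕ) - 1) = k := PNat.succPNat_natPred k
  rw [e] at this
  have := k.pos
  rwa [show (k : ℕ) - 1 + 1 = k by omega] at *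

theorem monomial_mem_VH (m : Pt) : (monomial m (1 : R) : SymFn R) ∈ VH R (wF m) := by
  induction m using Finsupp.induction_linear with
  | zero => simpa using one_mem_VH
  | add f g hf hg =>
    rw [map_add, ← one_mul (1 : R), ← monomial_mul]
    exact VH_mul hf hg
  | single k e =>
    rw [wF_single, ← X_pow_eq_monomial]
    induction e with
    | zero => simpa using one_mem_VH
    | succ e ih =>
      rw [pow_succ, Nat.succ_mul]
      exact VH_mul ih (X_mem_VH' k)

/-! ### finiteness and linear independence -/

abbrev NN (n : ℕ) : Type := {m : Pt // wF m = n}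

theorem finite_wF (n : ℕ) : Set.Finite {m : Pt | wF m = n} := by
  have hs : Set.Finite {k : ℕ+ | (k : ℕ) ≤ n} :=
    Set.Finite.preimage PNat.coe_injective.injOn (Set.finite_le_nat n)
  let s := hs.toFinset
  let M : Pt := Finsupp.onFinset s (fun k => if (k : ℕ) ≤ n then n else 0) (by
    intro a ha; simp [s]; by_contra h; simp at h; simp [h] at ha)
  refine (Set.finite_Iic M).subset ?_
  intro m hm k
  rcases Nat.eq_zero_or_pos (m k) with h | h
  · rw [h]; exact Nat.zero_le _
  · have h1 : m k * (k : ℕ) ≤ n := by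
      rw [← hm, ← wF_single]
      have : m = Finsupp.single k (m k) + m.erase k := (Finsupp.single_add_erase k m).symm
      conv_rhs => rw [this, map_add]
      exact Nat.le_add_right _ _
    have hk := k.pos
    have h2 : (k : ℕ) ≤ n := le_trans (Nat.le_mul_of_pos_left _ h) h1
    have h3 : m k ≤ n := le_trans (Nat.le_mul_of_pos_right _ hk) h1
    simp [M, h2, h3]

instance (n : ℕ) : Finite (NN n) := (finite_wF n).to_subtype
instance (n : ℕ) : Fintype (NN n) := Fintype.ofFinite _

theorem li_of_span {n : ℕ} (y : NN n → SymFn R)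
    (h : ∀ m, wF m = n → (monomial m (1 : R) : SymFn R) ∈ Submodule.span R (Set.range y)) :
    LinearIndependent R y := by
  have hm : LinearIndependent R (fun m : NN n => (monomial m.1 (1 : R) : SymFn R)) := by
    have := (basisMonomials ℕ+ R).linearIndependent
    rw [coe_basisMonomials] at this
    exact this.comp (fun m : NN n => m.1) Subtype.val_injective
  rw [linearIndependent_iff_card_le_finrank_span]
  rw [linearIndependent_iff_card_eq_finrank_span] at hm
  rw [hm]
  have hle : Submodule.span R (Set.range (fun m : NN n => (monomial m.1 (1 : R) : SymFn R))) ≤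
      Submodule.span R (Set.range y) := by
    rw [Submodule.span_le]
    rintro _ ⟨m, rfl⟩
    exact h m.1 m.2
  haveI : Module.Finite R (Submodule.span R (Set.range y)) :=
    FiniteDimensional.span_of_finite R (Set.finite_range y)
  exact Submodule.finrank_mono hle

theorem li_of_tri (y : Pt → SymFn R) (ε : Pt → R) (hε : ∀ m, ε m ≠ 0)
    (h : ∀ m, y m - ε m • hF m ∈ Submodule.span R (hF (R := R) '' UpS m)) (n : ℕ) :
    LinearIndependent R (fun m : NN n => y m.1) := by
  apply li_of_span
  intro m hm
  have h1 := monomial_mem_VH (R := R) m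
  rw [hm] at h1
  refine Submodule.span_le.mpr ?_ h1
  rintro _ ⟨m', hm', rfl⟩
  refine Submodule.span_mono ?_ (tri_span hF y ε hε h m')
  rintro _ ⟨u, hu, rfl⟩
  exact ⟨⟨u, hu.1.trans hm'⟩, rfl⟩

theorem li_hF (n : ℕ) : LinearIndependent R (fun m : NN n => hF (R := R) m.1) := by
  apply li_of_tri hF (fun _ => 1) (fun _ => one_ne_zero)
  intro m; simp

theorem schur_tri' (m : Pt) : schur (R := R) (ofPt m) - (1 : R) • hF m ∈
    Submodule.span R (hF (R := R) '' UpS m) := by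
  have := schur_tri (R := R) (ofPt m)
  rwa [toPt_ofPt, ← one_smul R (hF m)] at this

theorem hF_mem_schur (m : Pt) : hF (R := R) m ∈
    Submodule.span R ((fun m => schur (R := R) (ofPt m)) '' UpE m) :=
  tri_span hF (fun m => schur (ofPt m)) (fun _ => 1) (fun _ => one_ne_zero) schur_tri' m

theorem li_schur (n : ℕ) : LinearIndependent R (fun m : NN n => schur (R := R) (ofPt m.1)) :=
  li_of_tri (fun m => schur (ofPt m)) (fun _ => 1) (fun _ => one_ne_zero) schur_tri' n

end


section
variable {R : Type} [Field R] [CharZero R]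

theorem plethP_X (d k : ℕ+) : plethP (R := R) d (X k) = X (d * k) := by simp [plethP]

theorem sum_root_pow {d : ℕ+} {z : R} (hz : IsPrimitiveRoot z d) (n : ℕ) :
    ∑ j : Fin d, (z ^ (j : ℕ)) ^ n = if (d : ℕ) ∣ n then ((d : ℕ) : R) else 0 := by
  rw [Fin.sum_univ_eq_sum_range (fun j => (z ^ j) ^ n)]
  split_ifs with h
  · have : ∀ j ∈ Finset.range (d : ℕ), (z ^ j) ^ n = 1 := by
      intro j _
      rw [← pow_mul, mul_comm, pow_mul, (hz.pow_eq_one_iff_dvd n).mpr h, one_pow]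
    rw [Finset.sum_congr rfl this]; simp
  · have h1 : z ^ n ≠ 1 := fun e => h ((hz.pow_eq_one_iff_dvd n).mp e)
    have h2 : ∀ j ∈ Finset.range (d : ℕ), (z ^ j) ^ n = (z ^ n) ^ j := by
      intro j _; rw [← pow_mul, mul_comm, pow_mul]
    rw [Finset.sum_congr rfl h2]
    have h3 := geom_sum_mul (z ^ n) d
    rw [← pow_mul, mul_comm n, pow_mul, hz.pow_eq_one, one_pow, sub_self] at h3
    exact (mul_eq_zero.mp h3).resolve_right (sub_ne_zero.mpr h1)

theorem newt_pleth (d : ℕ+) : NewtPS (S := SymFn R)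
    (PowerSeries.mk fun n => if (d : ℕ) ∣ n + 1 then ((d : ℕ) : SymFn R) * X (Nat.succPNat n) else 0)
    (PowerSeries.mk fun n => if (d : ℕ) ∣ n then plethP d (hsym (R := R) (n / d)) else 0) := by
  have hdp := d.pos
  rw [newtPS_iff]
  refine ⟨by simp [hsym_zero], fun n => ?_⟩
  by_cases h : (d : ℕ) ∣ n + 1
  · rw [if_pos h]
    obtain ⟨N, hN⟩ := h
    obtain ⟨N, rfl⟩ : ∃ N', N = N' + 1 := ⟨N - 1, by rcases N with _ | N <;> simp at hN ⊢⟩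
    have h1 := congrArg (plethP (R := R) d) (hsym_newton (R := R) N)
    rw [map_mul, map_add, map_natCast, map_one, map_sum] at h1
    have e1 : (n + 1) / (d : ℕ) = N + 1 := by rw [hN]; exact Nat.mul_div_cancel_left _ hdp
    have e2 : ((n : SymFn R) + 1) = (d : ℕ) * ((N : SymFn R) + 1) := by exact_mod_cast hN
    rw [e1, e2]
    have e3 : plethP d (hsym (R := R) (N + 1)) * (((d : ℕ) : SymFn R) * ((N : SymFn R) + 1)) =
      (d : ℕ) * (plethP d (hsym (R := R) (N + 1)) * ((N : SymFn R) + 1)) := by ring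
    rw [e3, h1, Finset.mul_sum]
    apply Finset.sum_of_injOn (fun I => (d : ℕ) * (I + 1) - 1)
    · intro I _ J _ hIJ
      simp only at hIJ
      have p1 := Nat.mul_pos hdp (Nat.succ_pos I)
      have p2 := Nat.mul_pos hdp (Nat.succ_pos J)
      have : (d : ℕ) * (I + 1) = d * (J + 1) := by
        simp only [Nat.succ_eq_add_one] at p1 p2; omega
      have := Nat.eq_of_mul_eq_mul_left hdp this
      omega
    · intro I hI
      simp at hI ⊢
      have : (d : ℕ) * (I + 1) ≤ d * (N + 1) := Nat.mul_le_mul_left _ (by omega)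
      have p1 := Nat.mul_pos hdp (Nat.succ_pos I)
      simp only [Nat.succ_eq_add_one] at p1
      omega
    · intro i hi hni
      rw [if_neg, zero_mul]
      intro hdv
      apply hni
      obtain ⟨J, hJ⟩ := hdv
      obtain ⟨J, rfl⟩ : ∃ N', J = N' + 1 := ⟨J - 1, by rcases J with _ | N <;> simp at hJ ⊢⟩
      refine ⟨J, ?_, ?_⟩
      · simp at hi ⊢
        have : (d : ℕ) * (J + 1) ≤ d * (N + 1) := by omega
        have := Nat.le_of_mul_le_mul_left this hdp
        omega
      · simp only; omega
    · intro I hI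
      have hI' : I ≤ N := by simp at hI; omega
      have p1 := Nat.mul_pos hdp (Nat.succ_pos I)
      simp only [Nat.succ_eq_add_one] at p1
      have q1 : (d : ℕ) * (I + 1) - 1 + 1 = d * (I + 1) := by omega
      have q2 : n - ((d : ℕ) * (I + 1) - 1) = d * (N - I) := by
        rw [Nat.mul_sub]
        have : (d : ℕ) * (I + 1) = d * I + d := by ring
        have : (d : ℕ) * (N + 1) = d * N + d := by ring
        have : (d : ℕ) * I ≤ d * N := Nat.mul_le_mul_left _ hI'
        omega
      rw [q1, q2, if_pos (Dvd.intro _ rfl), if_pos (Dvd.intro _ rfl),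
        Nat.mul_div_cancel_left _ hdp, map_mul, plethP_X, mul_assoc]
      congr 3
      apply PNat.eq
      rw [PNat.mul_coe, Nat.succPNat_coe, Nat.succPNat_coe]
      simp only [Nat.succ_eq_add_one]; omega
  · rw [if_neg h, zero_mul]
    symm
    apply Finset.sum_eq_zero
    intro i hi
    have hi' : i ≤ n := by simp at hi; omega
    by_cases h1 : (d : ℕ) ∣ i + 1
    · rw [if_neg (c := (d : ℕ) ∣ n - i), mul_zero]
      intro h2
      apply h
      have := Nat.dvd_add h1 h2
      rwa [show i + 1 + (n - i) = n + 1 by omega] at this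
    · rw [if_neg h1, zero_mul]

theorem prod_twist {d : ℕ+} {z : R} (hz : IsPrimitiveRoot z d) :
    ∏ j : Fin d, (PowerSeries.mk fun n => (C (z ^ (j : ℕ)) : SymFn R) ^ n * hsym (R := R) n) =
    (PowerSeries.mk fun n => if (d : ℕ) ∣ n then plethP d (hsym (R := R) (n / d)) else 0) := by
  have h1 := NewtPS.prod Finset.univ _ _ (fun (j : Fin d) _ =>
    newtPS_twist (C (z ^ (j : ℕ)) : SymFn R) _ _ (hsym_newtPS (R := R)))
  refine h1.unique ?_
  convert newt_pleth (R := R) d using 1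
  ext1 n
  rw [map_sum]
  simp only [PowerSeries.coeff_mk]
  rw [← Finset.sum_mul]
  have : ∑ j : Fin d, (C (z ^ (j : ℕ)) : SymFn R) ^ (n + 1) =
      C (∑ j : Fin d, (z ^ (j : ℕ)) ^ (n + 1)) := by
    rw [map_sum]; simp
  rw [this, sum_root_pow hz]
  split_ifs <;> simp

theorem root_prod {d : ℕ+} {z : R} (hz : IsPrimitiveRoot z d) :
    ∏ j : Fin d, z ^ (j : ℕ) = (-1) ^ ((d : ℕ) - 1) := by
  rw [Fin.prod_univ_eq_prod_range (fun j => z ^ j), Finset.prod_pow_eq_pow_sum]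
  have h := Finset.sum_range_id_mul_two (d : ℕ)
  have hdp := d.pos
  rcases Nat.even_or_odd' (d : ℕ) with ⟨e, he | he⟩
  · have h1 : ∑ i ∈ Finset.range (d : ℕ), i = e * (d - 1) := by
      rw [he] at h ⊢
      nlinarith
    rw [h1, pow_mul]
    congr 1
    have h2 : (z ^ e) ^ 2 = 1 := by rw [← pow_mul, mul_comm, ← he, hz.pow_eq_one]
    have h3 : z ^ e ≠ 1 := by
      intro h4
      have := Nat.le_of_dvd (by omega) ((hz.pow_eq_one_iff_dvd e).mp h4)
      omega
    rcases (mul_self_eq_one_iff (a := z ^ e)).mp (by rw [← sq]; exact h2) with h5 | h5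
    · exact absurd h5 h3
    · exact h5
  · have h1 : ∑ i ∈ Finset.range (d : ℕ), i = d * e := by
      have : (d : ℕ) - 1 = 2 * e := by omega
      rw [this] at h
      nlinarith
    rw [h1, pow_mul, hz.pow_eq_one, one_pow]
    have : (d : ℕ) - 1 = 2 * e := by omega
    rw [this, pow_mul]; simp

def Tri (c : R) (m : Pt) (f : SymFn R) : Prop :=
  f - c • hF m ∈ Submodule.span R (hF (R := R) '' UpS m)

theorem UpE_add {m m' a b : Pt} (ha : a ∈ UpE m) (hb : b ∈ UpE m') (h : a ≠ m ∨ b ≠ m') :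
    a + b ∈ UpS (m + m') := by
  obtain ⟨a1, a2, a3⟩ := ha
  obtain ⟨b1, b2, b3⟩ := hb
  refine ⟨by rw [map_add, map_add, a1, b1], by rw [map_add, map_add]; omega, ?_⟩
  rw [map_add, map_add]
  rcases a3 with rfl | a3 <;> rcases b3 with rfl | b3
  · simp at h
  all_goals omega

theorem UpS_ne {m a : Pt} (h : a ∈ UpS m) : a ≠ m := by
  rintro rfl; exact absurd h.2.2 (lt_irrefl _)

theorem Tri.mul {c c' : R} {m m' : Pt} {f f' : SymFn R} (h : Tri c m f) (h' : Tri c' m' f') :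
    Tri (c * c') (m + m') (f * f') := by
  unfold Tri at *
  have e : f * f' - (c * c') • hF (m + m') = (f - c • hF m) * (f' - c' • hF m') +
      c • (hF m * (f' - c' • hF m')) + c' • ((f - c • hF m) * hF m') := by
    rw [hF_add]
    simp only [smul_eq_C_mul, C_mul]
    ring
  rw [e]
  have self : ∀ m, hF (R := R) m ∈ Submodule.span R (hF (R := R) '' {m}) :=
    fun m => Submodule.subset_span ⟨m, rfl, rfl⟩
  refine Submodule.add_mem _ (Submodule.add_mem _ ?_ (Submodule.smul_mem _ _ ?_))
    (Submodule.smul_mem _ _ ?_)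
  · refine mul_mem_span_image hF hF hF ?_ h h'
    intro a ha b hb
    rw [← hF_add]
    exact Submodule.subset_span ⟨_, UpE_add (UpS_sub_UpE _ ha) (UpS_sub_UpE _ hb)
      (Or.inl (UpS_ne ha)), rfl⟩
  · refine mul_mem_span_image hF hF hF ?_ (self m) h'
    rintro a rfl b hb
    rw [← hF_add]
    exact Submodule.subset_span ⟨_, UpE_add (self_mem_UpE _) (UpS_sub_UpE _ hb)
      (Or.inr (UpS_ne hb)), rfl⟩
  · refine mul_mem_span_image hF hF hF ?_ h (self m')
    rintro a ha b rfl
    rw [← hF_add]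
    exact Submodule.subset_span ⟨_, UpE_add (UpS_sub_UpE _ ha) (self_mem_UpE _)
      (Or.inl (UpS_ne ha)), rfl⟩

theorem Tri.one : Tri (1 : R) 0 1 := by simp [Tri, hF_zero]

theorem Tri.pow {c : R} {m : Pt} {f : SymFn R} (h : Tri c m f) (e : ℕ) :
    Tri (c ^ e) (e • m) (f ^ e) := by
  induction e with
  | zero => simpa using Tri.one
  | succ e ih => rw [pow_succ, pow_succ, succ_nsmul]; exact ih.mul h

theorem Tri.prod {ι : Type} (s : Finset ι) (c : ι → R) (m : ι → Pt) (f : ι → SymFn R)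
    (h : ∀ i ∈ s, Tri (c i) (m i) (f i)) : Tri (∏ i ∈ s, c i) (∑ i ∈ s, m i) (∏ i ∈ s, f i) := by
  classical
  induction s using Finset.induction_on with
  | empty => simpa using Tri.one
  | insert a s ha ih =>
    rw [Finset.prod_insert ha, Finset.prod_insert ha, Finset.sum_insert ha]
    exact (h a (by simp)).mul (ih fun i hi => h i (by simp [hi]))

theorem Tri.h (m : Pt) : Tri (1 : R) m (hF m) := by simp [Tri]

theorem tri_pleth {d : ℕ+} {z : R} (hz : IsPrimitiveRoot z d) (i : ℕ+) :
    Tri ((-1 : R) ^ ((i : ℕ) * (d - 1))) (Finsupp.single i (d : ℕ)) (plethP d (hsym (R := R) i)) := by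
  classical
  have hdp := d.pos
  have h := congrArg (PowerSeries.coeff ((d : ℕ) * i)) (prod_twist hz)
  rw [PowerSeries.coeff_prod, PowerSeries.coeff_mk, if_pos (Dvd.intro _ rfl),
    Nat.mul_div_cancel_left _ hdp] at h
  rw [← h]
  let l0 : Fin d →₀ ℕ := Finsupp.equivFunOnFinite.symm (fun _ => (i : ℕ))
  have hl0 : l0 ∈ Finset.univ.finsuppAntidiag ((d : ℕ) * i) := by
    rw [Finset.mem_finsuppAntidiag]; simp [l0]
  have term : ∀ l : Fin d →₀ ℕ, ∏ j, PowerSeries.coeff (l j)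
      (PowerSeries.mk fun n => (C (z ^ (j : ℕ)) : SymFn R) ^ n * hsym (R := R) n) =
      (∏ j : Fin d, (z ^ (j : ℕ)) ^ (l j)) • hF (eP l) := by
    intro l
    rw [hF_eP]
    simp only [PowerSeries.coeff_mk]
    rw [Finset.prod_mul_distrib, smul_eq_C_mul, map_prod]
    simp
  have e0 : eP (l0 : Fin d → ℕ) = Finsupp.single i (d : ℕ) := eP_const d i
  rw [Tri, ← Finset.add_sum_erase _ _ hl0, term, e0]
  have c0 : ∏ j : Fin d, (z ^ (j : ℕ)) ^ (l0 j) = (-1 : R) ^ ((i : ℕ) * (d - 1)) := by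
    have : ∀ j, l0 j = i := fun j => rfl
    simp only [this]
    rw [Finset.prod_pow, root_prod hz, ← pow_mul, mul_comm]
  rw [c0, add_sub_cancel_left]
  apply Submodule.sum_mem
  intro l hl
  rw [term]
  apply Submodule.smul_mem
  refine Submodule.subset_span ⟨_, ?_, rfl⟩
  rw [Finset.mem_erase, Finset.mem_finsuppAntidiag] at hl
  obtain ⟨hne, hsum, -⟩ := hl
  refine ⟨?_, ?_, ?_⟩
  · rw [wF_eP, wF_single]; exact hsum
  · rw [dgF_single]; exact dgF_eP _
  · rw [sqF_eP, sqF_single]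
    have hsum' : ∑ j, (l j : ℤ) = d * i := by exact_mod_cast hsum
    have hpos : 0 < ∑ j, ((l j : ℤ) - i) ^ 2 := by
      by_contra hc
      have hz : ∑ j, ((l j : ℤ) - i) ^ 2 = 0 :=
        le_antisymm (not_lt.mp hc) (Finset.sum_nonneg fun _ _ => sq_nonneg _)
      rw [Finset.sum_eq_zero_iff_of_nonneg (fun _ _ => sq_nonneg _)] at hz
      apply hne
      ext j
      have := hz j (Finset.mem_univ j)
      have h2 : (l j : ℤ) - i = 0 := by simpa using this
      simp [l0]; omega
    have hexp : ∑ j, ((l j : ℤ) - i) ^ 2 = ∑ j, (l j : ℤ) ^ 2 - d * (i : ℤ) ^ 2 := by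
      simp only [sub_sq, Finset.sum_add_distrib, Finset.sum_sub_distrib]
      rw [← Finset.sum_mul, ← Finset.mul_sum, hsum']
      simp; ring
    zify
    linarith

end


def quoF (d : ℕ+) (κ : Pt) : Pt := κ.mapRange (fun e => e / (d : ℕ)) (by simp)
def remF (d : ℕ+) (κ : Pt) : Pt := κ.mapRange (fun e => e % (d : ℕ)) (by simp)
def depth (d : ℕ+) (κ : Pt) : ℕ := dgF (quoF d κ)

theorem quoF_apply (d : ℕ+) (κ : Pt) (k : ℕ+) : quoF d κ k = κ k / (d : ℕ) := rfl
theorem remF_apply (d : ℕ+) (κ : Pt) (k : ℕ+) : remF d κ k = κ k % (d : ℕ) := rfl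

theorem qr_eq (d : ℕ+) (κ : Pt) : (d : ℕ) • quoF d κ + remF d κ = κ := by
  ext k
  simp [quoF_apply, remF_apply, Nat.div_add_mod]

theorem quoF_add (d : ℕ+) (ν κ : Pt) : quoF d ((d : ℕ) • ν + κ) = ν + quoF d κ := by
  have hdp := d.pos
  ext k
  simp [quoF, Nat.mul_add_div hdp]

theorem remF_add (d : ℕ+) (ν κ : Pt) : remF d ((d : ℕ) • ν + κ) = remF d κ := by
  ext k
  simp [remF_apply]

theorem depth_add (d : ℕ+) (ν κ : Pt) : depth d ((d : ℕ) • ν + κ) = dgF ν + depth d κ := by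
  rw [depth, quoF_add, map_add, depth]

def dmul (d : ℕ+) : Pt →+ Pt := Finsupp.mapDomain.addMonoidHom (fun k => d * k)

theorem dmul_single (d k : ℕ+) (e : ℕ) :
    dmul d (Finsupp.single k e) = Finsupp.single (d * k) e := by
  simp [dmul, Finsupp.mapDomain_single]

theorem dmul_inj (d : ℕ+) : Function.Injective (dmul d) :=
  Finsupp.mapDomain_injective (fun a b h => mul_left_cancel h)

theorem wF_dmul (d : ℕ+) (μ : Pt) : wF (dmul d μ) = d * wF μ := by
  induction μ using Finsupp.induction_linear with
  | zero => simp
  | add f g hf hg => rw [map_add, map_add, map_add, hf, hg, mul_add]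
  | single k e => rw [dmul_single, wF_single, wF_single, PNat.mul_coe]; ring

theorem depF_dmul (d : ℕ+) (μ : Pt) : depF d (dmul d μ) = dgF μ := by
  induction μ using Finsupp.induction_linear with
  | zero => simp
  | add f g hf hg => rw [map_add, map_add, map_add, hf, hg]
  | single k e =>
    rw [dmul_single, depF_single, dgF_single, PNat.mul_coe, if_pos (Dvd.intro _ rfl), mul_one]

section
variable {R : Type} [Field R] [CharZero R]

def bF (d : ℕ+) (κ : Pt) : SymFn R := plethP d (hF (quoF d κ)) * hF (remF d κ)

theorem bF_add (d : ℕ+) (ν κ : Pt) :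
    bF (R := R) d ((d : ℕ) • ν + κ) = plethP d (hF ν) * bF d κ := by
  rw [bF, quoF_add, remF_add, hF_add, map_mul, bF, mul_assoc]

def epsQ (R : Type) [Field R] (d : ℕ+) (ν : Pt) : R :=
  ∏ k ∈ ν.support, ((-1 : R) ^ ((k : ℕ) * (d - 1))) ^ (ν k)

theorem epsQ_ne_zero (d : ℕ+) (ν : Pt) : epsQ R d ν ≠ 0 := by
  rw [epsQ, Finset.prod_ne_zero_iff]
  intro k _
  exact pow_ne_zero _ (pow_ne_zero _ (by simp))

theorem tri_bF {d : ℕ+} {z : R} (hz : IsPrimitiveRoot z d) (κ : Pt) :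
    Tri (epsQ R d (quoF d κ)) κ (bF d κ) := by
  have key : ∀ ν : Pt, Tri (epsQ R d ν) ((d : ℕ) • ν) (plethP d (hF ν)) := by
    intro ν
    have h := Tri.prod ν.support _ _ _ (fun k _ => (tri_pleth hz k).pow (ν k))
    have e1 : ((d : ℕ) • ν) = ∑ i ∈ ν.support, ν i • Finsupp.single i (d : ℕ) := by
      ext j
      rw [Finsupp.finsetSum_apply]
      simp only [Finsupp.smul_apply, Finsupp.single_apply, smul_eq_mul]
      simp only [mul_ite, mul_zero]
      rw [Finset.sum_ite_eq' ν.support j]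
      by_cases hj : j ∈ ν.support
      · rw [if_pos hj, mul_comm]
      · rw [if_neg hj, Finsupp.notMem_support_iff.mp hj, mul_zero]
    rw [e1]
    have e2 : plethP d (hF (R := R) ν) = ∏ i ∈ ν.support, plethP d (hsym (i : ℕ)) ^ ν i := by
      unfold hF
      rw [Finsupp.prod, map_prod]
      simp
    rw [e2]
    exact h
  have := (key (quoF d κ)).mul (Tri.h (remF d κ))
  rwa [mul_one, qr_eq] at this

theorem li_bF {d : ℕ+} {z : R} (hz : IsPrimitiveRoot z d) (n : ℕ) :
    LinearIndependent R (fun m : NN n => bF (R := R) d m.1) :=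
  li_of_tri (bF d) (fun κ => epsQ R d (quoF d κ)) (fun _ => epsQ_ne_zero d _)
    (fun κ => tri_bF hz κ) n

theorem hF_mem_b {d : ℕ+} {z : R} (hz : IsPrimitiveRoot z d) (m : Pt) :
    hF (R := R) m ∈ Submodule.span R (bF (R := R) d '' UpE m) :=
  tri_span hF (bF d) (fun κ => epsQ R d (quoF d κ)) (fun _ => epsQ_ne_zero d _)
    (fun κ => tri_bF hz κ) m

/-! ### monomial filtrations -/

def pS (S : Set Pt) : Submodule R (SymFn R) :=
  Submodule.span R ((fun μ => (monomial μ (1 : R) : SymFn R)) '' S)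

theorem mem_pS_iff (S : Set Pt) (f : SymFn R) : f ∈ pS S ↔ ∀ μ, coeff μ f ≠ 0 → μ ∈ S := by
  classical
  constructor
  · intro hf
    induction hf using Submodule.span_induction with
    | mem x hx =>
      obtain ⟨ν, hν, rfl⟩ := hx
      intro μ hμ
      rw [coeff_monomial] at hμ
      by_cases h : ν = μ
      · exact h ▸ hν
      · simp [h] at hμ
    | zero => intro μ h; simp at h
    | add x y _ _ hx hy =>
      intro μ h
      rw [coeff_add] at h
      by_cases h1 : coeff μ x = 0
      · rw [h1, zero_add] at h; exact hy μ h
      · exact hx μ h1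
    | smul a x _ hx =>
      intro μ h
      rw [coeff_smul] at h
      exact hx μ (fun h0 => h (by rw [h0, smul_zero]))
  · intro h
    rw [← support_sum_monomial_coeff f]
    apply Submodule.sum_mem
    intro μ hμ
    rw [← mul_one (coeff μ f), ← smul_eq_mul, ← smul_monomial]
    exact Submodule.smul_mem _ _ (Submodule.subset_span ⟨μ, h μ (mem_support_iff.mp hμ), rfl⟩)

theorem pS_mul {S T U : Set Pt} (h : ∀ a ∈ S, ∀ b ∈ T, a + b ∈ U) {f g : SymFn R}
    (hf : f ∈ pS (R := R) S) (hg : g ∈ pS (R := R) T) : f * g ∈ pS (R := R) U := by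
  refine mul_mem_span_image (R := R) _ _ _ ?_ hf hg
  intro a ha b hb
  simp only [monomial_mul, mul_one]
  exact Submodule.subset_span ⟨a + b, h a ha b hb, rfl⟩

def gS (j n : ℕ) : Set Pt := {μ | wF μ = n ∧ j ≤ dgF μ}
def dS (d j n : ℕ) : Set Pt := {μ | wF μ = n ∧ j ≤ depF d μ}

theorem gS_add {j n j' n' : ℕ} : ∀ a ∈ gS j n, ∀ b ∈ gS j' n', a + b ∈ gS (j + j') (n + n') := by
  rintro a ⟨a1, a2⟩ b ⟨b1, b2⟩
  exact ⟨by rw [map_add, a1, b1], by rw [map_add]; omega⟩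

theorem dS_add {d j n j' n' : ℕ} :
    ∀ a ∈ dS d j n, ∀ b ∈ dS d j' n', a + b ∈ dS d (j + j') (n + n') := by
  rintro a ⟨a1, a2⟩ b ⟨b1, b2⟩
  exact ⟨by rw [map_add, a1, b1], by rw [map_add]; omega⟩

theorem X_mem_gS (k : ℕ+) : (X k : SymFn R) ∈ pS (R := R) (gS 1 k) :=
  Submodule.subset_span ⟨Finsupp.single k 1, ⟨by rw [wF_single, one_mul], by rw [dgF_single]⟩, rfl⟩

theorem pS_mono {S T : Set Pt} (h : S ⊆ T) : pS (R := R) S ≤ pS T :=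
  Submodule.span_mono (Set.image_mono h)

theorem gS_mono {i j n : ℕ} (h : i ≤ j) : gS j n ⊆ gS i n := fun _ hm => ⟨hm.1, h.trans hm.2⟩
theorem dS_mono {d i j n : ℕ} (h : i ≤ j) : dS d j n ⊆ dS d i n := fun _ hm => ⟨hm.1, h.trans hm.2⟩

theorem one_mem_gS : (1 : SymFn R) ∈ pS (R := R) (gS 0 0) :=
  Submodule.subset_span ⟨0, ⟨by simp, by simp⟩, rfl⟩

theorem hsym_mem_gS (n : ℕ) : hsym (R := R) n ∈ pS (R := R) (gS (if n = 0 then 0 else 1) n) := by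
  induction n using Nat.strong_induction_on with
  | _ n ih =>
    rcases n with _ | n
    · rw [hsym_zero]; exact one_mem_gS
    · rw [if_neg (by omega)]
      have h := hsym_newton (R := R) n
      have hn : ((n : R) + 1) ≠ 0 := Nat.cast_add_one_ne_zero n
      have e : ((n : SymFn R) + 1) = C ((n : R) + 1) := by simp
      rw [e, mul_comm, ← smul_eq_C_mul] at h
      have h2 : hsym (R := R) (n + 1) = ((n : R) + 1)⁻¹ • (∑ i ∈ Finset.range (n + 1),
          X (Nat.succPNat i) * hsym (R := R) (n - i)) := by
        rw [← h, smul_smul, inv_mul_cancel₀ hn, one_smul]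
      rw [h2]
      apply Submodule.smul_mem
      apply Submodule.sum_mem
      intro i hi
      have hi' : i ≤ n := by simp at hi; omega
      have h3 := pS_mul gS_add (X_mem_gS (R := R) (Nat.succPNat i)) (ih (n - i) (by omega))
      rw [Nat.succPNat_coe, show i.succ + (n - i) = n + 1 by omega] at h3
      exact pS_mono (gS_mono (by omega)) h3

theorem hsym_lead (n : ℕ) : hsym (R := R) (n + 1) - ((n : R) + 1)⁻¹ • X (Nat.succPNat n) ∈
    pS (R := R) (gS 2 (n + 1)) := by
  have h := hsym_newton (R := R) n
  have hn : ((n : R) + 1) ≠ 0 := Nat.cast_add_one_ne_zero n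
  have e : ((n : SymFn R) + 1) = C ((n : R) + 1) := by simp
  rw [e, mul_comm, ← smul_eq_C_mul, Finset.sum_range_succ, Nat.sub_self, hsym_zero, mul_one] at h
  have h2 : hsym (R := R) (n + 1) - ((n : R) + 1)⁻¹ • X (Nat.succPNat n) =
      ((n : R) + 1)⁻¹ • (∑ i ∈ Finset.range n, X (Nat.succPNat i) * hsym (R := R) (n - i)) := by
    have h3 := eq_sub_of_add_eq h.symm
    rw [h3, smul_sub, smul_smul, inv_mul_cancel₀ hn, one_smul]
  rw [h2]
  apply Submodule.smul_mem
  apply Submodule.sum_mem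
  intro i hi
  have hi' : i < n := by simpa using hi
  have h3 := pS_mul gS_add (X_mem_gS (R := R) (Nat.succPNat i)) (hsym_mem_gS (R := R) (n - i))
  rwa [Nat.succPNat_coe, show i.succ + (n - i) = n + 1 by omega, if_neg (by omega)] at h3

/-- leading term -/
def Lead (ν : Pt) (f : SymFn R) : Prop :=
  ∃ c : R, f - c • monomial ν (1 : R) ∈ pS (R := R) (gS (dgF ν + 1) (wF ν))

theorem Lead.mul {ν ν' : Pt} {f f' : SymFn R} (h : Lead ν f) (h' : Lead ν' f') :
    Lead (ν + ν') (f * f') := by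
  obtain ⟨c, h⟩ := h
  obtain ⟨c', h'⟩ := h'
  refine ⟨c * c', ?_⟩
  have e : f * f' - (c * c') • monomial (ν + ν') (1 : R) =
      (f - c • monomial ν (1 : R)) * (f' - c' • monomial ν' (1 : R)) +
      c • (monomial ν (1 : R) * (f' - c' • monomial ν' (1 : R))) +
      c' • ((f - c • monomial ν (1 : R)) * monomial ν' (1 : R)) := by
    have : (monomial (ν + ν') (1 : R) : SymFn R) = monomial ν 1 * monomial ν' 1 := by
      rw [monomial_mul, mul_one]
    rw [this]
    simp only [smul_eq_C_mul, C_mul]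
    ring
  rw [e]
  have self : ∀ m, (monomial m (1 : R) : SymFn R) ∈ pS (R := R) (gS (dgF m) (wF m)) :=
    fun m => Submodule.subset_span ⟨m, ⟨rfl, le_rfl⟩, rfl⟩
  rw [map_add, map_add]
  refine Submodule.add_mem _ (Submodule.add_mem _ ?_ (Submodule.smul_mem _ _ ?_))
    (Submodule.smul_mem _ _ ?_)
  · exact pS_mono (gS_mono (by omega)) (pS_mul gS_add h h')
  · exact pS_mono (gS_mono (by omega)) (pS_mul gS_add (self ν) h')
  · exact pS_mono (gS_mono (by omega)) (pS_mul gS_add h (self ν'))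

theorem Lead.one : Lead (R := R) 0 1 := ⟨1, by simp⟩

theorem lead_hF (ν : Pt) : Lead ν (hF (R := R) ν) := by
  induction ν using Finsupp.induction_linear with
  | zero => rw [hF_zero]; exact Lead.one
  | add f g hf hg => rw [hF_add]; exact hf.mul hg
  | single k e =>
    induction e with
    | zero => rw [Finsupp.single_zero, hF_zero]; exact Lead.one
    | succ e ih =>
      rw [Finsupp.single_add, hF_add]
      refine ih.mul ?_
      refine ⟨((((k : ℕ) - 1 : ℕ) : R) + 1)⁻¹, ?_⟩
      rw [hF_single, pow_one, dgF_single, wF_single, one_mul]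
      have h := hsym_lead (R := R) ((k : ℕ) - 1)
      have e : Nat.succPNat ((k : ℕ) - 1) = k := PNat.succPNat_natPred k
      have hk := k.pos
      rwa [e, show (k : ℕ) - 1 + 1 = k by omega] at h

theorem hF_mem_gS (ν : Pt) : hF (R := R) ν ∈ pS (R := R) (gS (dgF ν) (wF ν)) := by
  obtain ⟨c, h⟩ := lead_hF (R := R) ν
  have h1 := pS_mono (gS_mono (Nat.le_succ _)) h
  have h2 : c • (monomial ν (1 : R) : SymFn R) ∈ pS (R := R) (gS (dgF ν) (wF ν)) :=
    Submodule.smul_mem _ _ (Submodule.subset_span ⟨ν, ⟨rfl, le_rfl⟩, rfl⟩)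
  have := Submodule.add_mem _ h1 h2
  rwa [sub_add_cancel] at this

theorem plethP_monomial (d : ℕ+) (μ : Pt) :
    plethP (R := R) d (monomial μ 1) = monomial (dmul d μ) 1 := by
  induction μ using Finsupp.induction_linear with
  | zero => rw [map_zero]; exact map_one _
  | add f g hf hg =>
    rw [← one_mul (1 : R), ← monomial_mul, map_mul, hf, hg, monomial_mul, map_add]
  | single k e =>
    rw [dmul_single, ← X_pow_eq_monomial, ← X_pow_eq_monomial, map_pow, plethP_X]

theorem plethP_pS (d : ℕ+) (j n : ℕ) {f : SymFn R} (hf : f ∈ pS (R := R) (gS j n)) :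
    plethP d f ∈ pS (R := R) (dS d j (d * n)) := by
  have h : Submodule.map (plethP (R := R) d).toLinearMap (pS (R := R) (gS j n)) ≤
      pS (R := R) (dS d j (d * n)) := by
    rw [pS, Submodule.map_span, Submodule.span_le]
    rintro _ ⟨_, ⟨μ, hμ, rfl⟩, rfl⟩
    simp only [AlgHom.toLinearMap_apply, plethP_monomial]
    exact Submodule.subset_span ⟨_, ⟨by rw [wF_dmul, hμ.1], by rw [depF_dmul]; exact hμ.2⟩, rfl⟩
  exact h ⟨f, hf, rfl⟩

theorem wF_qr (d : ℕ+) (κ : Pt) : (d : ℕ) * wF (quoF d κ) + wF (remF d κ) = wF κ := by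
  conv_rhs => rw [← qr_eq d κ, map_add, map_nsmul, smul_eq_mul]

theorem bF_mem_dS (d : ℕ+) (κ : Pt) : bF (R := R) d κ ∈ pS (R := R) (dS d (depth d κ) (wF κ)) := by
  have h1 := plethP_pS d _ _ (hF_mem_gS (R := R) (quoF d κ))
  have h2 : hF (R := R) (remF d κ) ∈ pS (R := R) (dS d 0 (wF (remF d κ))) :=
    pS_mono (R := R) (S := gS (dgF (remF d κ)) (wF (remF d κ)))
      (T := dS d 0 (wF (remF d κ))) (fun m hm => ⟨hm.1, Nat.zero_le _⟩) (hF_mem_gS (R := R) (remF d κ))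
  have h3 := pS_mul dS_add h1 h2
  rwa [wF_qr, add_zero] at h3

/-- coefficients of `b` of full depth -/
theorem bF_lead (d : ℕ+) (ν μ : Pt) (h : coeff μ (bF (R := R) d ((d : ℕ) • ν)) ≠ 0)
    (hμ : depF d μ = dgF ν) : μ = dmul d ν := by
  classical
  by_contra hne
  have e : bF (R := R) d ((d : ℕ) • ν) = plethP d (hF ν) := by
    have := bF_add (R := R) d ν 0
    rw [add_zero] at this
    rw [this]
    have : bF (R := R) d 0 = 1 := by
      have h1 : quoF d 0 = 0 := by ext; simp [quoF]
      have h2 : remF d 0 = 0 := by ext; simp [remF_apply]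
      rw [bF, h1, h2, hF_zero, map_one, mul_one]
    rw [this, mul_one]
  obtain ⟨c, hc⟩ := lead_hF (R := R) ν
  have h1 := plethP_pS d _ _ hc
  rw [map_sub, map_smul, plethP_monomial, ← e, mem_pS_iff] at h1
  have h2 := h1 μ (by
    rw [coeff_sub, coeff_smul, coeff_monomial, if_neg (Ne.symm hne), smul_zero, sub_zero]
    exact h)
  have := h2.2
  omega

theorem monomial_mem_b {d : ℕ+} {z : R} (hz : IsPrimitiveRoot z d) : ∀ (j : ℕ) (μ : Pt),
    depF d μ = j → (monomial μ (1 : R) : SymFn R) ∈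
    Submodule.span R (bF (R := R) d '' {κ | wF κ = wF μ ∧ j ≤ depth d κ}) := by
  intro j
  induction j with
  | zero =>
    intro μ hμ
    have h1 := monomial_mem_VH (R := R) μ
    refine Submodule.span_le.mpr ?_ h1
    rintro _ ⟨m, hm, rfl⟩
    refine Submodule.span_mono (Set.image_mono ?_) (hF_mem_b hz m)
    intro u hu
    exact ⟨hu.1.trans hm, Nat.zero_le _⟩
  | succ j ih =>
    intro μ hμ
    have hex : ∃ k ∈ μ.support, (d : ℕ) ∣ (k : ℕ) := by
      by_contra hno
      push Not at hno
      have : depF d μ = 0 := by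
        rw [depF, Finsupp.weight_apply, Finsupp.sum]
        apply Finset.sum_eq_zero
        intro k hk
        rw [if_neg (hno k hk), smul_zero]
      omega
    obtain ⟨k, hk, k', hk'⟩ := hex
    have hk0 := k.pos
    have hk'0 : 0 < k' := by
      rcases Nat.eq_zero_or_pos k' with h | h
      · rw [h] at hk'; omega
      · exact h
    obtain ⟨k'', rfl⟩ : ∃ k'' : ℕ+, k' = (k'' : ℕ) := ⟨⟨k', hk'0⟩, rfl⟩
    have hkk : k = d * k'' := PNat.eq (by rw [hk', PNat.mul_coe])
    have hμ1 : μ k ≠ 0 := Finsupp.mem_support_iff.mp hk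
    have hμe : μ = Finsupp.single k 1 + (μ - Finsupp.single k 1) := by
      ext i
      by_cases hi : k = i
      · subst hi; simp; omega
      · simp [Finsupp.single_apply, hi]
    set μ' := μ - Finsupp.single k 1
    have hdep : depF d μ' = j := by
      rw [hμe, map_add, depF_single, if_pos ⟨_, hk'⟩] at hμ
      omega
    have h1 := ih μ' hdep
    have h2 := X_mem_VH' (R := R) k''
    have h3 : (X k : SymFn R) ∈ Submodule.span R
        ((fun ν => plethP (R := R) d (hF ν)) '' {ν | wF ν = (k'' : ℕ)}) := by
      have h4 : plethP (R := R) d (X k'') ∈ Submodule.map (plethP (R := R) d).toLinearMap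
        (VH R k'') := ⟨_, h2, rfl⟩
      rw [plethP_X, ← hkk, VH, Submodule.map_span, ← Set.image_comp] at h4
      exact h4
    have e : (monomial μ (1 : R) : SymFn R) = X k * monomial μ' (1 : R) := by
      conv_lhs => rw [hμe, ← one_mul (1 : R), ← monomial_mul]
      rfl
    rw [e]
    refine mul_mem_span_image (R := R) _ _ _ ?_ h3 h1
    intro ν hν κ hκ
    rw [← bF_add]
    refine Submodule.subset_span ⟨_, ⟨?_, ?_⟩, rfl⟩
    · conv_rhs => rw [hμe, map_add, wF_single]
      rw [map_add, map_nsmul, hκ.1, hν, hk', smul_eq_mul, one_mul]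
    · rw [depth_add]
      have h5 := hκ.2
      have h6 : 0 < dgF ν := by
        rcases Nat.eq_zero_or_pos (dgF ν) with h | h
        · exfalso
          have h7 : ν = 0 := by
            ext i
            by_contra hi
            have : ν = Finsupp.single i (ν i) + ν.erase i := (Finsupp.single_add_erase i ν).symm
            rw [this, map_add, dgF_single] at h
            simp at hi
            omega
          rw [h7, Set.mem_ofPred_eq, map_zero] at hν
          omega
        · exact h
      omega

/-- block linear independence -/
theorem block_li {d : ℕ+} {z : R} (hz : IsPrimitiveRoot z d) (n j : ℕ) (v : NN n → R)
    (hv : ∀ κ, depth d κ.1 ≠ j → v κ = 0)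
    (h : ∀ μ, depF d μ = j → coeff μ (∑ κ : NN n, v κ • bF (R := R) d κ.1) = 0) : v = 0 := by
  have hli := li_bF (R := R) hz n
  set f := ∑ κ : NN n, v κ • bF (R := R) d κ.1 with hf
  have hf1 : f ∈ Submodule.span R ((fun m : NN n => bF (R := R) d m.1) '' {κ | depth d κ.1 = j}) := by
    apply Submodule.sum_mem
    intro κ _
    by_cases hκ : depth d κ.1 = j
    · exact Submodule.smul_mem _ _ (Submodule.subset_span ⟨κ, hκ, rfl⟩)
    · rw [hv κ hκ, zero_smul]; exact Submodule.zero_mem _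
  have hf2 : f ∈ pS (R := R) (dS d j n) := by
    apply Submodule.sum_mem
    intro κ _
    by_cases hκ : depth d κ.1 = j
    · have := bF_mem_dS (R := R) d κ.1
      rw [hκ, κ.2] at this
      exact Submodule.smul_mem _ _ this
    · rw [hv κ hκ, zero_smul]; exact Submodule.zero_mem _
  have hf3 : f ∈ pS (R := R) (dS d (j + 1) n) := by
    rw [mem_pS_iff] at hf2 ⊢
    intro μ hμ
    have h1 := hf2 μ hμ
    refine ⟨h1.1, ?_⟩
    have h2 := h1.2
    rcases h2.lt_or_eq with h3 | h3
    · exact h3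
    · exact absurd (h μ h3.symm) hμ
  have hf4 : f ∈ Submodule.span R ((fun m : NN n => bF (R := R) d m.1) '' {κ | j + 1 ≤ depth d κ.1}) := by
    refine Submodule.span_le.mpr ?_ hf3
    rintro _ ⟨μ, hμ, rfl⟩
    refine Submodule.span_mono ?_ (monomial_mem_b hz _ μ rfl)
    rintro _ ⟨κ, hκ, rfl⟩
    exact ⟨⟨κ, hκ.1.trans hμ.1⟩, hμ.2.trans hκ.2, rfl⟩
  have hdis := hli.disjoint_span_image (s := {κ | depth d κ.1 = j}) (t := {κ | j + 1 ≤ depth d κ.1})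
    (by
      rw [Set.disjoint_left]
      intro κ h1 h2
      simp only [Set.mem_ofPred_eq] at h1 h2
      omega)
  have hf0 : f = 0 := by
    have := Submodule.disjoint_def.mp hdis f hf1 hf4
    exact this
  have := Fintype.linearIndependent_iff.mp hli v (by rw [← hf]; exact hf0)
  funext κ
  exact this κ

end


/-! ### dominance order combinatorics -/

theorem list_ext_take : ∀ L L' : List ℕ, (∀ x ∈ L, 0 < x) → (∀ x ∈ L', 0 < x) →
    (∀ k, (L.take k).sum = (L'.take k).sum) → L = L' := by
  intro L
  induction L with
  | nil =>
    intro L' _ h2 h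
    rcases L' with _ | ⟨a, t⟩
    · rfl
    · have := h 1
      simp at this
      have := h2 a (by simp)
      omega
  | cons a t ih =>
    intro L' h1 h2 h
    rcases L' with _ | ⟨a', t'⟩
    · have := h 1
      simp at this
      have := h1 a (by simp)
      omega
    · have e := h 1
      simp at e
      subst e
      congr 1
      refine ih t' (fun x hx => h1 x (by simp [hx])) (fun x hx => h2 x (by simp [hx])) ?_
      intro k
      have := h (k + 1)
      simpa using this

theorem descParts_mem_pos (nu : Multiset ℕ+) : ∀ x ∈ descParts nu, 0 < x := by
  intro x hx
  have : x ∈ ((descParts nu : List ℕ) : Multiset ℕ) := hx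
  rw [descParts_coe, Multiset.mem_map] at this
  obtain ⟨a, _, rfl⟩ := this
  exact a.pos

theorem descParts_inj {a b : Multiset ℕ+} (h : descParts a = descParts b) : a = b := by
  have h1 := descParts_coe a
  rw [h, descParts_coe] at h1
  exact (Multiset.map_injective PNat.coe_injective h1).symm

theorem pSum_ext {a b : Multiset ℕ+} (h : ∀ k, pSum a k = pSum b k) : a = b :=
  descParts_inj (list_ext_take _ _ (descParts_mem_pos a) (descParts_mem_pos b) h)

theorem descParts_sum (a : Multiset ℕ+) : (descParts a).sum = wt a := by
  rw [← Multiset.sum_coe, descParts_coe, wt]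

theorem StrictDom.card_le {mu nu : Multiset ℕ+} (h : StrictDom mu nu) :
    Multiset.card nu ≤ Multiset.card mu := by
  by_contra hlt
  push Not at hlt
  have h1 := h.2.2 (Multiset.card mu)
  rw [pSum, pSum, ← descParts_length, List.take_length, descParts_sum, h.2.1, ← descParts_sum] at h1
  have h2 := List.sum_take_add_sum_drop (descParts nu) (descParts mu).length
  have h3 : 0 < ((descParts nu).drop (descParts mu).length).sum := by
    apply List.sum_pos
    · intro x hx
      exact descParts_mem_pos nu x (List.mem_of_mem_drop hx)
    · intro h0
      have := List.length_drop (i := (descParts mu).length) (l := descParts nu)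
      rw [h0, descParts_length, descParts_length] at this
      simp at this
      omega
  omega

theorem StrictDom.trans {a b c : Multiset ℕ+} (h : StrictDom a b) (h' : StrictDom b c) :
    StrictDom a c := by
  refine ⟨?_, h.2.1.trans h'.2.1, fun k => (h.2.2 k).trans (h'.2.2 k)⟩
  rintro rfl
  exact h.1 (pSum_ext fun k => le_antisymm (h.2.2 k) (h'.2.2 k))

theorem StrictDom_wf (n : ℕ) :
    WellFounded (fun a b : NN n => StrictDom (ofPt a.1) (ofPt b.1)) := by
  have : IsTrans (NN n) (fun a b : NN n => StrictDom (ofPt a.1) (ofPt b.1)) :=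
    ⟨fun _ _ _ h h' => h.trans h'⟩
  have : Std.Irrefl (fun a b : NN n => StrictDom (ofPt a.1) (ofPt b.1)) :=
    ⟨fun _ h => h.1 rfl⟩
  exact Finite.wellFounded_of_trans_of_irrefl _

theorem wt_replicate (l : ℕ) (r : ℕ+) : wt (Multiset.replicate l r) = l * r := by
  simp [wt]

theorem StrictDom_rect {l : ℕ} {r : ℕ+} {nu : Multiset ℕ+}
    (h : StrictDom nu (Multiset.replicate l r)) : l < Multiset.card nu := by
  rcases h.card_le.lt_or_eq with h1 | h1
  · simpa using h1
  · exfalso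
    have hle : ∀ a ∈ nu, a ≤ r := by
      intro a ha
      have h2 := h.2.2 1
      rw [pSum, pSum, descParts_replicate] at h2
      have ha' : (a : ℕ) ∈ descParts nu := by
        have : (a : ℕ) ∈ ((descParts nu : List ℕ) : Multiset ℕ) := by
          rw [descParts_coe]; exact Multiset.mem_map_of_mem _ ha
        exact this
      obtain ⟨i, hi, hia⟩ := List.mem_iff_getElem.mp ha'
      have h3 := descParts_anti nu 0 i (Nat.zero_le _)
      have h4 : (descParts nu).getD i 0 = a := by
        rw [List.getD_eq_getElem _ _ hi, hia]
      have h5 : ((descParts nu).take 1).sum = (descParts nu).getD 0 0 := by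
        rcases descParts nu with _ | ⟨x, t⟩ <;> simp
      have h6 : ((List.replicate l (r : ℕ)).take 1).sum ≤ r := by
        rcases l with _ | l <;> simp [List.replicate_succ]
      rw [← PNat.coe_le_coe]
      omega
    apply h.1
    rw [Multiset.eq_replicate]
    refine ⟨by simpa using h1.symm, ?_⟩
    intro b hb
    by_contra hne
    have h2 : wt nu < (nu.map (fun _ => (r : ℕ))).sum := by
      apply Multiset.sum_lt_sum
      · intro i hi
        exact PNat.coe_le_coe _ _ |>.mpr (hle i hi)
      · exact ⟨b, hb, PNat.coe_lt_coe _ _ |>.mpr (lt_of_le_of_ne (hle b hb) hne)⟩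
    rw [h.2.1, wt_replicate, Multiset.map_const', Multiset.sum_replicate, ← h1] at h2
    simp at h2

section
variable {R : Type} [Field R] [CharZero R]

theorem schur_mem_P (q t : R) (P : Multiset ℕ+ → SymFn R) (hP : IsMacdonaldBasis q t P)
    (n : ℕ) (a : NN n) : schur (R := R) (ofPt a.1) ∈
    Submodule.span R (P '' {mu | Multiset.card (ofPt a.1) ≤ Multiset.card mu}) := by
  induction a using (StrictDom_wf n).induction with
  | _ a ih =>
    have h := hP.1 (ofPt a.1)
    have h2 : Submodule.span R (schur (R := R) '' {mu | StrictDom mu (ofPt a.1)}) ≤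
        Submodule.span R (P '' {mu | Multiset.card (ofPt a.1) ≤ Multiset.card mu}) := by
      rw [Submodule.span_le]
      rintro _ ⟨mu, hmu, rfl⟩
      have hw : wF (toPt mu) = n := by
        rw [wF_toPt, hmu.2.1, ← wF_toPt, toPt_ofPt]; exact a.2
      have := ih ⟨toPt mu, hw⟩ (by
        rw [ofPt_toPt]; exact hmu)
      simp only [ofPt_toPt] at this
      refine Submodule.span_mono (Set.image_mono ?_) this
      intro x hx
      exact hmu.card_le.trans hx
    have h3 := h2 h
    have h4 : P (ofPt a.1) ∈
        Submodule.span R (P '' {mu | Multiset.card (ofPt a.1) ≤ Multiset.card mu}) :=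
      Submodule.subset_span ⟨_, le_refl (Multiset.card (ofPt a.1)), rfl⟩
    have := Submodule.sub_mem _ h4 h3
    rwa [sub_sub_cancel] at this

theorem schur_mem_P' (q t : R) (P : Multiset ℕ+ → SymFn R) (hP : IsMacdonaldBasis q t P)
    (nu : Multiset ℕ+) : schur (R := R) nu ∈
    Submodule.span R (P '' {mu | Multiset.card nu ≤ Multiset.card mu}) := by
  have := schur_mem_P q t P hP _ ⟨toPt nu, rfl⟩
  simpa only [ofPt_toPt] using this

/-- a linear functional vanishing on a set vanishes on the span -/
theorem span_zero {A : Type} [AddCommGroup A] [Module R A] (φ : A →ₗ[R] R) {S : Set A}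
    (h : ∀ x ∈ S, φ x = 0) {x : A} (hx : x ∈ Submodule.span R S) : φ x = 0 := by
  have : Submodule.span R S ≤ LinearMap.ker φ := Submodule.span_le.mpr h
  exact this hx

theorem pairL_scale (w w' : Pt → R) (g : ℕ+ → R) (h : ∀ m, w' m = w m * m.prod fun k e => g k ^ e)
    (f f' : SymFn R) : pairL w (scaleHom g f) f' = pairL w' f f' := by
  rw [pairL_comm, pairL_comm w']
  rw [pairL_eq_sum, pairL_eq_sum]
  apply Finset.sum_congr rfl
  intro m _
  rw [coeff_scaleHom, h]
  ring

theorem zwtQT_eq (q t : R) (m : Pt) : zwtQT q t m = zwtH m *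
    m.prod fun k e => ((1 - q ^ (k : ℕ)) / (1 - t ^ (k : ℕ))) ^ e := by
  rw [zwtQT, zwtH, Finsupp.prod, ← Finset.prod_mul_distrib]

theorem pairH_scale (q t : R) (f f' : SymFn R) :
    pairH (scaleHom (fun k => (1 - q ^ (k : ℕ)) / (1 - t ^ (k : ℕ))) f) f' = innerQT q t f f' := by
  rw [innerQT_eq, pairH]
  exact pairL_scale _ _ _ (zwtQT_eq q t) f f'

/-- weight n part -/
theorem VH_eq_pS (n : ℕ) : VH R n = pS (R := R) {m | wF m = n} := by
  apply le_antisymm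
  · rw [VH, Submodule.span_le]
    rintro _ ⟨m, hm, rfl⟩
    refine pS_mono ?_ (hF_mem_gS (R := R) m)
    intro x hx
    exact hx.1.trans hm
  · rw [pS, Submodule.span_le]
    rintro _ ⟨m, hm, rfl⟩
    have := monomial_mem_VH (R := R) m
    rwa [show wF m = n from hm] at this

theorem schur_mem_VH (nu : Multiset ℕ+) : schur (R := R) nu ∈ VH R (wt nu) := by
  have h1 := schur_tri (R := R) nu
  have h2 : hF (R := R) (toPt nu) ∈ VH R (wt nu) :=
    Submodule.subset_span ⟨_, wF_toPt nu, rfl⟩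
  have h3 : Submodule.span R (hF (R := R) '' UpS (toPt nu)) ≤ VH R (wt nu) := by
    apply Submodule.span_mono (Set.image_mono _)
    intro x hx
    exact hx.1.trans (wF_toPt nu)
  have := Submodule.add_mem _ (h3 h1) h2
  rwa [sub_add_cancel] at this

/-- nondegeneracy -/
theorem orth_zero (n : ℕ) (f : SymFn R) (hf : f ∈ VH R n)
    (h : ∀ nu, wt nu = n → pairH f (schur (R := R) nu) = 0) : f = 0 := by
  rw [VH_eq_pS, mem_pS_iff] at hf
  ext μ
  rw [coeff_zero]
  by_contra hne
  have hw := hf μ hne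
  have h1 := monomial_mem_VH (R := R) μ
  rw [show wF μ = n from hw] at h1
  have h2 : pairH f (monomial μ (1 : R)) = 0 := by
    refine span_zero _ ?_ h1
    rintro _ ⟨m, hm, rfl⟩
    refine span_zero _ ?_ (hF_mem_schur (R := R) m)
    rintro _ ⟨m', hm', rfl⟩
    apply h
    rw [← wF_toPt, toPt_ofPt]
    exact hm'.1.trans hm
  rw [pairH, pairL_monomial_right, one_mul] at h2
  exact (mul_ne_zero hne (zwtH_ne_zero μ)) h2

theorem P_mem_VH (q t : R) (P : Multiset ℕ+ → SymFn R) (hP : IsMacdonaldBasis q t P)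
    (nu : Multiset ℕ+) : P nu ∈ VH R (wt nu) := by
  have h1 := hP.1 nu
  have h3 : Submodule.span R (schur (R := R) '' {mu | StrictDom mu nu}) ≤ VH R (wt nu) := by
    rw [Submodule.span_le]
    rintro _ ⟨m, hm, rfl⟩
    have := schur_mem_VH (R := R) m
    rwa [hm.2.1] at this
  have := Submodule.add_mem _ (h3 h1) (schur_mem_VH (R := R) nu)
  rwa [sub_add_cancel] at this

theorem scale_mem_VH (g : ℕ+ → R) (n : ℕ) (f : SymFn R) (hf : f ∈ VH R n) :
    scaleHom g f ∈ VH R n := by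
  rw [VH_eq_pS, mem_pS_iff] at hf ⊢
  intro μ h
  rw [coeff_scaleHom] at h
  exact hf μ (right_ne_zero_of_mul h)

/-- pairings of `P_{r^l}` with short h's -/
theorem pairH_hF_P (q t : R) (P : Multiset ℕ+ → SymFn R) (hP : IsMacdonaldBasis q t P)
    (l : ℕ) (r : ℕ+) (m : Pt) (hm : dgF m ≤ l) :
    pairH (hF m) (P (Multiset.replicate l r)) = if m = Finsupp.single r l then 1 else 0 := by
  have h1 : pairH (hF m) (P (Multiset.replicate l r) - schur (Multiset.replicate l r)) = 0 := by
    refine span_zero _ ?_ (hP.1 _)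
    rintro _ ⟨nu, hnu, rfl⟩
    exact pairH_hF_schur_eq_zero l nu (StrictDom_rect hnu) m hm
  rw [map_sub, pairH_hF_schur_rect l r m hm] at h1
  exact sub_eq_zero.mp h1

theorem norm_ne_zero' (q t : R) (hq : ∀ k : ℕ+, 1 - q ^ (k : ℕ) ≠ 0)
    (ht : ∀ k : ℕ+, 1 - t ^ (k : ℕ) ≠ 0)
    (P : Multiset ℕ+ → SymFn R) (hP : IsMacdonaldBasis q t P)
    (l : ℕ) (r : ℕ+) :
    innerQT q t (P (Multiset.replicate l r)) (P (Multiset.replicate l r)) ≠ 0 := by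
  intro h0
  set lam := Multiset.replicate l r
  have h1 : ∀ mu, innerQT q t (P lam) (P mu) = 0 := by
    intro mu
    by_cases h : lam = mu
    · rw [← h]; exact h0
    · exact hP.2 _ _ h
  have h2 : scaleHom (fun k : ℕ+ => (1 - q ^ (k : ℕ)) / (1 - t ^ (k : ℕ))) (P lam) = 0 := by
    refine orth_zero (wt lam) _ (scale_mem_VH _ _ _ (P_mem_VH q t P hP lam)) ?_
    intro nu _
    refine span_zero _ ?_ (schur_mem_P' q t P hP nu)
    rintro _ ⟨mu, _, rfl⟩
    rw [pairH_scale]; exact h1 mu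
  have h3 : P lam = 0 := by
    ext μ
    have h4 := congrArg (coeff μ) h2
    rw [coeff_scaleHom, coeff_zero] at h4
    rw [coeff_zero]
    refine (mul_eq_zero.mp h4).resolve_left ?_
    rw [Finsupp.prod]
    refine Finset.prod_ne_zero_iff.mpr ?_
    intro k _
    exact pow_ne_zero _ (div_ne_zero (hq k) (ht k))
  have h5 := pairH_hF_P q t P hP l r (Finsupp.single r l) (by rw [dgF_single])
  rw [if_pos rfl, show P (Multiset.replicate l r) = 0 from h3, map_zero] at h5
  exact zero_ne_one h5

end


section
variable {R : Type} [Field R] [CharZero R]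

theorem short_span (l n : ℕ) (f : SymFn R) (hf : f ∈ VH R n)
    (h : ∀ nu, l < Multiset.card nu → pairH f (schur (R := R) nu) = 0) :
    f ∈ Submodule.span R (hF (R := R) '' {m | wF m = n ∧ dgF m ≤ l}) := by
  classical
  let I : Type := {m : NN n // dgF m.1 ≤ l}
  let S : (I → R) →ₗ[R] SymFn R := Fintype.linearCombination R (fun m : I => hF (R := R) m.1.1)
  have hS : ∀ c, S c = ∑ m : I, c m • hF (R := R) m.1.1 := fun c => by
    simp only [S, Fintype.linearCombination_apply]
  have hSs : ∀ c, S c ∈ Submodule.span R (hF (R := R) '' {m | wF m = n ∧ dgF m ≤ l}) := by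
    intro c
    rw [hS]
    exact Submodule.sum_mem _ fun m _ => Submodule.smul_mem _ _
      (Submodule.subset_span ⟨m.1.1, ⟨m.1.2, m.2⟩, rfl⟩)
  have hSV : ∀ c, S c ∈ VH R n := fun c =>
    Submodule.span_mono (Set.image_mono fun m hm => hm.1) (hSs c)
  have hlong : ∀ c nu, l < Multiset.card nu → pairH (S c) (schur (R := R) nu) = 0 := by
    intro c nu hnu
    rw [pairH, pairL_comm]
    refine span_zero _ ?_ (hSs c)
    rintro _ ⟨m, hm, rfl⟩
    rw [pairL_comm]
    exact pairH_hF_schur_eq_zero l nu hnu m hm.2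
  let T : (I → R) →ₗ[R] (I → R) := LinearMap.pi fun m' =>
    ((pairH (R := R)).flip (schur (ofPt m'.1.1))).comp S
  have hT : ∀ c m', T c m' = pairH (S c) (schur (ofPt m'.1.1)) := fun c m' => rfl
  have short : ∀ g : SymFn R, g ∈ VH R n →
      (∀ nu, l < Multiset.card nu → pairH g (schur (R := R) nu) = 0) →
      (∀ m' : I, pairH g (schur (ofPt m'.1.1)) = 0) → g = 0 := by
    intro g hg h1 h2
    refine orth_zero n g hg ?_
    intro nu hnu
    by_cases hc : l < Multiset.card nu
    · exact h1 nu hc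
    · have := h2 ⟨⟨toPt nu, by rw [wF_toPt, hnu]⟩, by
        show dgF (toPt nu) ≤ l
        rw [dgF_toPt]; omega⟩
      simpa only [ofPt_toPt] using this
  have hinj : Function.Injective T := by
    rw [← LinearMap.ker_eq_bot, LinearMap.ker_eq_bot']
    intro c hc
    have h1 : S c = 0 := short _ (hSV c) (hlong c) (fun m' => by rw [← hT, hc]; rfl)
    have hli : LinearIndependent R (fun m : I => hF (R := R) m.1.1) :=
      (li_hF (R := R) n).comp (fun m : I => m.1) Subtype.val_injective
    rw [hS] at h1
    funext m
    exact Fintype.linearIndependent_iff.mp hli c h1 m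
  have hsurj := LinearMap.injective_iff_surjective.mp hinj
  obtain ⟨c, hc⟩ := hsurj (fun m' => pairH f (schur (ofPt m'.1.1)))
  have h2 : f - S c = 0 := by
    refine short _ (Submodule.sub_mem _ hf (hSV c)) ?_ ?_
    · intro nu hnu
      rw [map_sub, LinearMap.sub_apply, h nu hnu, hlong c nu hnu, sub_zero]
    · intro m'
      rw [map_sub, LinearMap.sub_apply, ← hT, hc, sub_self]
  rw [sub_eq_zero.mp h2]
  exact hSs c

theorem sq_ineq (r : ℕ) (κ : Pt) : 2 * r * wF κ ≤ sqF κ + r ^ 2 * dgF κ := by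
  induction κ using Finsupp.induction_linear with
  | zero => simp
  | add f g hf hg => rw [map_add, map_add, map_add]; nlinarith
  | single k e =>
    rw [wF_single, sqF_single, dgF_single]
    have : 2 * r * (k : ℕ) ≤ (k : ℕ) ^ 2 + r ^ 2 := by
      zify
      nlinarith [sq_nonneg ((r : ℤ) - k)]
    nlinarith

theorem rect_not_UpS (l : ℕ) (r : ℕ+) (κ : Pt) (hw : wF κ = l * r) (hd : dgF κ ≤ l) :
    Finsupp.single r l ∉ UpS κ := by
  rintro ⟨_, _, h⟩
  rw [sqF_single] at h
  have := sq_ineq r κ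
  rw [hw] at this
  nlinarith [Nat.mul_le_mul_left ((r : ℕ) ^ 2) hd]

theorem phi_bF {d : ℕ+} {z : R} (hz : IsPrimitiveRoot z d) (l : ℕ) (r : ℕ+) (c : R)
    (φ : SymFn R →ₗ[R] R)
    (hφ : ∀ m, dgF m ≤ l → φ (hF m) = if m = Finsupp.single r l then c else 0)
    (κ : Pt) (hw : wF κ = l * r) (hd : dgF κ ≤ l) :
    φ (bF d κ) = if κ = Finsupp.single r l then epsQ R d (quoF d κ) * c else 0 := by
  have h := tri_bF (R := R) hz κ
  have h1 : φ (bF d κ - epsQ R d (quoF d κ) • hF κ) = 0 := by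
    refine span_zero _ ?_ h
    rintro _ ⟨m, hm, rfl⟩
    rw [hφ m (hm.2.1.trans hd), if_neg]
    rintro rfl
    exact rect_not_UpS l r κ hw hd hm
  rw [map_sub, map_smul, hφ κ hd, sub_eq_zero, smul_eq_mul] at h1
  rw [h1]
  split_ifs <;> simp

/-- weights of the dual form -/
def wB (q t : R) (m : Pt) : R := zwtH m *
  m.prod fun k e => ((1 - t ^ (k : ℕ)) / (1 - q ^ (k : ℕ))) ^ e

theorem main_coeffs (q t : R) (hq : ∀ k : ℕ+, 1 - q ^ (k : ℕ) ≠ 0)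
    (ht : ∀ k : ℕ+, 1 - t ^ (k : ℕ) ≠ 0)
    (P : Multiset ℕ+ → SymFn R) (hP : IsMacdonaldBasis q t P) (l : ℕ) (r : ℕ+)
    {d : ℕ+} {z : R} (hz : IsPrimitiveRoot z d) :
    ∃ c : NN (l * r) → R,
      Qprime q t P (Multiset.replicate l r) = ∑ κ, c κ • bF d κ.1 ∧
      (∀ κ, l < dgF κ.1 → c κ = 0) ∧
      (∀ κ, κ.1 = Finsupp.single r l → epsQ R d (quoF d κ.1) * c κ = 1) ∧
      (∀ κ : NN (l * r), dgF κ.1 ≤ l → κ.1 ≠ Finsupp.single r l →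
        pairL (wB q t) (bF d κ.1) (Qprime q t P (Multiset.replicate l r)) = 0) := by
  classical
  set lam := Multiset.replicate l r with hlam
  have hN := norm_ne_zero' q t hq ht P hP l r
  rw [← hlam] at hN
  have hQV : Qprime q t P lam ∈ VH R (l * r) := by
    have := P_mem_VH q t P hP lam
    rw [hlam, wt_replicate] at this
    exact scale_mem_VH _ _ _ (Submodule.smul_mem _ _ this)
  have hQP : ∀ mu, pairH (Qprime q t P lam) (P mu) = if lam = mu then 1 else 0 := by
    intro mu
    rw [Qprime, pairH_scale, Qfam, innerQT_eq, map_smul, LinearMap.smul_apply, ← innerQT_eq,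
      smul_eq_mul]
    split_ifs with h
    · rw [← h, inv_mul_cancel₀ hN]
    · rw [hP.2 _ _ h, mul_zero]
  have hQs : ∀ nu, l < Multiset.card nu → pairH (Qprime q t P lam) (schur (R := R) nu) = 0 := by
    intro nu hnu
    refine span_zero _ ?_ (schur_mem_P' q t P hP nu)
    rintro _ ⟨mu, hmu, rfl⟩
    rw [hQP, if_neg]
    rintro rfl
    have : Multiset.card nu ≤ Multiset.card lam := hmu
    rw [hlam, Multiset.card_replicate] at this
    omega
  have hQ1 : pairH (Qprime q t P lam) (schur (R := R) lam) = 1 := by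
    have h1 : pairH (Qprime q t P lam) (P lam - schur lam) = 0 := by
      refine span_zero _ ?_ (hP.1 _)
      rintro _ ⟨nu, hnu, rfl⟩
      exact hQs nu (StrictDom_rect hnu)
    rw [map_sub, hQP, if_pos rfl] at h1
    exact (sub_eq_zero.mp h1).symm
  have hspan := short_span l (l * r) _ hQV hQs
  have hspan2 : Qprime q t P lam ∈ Submodule.span R
      ((fun κ : NN (l * r) => bF (R := R) d κ.1) '' {κ | dgF κ.1 ≤ l}) := by
    refine Submodule.span_le.mpr ?_ hspan
    rintro _ ⟨m, hm, rfl⟩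
    refine Submodule.span_mono ?_ (hF_mem_b hz m)
    rintro _ ⟨κ, hκ, rfl⟩
    exact ⟨⟨κ, hκ.1.trans hm.1⟩, hκ.2.1.trans hm.2, rfl⟩
  obtain ⟨c, hc1, hc2⟩ := (Finsupp.mem_span_image_iff_linearCombination R).mp hspan2
  have hsum : Qprime q t P lam = ∑ κ : NN (l * r), c κ • bF d κ.1 := by
    rw [← hc2, Finsupp.linearCombination_apply, Finsupp.sum_fintype]
    simp
  have hc0 : ∀ κ, l < dgF κ.1 → c κ = 0 := by
    intro κ hκ
    by_contra hne
    have h1 := (Finsupp.mem_supported R c).mp hc1 (Finsupp.mem_support_iff.mpr hne)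
    have : dgF κ.1 ≤ l := h1
    omega
  have hb1 : ∀ κ : NN (l * r), dgF κ.1 ≤ l → pairH (bF d κ.1) (schur (R := R) lam) =
      if κ.1 = Finsupp.single r l then epsQ R d (quoF d κ.1) * 1 else 0 := by
    intro κ hκ
    exact phi_bF hz l r 1 ((pairH (R := R)).flip (schur lam))
      (fun m hm => pairH_hF_schur_rect l r m hm) κ.1 κ.2 hκ
  refine ⟨c, hsum, hc0, ?_, ?_⟩
  · intro κ hκ
    rw [hsum, map_sum, LinearMap.sum_apply, Finset.sum_eq_single κ] at hQ1
    · rw [map_smul, LinearMap.smul_apply, hb1 κ (by rw [hκ, dgF_single]), if_pos hκ, mul_one,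
        smul_eq_mul, mul_comm] at hQ1
      exact hQ1
    · intro b _ hb
      rw [map_smul, LinearMap.smul_apply]
      by_cases hbl : dgF b.1 ≤ l
      · rw [hb1 b hbl, if_neg, smul_zero]
        intro h
        exact hb (Subtype.ext (h.trans hκ.symm))
      · rw [hc0 b (by omega), zero_smul]
    · simp
  · intro κ hκ hne
    have h1 := phi_bF hz l r (innerQT q t (P lam) (P lam))⁻¹ ((pairH (R := R)).flip (Qfam q t P lam))
      (fun m hm => by
        rw [LinearMap.flip_apply, Qfam, map_smul, pairH_hF_P q t P hP l r m hm]
        split_ifs <;> simp) κ.1 κ.2 hκ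
    rw [if_neg hne, LinearMap.flip_apply, pairH, pairL_comm] at h1
    rw [pairL_comm, Qprime, ← h1]
    apply pairL_scale
    intro m
    rw [wB, mul_assoc, ← Finsupp.prod_mul]
    have : (m.prod fun k e => ((1 - t ^ (k : ℕ)) / (1 - q ^ (k : ℕ))) ^ e *
        ((1 - q ^ (k : ℕ)) / (1 - t ^ (k : ℕ))) ^ e) = 1 := by
      apply Finset.prod_eq_one
      intro k _
      beta_reduce
      rw [← mul_pow, div_mul_div_cancel₀ (hq k), div_self (ht k), one_pow]
    rw [this, mul_one]

end


section
variable {K : Type} [Field K]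
open Polynomial in
theorem matH {ι N : Type} [Fintype ι] [DecidableEq ι] [Fintype N] (x : K) (β : ι → N → K)
    (β0 : N → K)
    (dep : N → ℕ) (δ : ι → ℕ) (w : N → K[X])
    (h1 : ∀ κ μ, β κ μ ≠ 0 → δ κ ≤ dep μ)
    (h2 : ∀ κ μ, dep μ = δ κ → β κ μ * β0 μ = 0)
    (h3 : ∀ j, ∀ v : ι → K, (∀ κ, δ κ ≠ j → v κ = 0) →
      (∀ κ, δ κ = j → ∑ κ', (∑ μ, if dep μ = j then β κ μ * β κ' μ * (w μ).eval x else 0) * v κ'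
        = 0) → v = 0)
    (c : ι → RatFunc K) (c0 : K)
    (h4 : ∀ κ, ∑ μ, RatFunc.C (β κ μ) * (∑ κ', c κ' * RatFunc.C (β κ' μ) +
      RatFunc.C c0 * RatFunc.C (β0 μ)) *
      algebraMap K[X] (RatFunc K) ((Polynomial.X - Polynomial.C x) ^ dep μ * w μ) = 0) :
    ∃ (D : K[X]) (p : ι → K[X]), D.eval x ≠ 0 ∧ (∀ κ, (p κ).eval x = 0) ∧
      ∀ κ, algebraMap K[X] (RatFunc K) D * c κ = algebraMap K[X] (RatFunc K) (p κ) := by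
  classical
  set AM := algebraMap K[X] (RatFunc K) with hAM
  have hC : ∀ a : K, RatFunc.C a = AM (Polynomial.C a) := fun a => (RatFunc.algebraMap_C a).symm
  let M : Matrix ι ι K[X] := Matrix.of fun κ κ' =>
    ∑ μ, Polynomial.C (β κ μ * β κ' μ) * ((Polynomial.X - Polynomial.C x) ^ (dep μ - δ κ) * w μ)
  let M0 : ι → K[X] := fun κ =>
    ∑ μ, Polynomial.C (β κ μ * β0 μ) * ((Polynomial.X - Polynomial.C x) ^ (dep μ - δ κ) * w μ)
  have ev : ∀ κ (b : N → K), (∑ μ, Polynomial.C (β κ μ * b μ) *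
      ((Polynomial.X - Polynomial.C x) ^ (dep μ - δ κ) * w μ)).eval x =
      ∑ μ, if dep μ = δ κ then β κ μ * b μ * (w μ).eval x else 0 := by
    intro κ b
    rw [Polynomial.eval_finsetSum]
    apply Finset.sum_congr rfl
    intro μ _
    rw [Polynomial.eval_mul, Polynomial.eval_C, Polynomial.eval_mul, Polynomial.eval_pow,
      Polynomial.eval_sub, Polynomial.eval_X, Polynomial.eval_C, sub_self]
    by_cases hb : β κ μ = 0
    · simp [hb]
    · have := h1 κ μ hb
      split_ifs with h
      · rw [h, Nat.sub_self, pow_zero, one_mul]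
      · rw [zero_pow (by omega)]; ring
  have hM0 : ∀ κ, (M0 κ).eval x = 0 := by
    intro κ
    rw [ev]
    apply Finset.sum_eq_zero
    intro μ _
    split_ifs with h
    · rw [h2 κ μ h, zero_mul]
    · rfl
  have hdet : (M.det).eval x ≠ 0 := by
    have e : (M.det).eval x = (M.map (Polynomial.evalRingHom x)).det := by
      rw [← Polynomial.coe_evalRingHom, RingHom.map_det]; rfl
    rw [e]
    intro h0
    obtain ⟨v, hv, hv0⟩ := Matrix.exists_mulVec_eq_zero_iff.mpr h0
    apply hv
    have hrow : ∀ κ, ∑ κ', (∑ μ, if dep μ = δ κ then β κ μ * β κ' μ * (w μ).eval x else 0) * v κ'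
        = 0 := by
      intro κ
      have := congrFun hv0 κ
      rw [Matrix.mulVec, dotProduct] at this
      refine Eq.trans ?_ this
      apply Finset.sum_congr rfl
      intro κ' _
      rw [Matrix.map_apply, Polynomial.coe_evalRingHom]
      exact congrArg (· * v κ') (ev κ (β κ')).symm
    have key : ∀ j κ, δ κ = j → v κ = 0 := by
      intro j
      induction j using Nat.strong_induction_on with
      | _ j ih =>
        have h := h3 j (fun κ => if δ κ = j then v κ else 0) (fun κ hκ => if_neg hκ) (by
          intro κ hκ
          refine Eq.trans ?_ (hrow κ)
          apply Finset.sum_congr rfl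
          intro κ' _
          rw [hκ]
          rcases lt_trichotomy (δ κ') j with h | h | h
          · simp only [if_neg h.ne, ih _ h κ' rfl]
          · simp only [if_pos h]
          · have : (∑ μ, if dep μ = j then β κ μ * β κ' μ * (w μ).eval x else 0) = 0 := by
              apply Finset.sum_eq_zero
              intro μ _
              split_ifs with hh
              · have : β κ' μ = 0 := by
                  by_contra hb
                  have := h1 κ' μ hb
                  omega
                rw [this]; ring
              · rfl
            rw [this, zero_mul, zero_mul])
        intro κ hκ
        have := congrFun h κ
        simpa [hκ] using this
    funext κ
    exact key _ κ rfl
  -- the linear system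
  have hsys : ∀ κ, ∑ κ', AM (M κ κ') * c κ' + AM (Polynomial.C c0 * M0 κ) = 0 := by
    intro κ
    have hne : AM ((Polynomial.X - Polynomial.C x) ^ δ κ) ≠ 0 := by
      rw [hAM, Ne, map_eq_zero_iff _ (IsFractionRing.injective K[X] (RatFunc K))]
      exact pow_ne_zero _ (Polynomial.X_sub_C_ne_zero x)
    refine (mul_eq_zero.mp ?_).resolve_left hne
    rw [← h4 κ]
    have e1 : ∀ b : N → K, AM ((Polynomial.X - Polynomial.C x) ^ δ κ) * AM (∑ μ,
        Polynomial.C (β κ μ * b μ) * ((Polynomial.X - Polynomial.C x) ^ (dep μ - δ κ) * w μ)) =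
        ∑ μ, RatFunc.C (β κ μ) * RatFunc.C (b μ) *
          AM ((Polynomial.X - Polynomial.C x) ^ dep μ * w μ) := by
      intro b
      rw [← map_mul, Finset.mul_sum, map_sum]
      apply Finset.sum_congr rfl
      intro μ _
      rw [hC, hC, ← map_mul, ← map_mul]
      congr 1
      by_cases hb : β κ μ = 0
      · simp [hb]
      · have := h1 κ μ hb
        have e : (Polynomial.X - Polynomial.C x) ^ dep μ = (Polynomial.X - Polynomial.C x) ^ δ κ *
            (Polynomial.X - Polynomial.C x) ^ (dep μ - δ κ) := by
          rw [← pow_add]; congr 1; omega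
        rw [e, Polynomial.C_mul]; ring
    rw [mul_add, Finset.mul_sum]
    have e2 : ∀ κ', AM ((Polynomial.X - Polynomial.C x) ^ δ κ) * (AM (M κ κ') * c κ') =
        ∑ μ, RatFunc.C (β κ μ) * RatFunc.C (β κ' μ) *
          AM ((Polynomial.X - Polynomial.C x) ^ dep μ * w μ) * c κ' := by
      intro κ'
      rw [← mul_assoc, ← Finset.sum_mul, ← e1]; rfl
    have e3 : AM ((Polynomial.X - Polynomial.C x) ^ δ κ) * AM (Polynomial.C c0 * M0 κ) =
        RatFunc.C c0 * ∑ μ, RatFunc.C (β κ μ) * RatFunc.C (β0 μ) *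
          AM ((Polynomial.X - Polynomial.C x) ^ dep μ * w μ) := by
      rw [← e1, map_mul AM (Polynomial.C c0), ← hC]; ring
    rw [Finset.sum_congr rfl (fun κ' _ => e2 κ'), e3, Finset.sum_comm, Finset.mul_sum,
      ← Finset.sum_add_distrib]
    apply Finset.sum_congr rfl
    intro μ _
    rw [mul_add, add_mul, Finset.mul_sum, Finset.sum_mul]
    congr 1
    · apply Finset.sum_congr rfl
      intro κ' _
      ring
    · ring
  refine ⟨M.det, fun κ => -(Polynomial.C c0 * (M.adjugate.mulVec M0) κ), hdet, ?_, ?_⟩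
  · intro κ
    rw [Polynomial.eval_neg, Polynomial.eval_mul, Matrix.mulVec, dotProduct, Polynomial.eval_finsetSum,
      Finset.sum_eq_zero, mul_zero, neg_zero]
    intro κ' _
    rw [Polynomial.eval_mul, hM0, mul_zero]
  · intro κ
    have hm : (M.map AM).mulVec c = fun κ => - AM (Polynomial.C c0 * M0 κ) := by
      funext κ
      have := hsys κ
      rw [Matrix.mulVec, dotProduct]
      exact eq_neg_of_add_eq_zero_left this
    have h5 : (M.map AM).adjugate.mulVec ((M.map AM).mulVec c) = (M.map AM).det • c := by
      rw [Matrix.mulVec_mulVec, Matrix.adjugate_mul, Matrix.smul_mulVec, Matrix.one_mulVec]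
    have h6 := congrFun h5 κ
    rw [hm, Pi.smul_apply, smul_eq_mul] at h6
    have h7 : AM M.det = (M.map AM).det := by rw [RingHom.map_det]; rfl
    have h8 : (M.map AM).adjugate = M.adjugate.map AM := (RingHom.map_adjugate AM M).symm
    rw [h7, ← h6, h8, Matrix.mulVec, dotProduct, map_neg, Matrix.mulVec, dotProduct, Finset.mul_sum,
      map_sum, ← Finset.sum_neg_distrib]
    apply Finset.sum_congr rfl
    intro κ' _
    rw [Matrix.map_apply]
    simp only [map_mul]
    ring

open Polynomial in
theorem eval_of_div (x : K) (y : RatFunc K) (D p : K[X]) (hD : D.eval x ≠ 0)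
    (h : algebraMap K[X] (RatFunc K) D * y = algebraMap K[X] (RatFunc K) p) :
    RatFunc.eval (RingHom.id K) x y = p.eval x / D.eval x := by
  have hD0 : D ≠ 0 := by rintro rfl; simp at hD
  have hD1 : algebraMap K[X] (RatFunc K) D ≠ 0 := by
    rw [Ne, map_eq_zero_iff _ (IsFractionRing.injective K[X] (RatFunc K))]; exact hD0
  have hy : y = algebraMap K[X] (RatFunc K) p / algebraMap K[X] (RatFunc K) D := by
    rw [eq_div_iff hD1, mul_comm, h]
  have hd := RatFunc.denom_div_dvd p D
  rw [← hy] at hd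
  have hden : Polynomial.eval₂ (RingHom.id K) x y.denom ≠ 0 := by
    intro h0
    obtain ⟨e, he⟩ := hd
    apply hD
    rw [he, Polynomial.eval_mul]
    have : y.denom.eval x = 0 := h0
    rw [this, zero_mul]
  have h2 := RatFunc.eval_mul (f := RingHom.id K) (a := x) (x := algebraMap K[X] (RatFunc K) D)
    (y := y) (by simp) hden
  rw [h, RatFunc.eval_algebraMap, RatFunc.eval_algebraMap] at h2
  rw [eq_div_iff hD, mul_comm]
  simpa [Polynomial.eval₂_id] using h2.symm

end


section
open Polynomial in
theorem posdef {J N : Type} [Fintype J] [DecidableEq J] [Fintype N] (a : J → N → ℂ)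
    (ha : ∀ κ μ, starRingEnd ℂ (a κ μ) = a κ μ)
    (hli : ∀ v : J → ℂ, (∀ μ, ∑ κ, v κ * a κ μ = 0) → v = 0)
    (zz : N → ℝ) (hz : ∀ μ, 0 < zz μ) (v : J → ℂ)
    (h : ∀ κ, ∑ κ', (∑ μ, a κ μ * a κ' μ * (zz μ : ℂ)) * v κ' = 0) : v = 0 := by
  apply hli
  set s : N → ℂ := fun μ => ∑ κ, v κ * a κ μ with hs
  have h1 : ∑ μ, (zz μ : ℂ) * (starRingEnd ℂ (s μ) * s μ) = 0 := by
    have h2 : ∀ μ, (zz μ : ℂ) * (starRingEnd ℂ (s μ) * s μ) =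
        ∑ κ, starRingEnd ℂ (v κ) * ∑ κ', (a κ μ * a κ' μ * (zz μ : ℂ)) * v κ' := by
      intro μ
      simp only [hs, map_sum, map_mul, ha]
      rw [Finset.sum_mul_sum, Finset.mul_sum]
      apply Finset.sum_congr rfl
      intro κ _
      rw [Finset.mul_sum, Finset.mul_sum]
      apply Finset.sum_congr rfl
      intro κ' _
      ring
    simp only [h2]
    rw [Finset.sum_comm]
    apply Finset.sum_eq_zero
    intro κ _
    rw [← Finset.mul_sum]
    have h3 := h κ
    simp only [Finset.sum_mul] at h3
    rw [Finset.sum_comm, h3, mul_zero]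
  have h4 : ∑ μ, zz μ * Complex.normSq (s μ) = 0 := by
    have h5 : ((∑ μ, zz μ * Complex.normSq (s μ) : ℝ) : ℂ) = 0 := by
      rw [← h1]
      push_cast
      apply Finset.sum_congr rfl
      intro μ _
      rw [Complex.normSq_eq_conj_mul_self]
    exact_mod_cast h5
  intro μ
  have h6 := (Finset.sum_eq_zero_iff_of_nonneg (fun μ _ =>
    mul_nonneg (hz μ).le (Complex.normSq_nonneg (s μ)))).mp h4 μ (Finset.mem_univ _)
  have h7 := (mul_eq_zero.mp h6).resolve_left (hz μ).ne'
  exact Complex.normSq_eq_zero.mp h7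

open Polynomial in
theorem blockH {J N : Type} [Fintype J] [DecidableEq J] [Fintype N] (a : J → N → ℂ)
    (ha : ∀ κ μ, starRingEnd ℂ (a κ μ) = a κ μ)
    (hli : ∀ v : J → ℂ, (∀ μ, ∑ κ, v κ * a κ μ = 0) → v = 0)
    (zz : N → ℝ) (hz : ∀ μ, 0 < zz μ) (x : ℂ) (g : N → ℂ[X]) (hg : ∀ μ, (g μ).eval x ≠ 0)
    (v : J → RatFunc ℂ)
    (h : ∀ κ, ∑ κ', (∑ μ, RatFunc.C (a κ μ * a κ' μ) * (RatFunc.C ((zz μ : ℂ) * (g μ).eval x) /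
      algebraMap ℂ[X] (RatFunc ℂ) (g μ))) * v κ' = 0) : v = 0 := by
  classical
  set AM := algebraMap ℂ[X] (RatFunc ℂ) with hAM
  have hC : ∀ a : ℂ, RatFunc.C a = AM (Polynomial.C a) := fun a => (RatFunc.algebraMap_C a).symm
  have hinj : Function.Injective AM := IsFractionRing.injective ℂ[X] (RatFunc ℂ)
  have hg0 : ∀ μ, AM (g μ) ≠ 0 := by
    intro μ h0
    rw [map_eq_zero_iff _ hinj] at h0
    apply hg μ
    rw [h0, Polynomial.eval_zero]
  let B : Matrix J J ℂ[X] := Matrix.of fun κ κ' =>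
    ∑ μ, Polynomial.C (a κ μ * a κ' μ * ((zz μ : ℂ) * (g μ).eval x)) * ∏ μ' ∈ Finset.univ.erase μ, g μ'
  have hB : B.det.eval x ≠ 0 := by
    have e : (B.det).eval x = (B.map (Polynomial.evalRingHom x)).det := by
      rw [← Polynomial.coe_evalRingHom, RingHom.map_det]; rfl
    rw [e]
    intro h0
    obtain ⟨u, hu, hu0⟩ := Matrix.exists_mulVec_eq_zero_iff.mpr h0
    apply hu
    apply posdef a ha hli zz hz
    intro κ
    have hG : (∏ μ, (g μ).eval x) ≠ 0 := Finset.prod_ne_zero_iff.mpr fun μ _ => hg μ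
    refine (mul_eq_zero.mp ?_).resolve_left hG
    refine Eq.trans ?_ (congrFun hu0 κ)
    rw [Matrix.mulVec, dotProduct, Finset.mul_sum]
    apply Finset.sum_congr rfl
    intro κ' _
    rw [Matrix.map_apply, ← mul_assoc]
    congr 1
    simp only [B, Matrix.of_apply, Polynomial.coe_evalRingHom]
    rw [Polynomial.eval_finsetSum, Finset.mul_sum]
    apply Finset.sum_congr rfl
    intro μ _
    rw [Polynomial.eval_mul, Polynomial.eval_C, Polynomial.eval_prod,
      ← Finset.mul_prod_erase _ _ (Finset.mem_univ μ)]
    ring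
  have hB2 : (B.map AM).det ≠ 0 := by
    have h7 : AM B.det = (B.map AM).det := by rw [RingHom.map_det]; rfl
    rw [← h7]
    intro h0
    rw [map_eq_zero_iff _ hinj] at h0
    apply hB
    rw [h0, Polynomial.eval_zero]
  by_contra hv
  apply hB2
  rw [← Matrix.exists_mulVec_eq_zero_iff]
  refine ⟨v, hv, ?_⟩
  funext κ
  rw [Matrix.mulVec, dotProduct, Pi.zero_apply]
  have h1 := congrArg (fun y => (∏ μ, AM (g μ)) * y) (h κ)
  simp only [mul_zero] at h1
  refine Eq.trans ?_ h1
  rw [Finset.mul_sum]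
  apply Finset.sum_congr rfl
  intro κ' _
  rw [Matrix.map_apply, ← mul_assoc]
  congr 1
  simp only [B, Matrix.of_apply]
  rw [map_sum, Finset.mul_sum]
  apply Finset.sum_congr rfl
  intro μ _
  rw [map_mul, ← hC, map_prod, ← Finset.mul_prod_erase _ _ (Finset.mem_univ μ)]
  have := hg0 μ
  rw [map_mul RatFunc.C (a κ μ * a κ' μ)]
  field_simp

open Polynomial in
theorem exists_fac (d : ℕ+) (z : ℂ) (hz : IsPrimitiveRoot z d) (k : ℕ+) :
    ∃ f : ℂ[X], (1 - Polynomial.X ^ (k : ℕ) =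
      (Polynomial.X - Polynomial.C z) ^ (if (d : ℕ) ∣ (k : ℕ) then 1 else 0) * f) ∧
      f.eval z ≠ 0 := by
  by_cases h : (d : ℕ) ∣ (k : ℕ)
  · rw [if_pos h]
    have h1 : (1 - Polynomial.X ^ (k : ℕ) : ℂ[X]).IsRoot z := by
      simp [Polynomial.IsRoot, (hz.pow_eq_one_iff_dvd _).mpr h]
    obtain ⟨f, hf⟩ := Polynomial.dvd_iff_isRoot.mpr h1
    refine ⟨f, by rw [pow_one]; exact hf, ?_⟩
    intro h0
    have h2 := congrArg (fun p => (derivative p).eval z) hf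
    have hz0 : z ≠ 0 := hz.ne_zero d.ne_zero
    have hk0 : ((k : ℕ) : ℂ) ≠ 0 := by exact_mod_cast k.ne_zero
    simp only [Polynomial.derivative_sub, Polynomial.derivative_one, Polynomial.derivative_X_pow,
      Polynomial.derivative_mul, Polynomial.derivative_X, Polynomial.derivative_C,
      Polynomial.eval_add, Polynomial.eval_sub, Polynomial.eval_mul, Polynomial.eval_X,
      Polynomial.eval_C, Polynomial.eval_pow, Polynomial.eval_zero, Polynomial.eval_one,
      h0, sub_self, zero_mul, mul_zero, add_zero, zero_sub, Polynomial.eval_neg, neg_eq_zero] at h2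
    exact mul_ne_zero hk0 (pow_ne_zero _ hz0) h2
  · rw [if_neg h]
    refine ⟨1 - Polynomial.X ^ (k : ℕ), by rw [pow_zero, one_mul], ?_⟩
    simp only [Polynomial.eval_sub, Polynomial.eval_one, Polynomial.eval_pow, Polynomial.eval_X]
    intro h0
    exact h ((hz.pow_eq_one_iff_dvd _).mp (sub_eq_zero.mp h0).symm)

end

section
variable {R R' : Type} [Field R] [CharZero R] [Field R'] [CharZero R']

theorem map_plethP (φ : R →+* R') (d : ℕ+) (f : SymFn R) :
    MvPolynomial.map φ (plethP d f) = plethP d (MvPolynomial.map φ f) := by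
  induction f using MvPolynomial.induction_on with
  | C a => simp [plethP]
  | add p q hp hq => simp only [map_add, hp, hq]
  | mul_X p n hp => simp only [map_mul, hp, plethP_X, MvPolynomial.map_X]

theorem map_hF (φ : R →+* R') (m : Pt) : MvPolynomial.map φ (hF (R := R) m) = hF m := by
  unfold hF
  rw [Finsupp.prod, Finsupp.prod, map_prod]
  apply Finset.prod_congr rfl
  intro k _
  rw [map_pow, map_hsym]

theorem map_bF (φ : R →+* R') (d : ℕ+) (κ : Pt) :
    MvPolynomial.map φ (bF (R := R) d κ) = bF d κ := by
  rw [bF, map_mul, map_plethP, map_hF, map_hF, bF]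

theorem coeff_bF (φ : R →+* R') (d : ℕ+) (κ μ : Pt) :
    coeff μ (bF (R := R') d κ) = φ (coeff μ (bF (R := R) d κ)) := by
  rw [← map_bF φ, coeff_map]

end

/-! ### Weights -/
section
theorem one_sub_X_pow_ne {K : Type} [Field K] (k : ℕ+) :
    (1 - (RatFunc.X : RatFunc K) ^ (k : ℕ)) ≠ 0 := by
  intro h
  have h1 : algebraMap (Polynomial K) (RatFunc K) (1 - Polynomial.X ^ (k : ℕ)) = 0 := by
    rw [map_sub, map_one, map_pow, RatFunc.algebraMap_X]; exact h
  rw [map_eq_zero_iff _ (RatFunc.algebraMap_injective K)] at h1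
  have h2 := congrArg (Polynomial.eval 0) h1
  simp [k.ne_zero] at h2

theorem qK_ne (k : ℕ+) : 1 - qK ^ (k : ℕ) ≠ 0 := one_sub_X_pow_ne k
theorem tF_ne (k : ℕ+) : 1 - tF ^ (k : ℕ) ≠ 0 := one_sub_X_pow_ne k
theorem qF_eq (k : ℕ+) : 1 - qF ^ (k : ℕ) = RatFunc.C (1 - qK ^ (k : ℕ)) := by
  rw [map_sub, map_one, map_pow, qF]
theorem qF_ne (k : ℕ+) : 1 - qF ^ (k : ℕ) ≠ 0 := by
  rw [qF_eq]
  intro h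
  rw [map_eq_zero_iff _ (RingHom.injective _)] at h
  exact qK_ne k h

theorem pow_depF {A : Type} [CommMonoid A] (d : ℕ) (a : A) (μ : Pt) :
    a ^ (depF d μ) = μ.prod fun k e => (a ^ (if d ∣ (k : ℕ) then 1 else 0)) ^ e := by
  rw [depF, Finsupp.weight_apply, Finsupp.sum, Finsupp.prod, ← Finset.prod_pow_eq_pow_sum]
  apply Finset.prod_congr rfl
  intro k _
  rw [← pow_mul, smul_eq_mul, mul_comm]

theorem map_zwtH {R R' : Type} [Field R] [Field R'] (φ : R →+* R') (μ : Pt) :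
    φ (zwtH μ) = zwtH μ := by
  simp [zwtH]

def fmu (f : ℕ+ → Polynomial ℂ) (μ : Pt) : Polynomial ℂ := μ.prod fun k e => f k ^ e
def qinv (μ : Pt) : KK := μ.prod fun k e => ((1 - qK ^ (k : ℕ))⁻¹) ^ e
def wHat (f : ℕ+ → Polynomial ℂ) (μ : Pt) : Polynomial KK :=
  Polynomial.C (zwtH μ * qinv μ) * (fmu f μ).map RatFunc.C

theorem fmu_eval (f : ℕ+ → Polynomial ℂ) (z : ℂ) (hf : ∀ k, (f k).eval z ≠ 0) (μ : Pt) :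
    (fmu f μ).eval z ≠ 0 := by
  rw [fmu, Finsupp.prod, Polynomial.eval_prod, Finset.prod_ne_zero_iff]
  intro k _
  rw [Polynomial.eval_pow]
  exact pow_ne_zero _ (hf k)

theorem wB_eq (f : ℕ+ → Polynomial ℂ) (d : ℕ) (z : ℂ)
    (hf : ∀ k : ℕ+, 1 - Polynomial.X ^ (k : ℕ) =
      (Polynomial.X - Polynomial.C z) ^ (if d ∣ (k : ℕ) then 1 else 0) * f k) (μ : Pt) :
    wB qF tF μ = algebraMap (Polynomial KK) FF
      ((Polynomial.X - Polynomial.C (RatFunc.C z)) ^ depF d μ * wHat f μ) := by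
  have h1 : ∀ k : ℕ+, (1 - tF ^ (k : ℕ)) = algebraMap (Polynomial KK) FF
      ((Polynomial.X - Polynomial.C (RatFunc.C z)) ^ (if d ∣ (k : ℕ) then 1 else 0) *
        (f k).map RatFunc.C) := by
    intro k
    have h := congrArg (Polynomial.map (RatFunc.C : ℂ →+* KK)) (hf k)
    rw [Polynomial.map_mul, Polynomial.map_pow, Polynomial.map_sub, Polynomial.map_sub,
      Polynomial.map_X, Polynomial.map_C, Polynomial.map_one, Polynomial.map_pow,
      Polynomial.map_X] at h
    rw [← h, map_sub, map_one, map_pow, RatFunc.algebraMap_X, tF]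
  rw [wHat, pow_depF, fmu, qinv, wB]
  simp only [Finsupp.prod]
  rw [Polynomial.map_prod, map_mul Polynomial.C, map_mul, map_mul, map_mul, RatFunc.algebraMap_C, map_zwtH,
    RatFunc.algebraMap_C, map_prod, map_prod, map_prod]
  rw [← mul_assoc, mul_left_comm, mul_comm (zwtH μ), mul_comm (zwtH μ)]
  rw [mul_right_comm (_ * _) (zwtH μ)]
  congr 1
  rw [← Finset.prod_mul_distrib, ← Finset.prod_mul_distrib]
  apply Finset.prod_congr rfl
  intro k _
  rw [h1, qF_eq, Polynomial.map_pow, map_mul, map_pow, map_pow, map_pow, map_pow RatFunc.C, map_inv₀, ← mul_pow,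
    map_pow, ← mul_pow]
  congr 1
  rw [div_eq_mul_inv]
  ring

theorem wHat_eval (f : ℕ+ → Polynomial ℂ) (d : ℕ) (z : ℂ)
    (hf : ∀ k : ℕ+, 1 - Polynomial.X ^ (k : ℕ) =
      (Polynomial.X - Polynomial.C z) ^ (if d ∣ (k : ℕ) then 1 else 0) * f k)
    (hf0 : ∀ k, (f k).eval z ≠ 0) (μ : Pt) :
    (wHat f μ).eval (RatFunc.C z) * (qK - RatFunc.C z) ^ depF d μ =
      zwtH μ * (RatFunc.C ((fmu f μ).eval z) / algebraMap (Polynomial ℂ) KK (fmu f μ)) := by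
  have h1 : ∀ k : ℕ+, (1 - qK ^ (k : ℕ)) =
      (qK - RatFunc.C z) ^ (if d ∣ (k : ℕ) then 1 else 0) * algebraMap (Polynomial ℂ) KK (f k) := by
    intro k
    have h := congrArg (algebraMap (Polynomial ℂ) KK) (hf k)
    rw [map_sub, map_one, map_pow, RatFunc.algebraMap_X, map_mul, map_pow, map_sub,
      RatFunc.algebraMap_X, RatFunc.algebraMap_C] at h
    exact h
  have h2 : qinv μ * (qK - RatFunc.C z) ^ depF d μ * algebraMap (Polynomial ℂ) KK (fmu f μ) = 1 := by
    rw [pow_depF, qinv, fmu]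
    simp only [Finsupp.prod]
    rw [map_prod, ← Finset.prod_mul_distrib, ← Finset.prod_mul_distrib]
    apply Finset.prod_eq_one
    intro k _
    rw [map_pow, ← mul_pow, ← mul_pow, mul_assoc, ← h1, inv_mul_cancel₀ (qK_ne k), one_pow]
  have h3 : algebraMap (Polynomial ℂ) KK (fmu f μ) ≠ 0 := by
    intro h; rw [h, mul_zero] at h2; exact zero_ne_one h2
  have h4 : ((fmu f μ).map (RatFunc.C : ℂ →+* KK)).eval (RatFunc.C z) =
      RatFunc.C ((fmu f μ).eval z) := by
    rw [Polynomial.eval_map, Polynomial.eval₂_hom]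
  rw [wHat, Polynomial.eval_mul, Polynomial.eval_C, h4, ← mul_div_assoc, eq_div_iff h3]
  linear_combination (zwtH μ * RatFunc.C ((fmu f μ).eval z)) * h2
end

section
variable {R : Type} [Field R] [CharZero R]
theorem block_li_sub {J : Type} [Fintype J] {d : ℕ+} {z : R} (hz : IsPrimitiveRoot z d) (n j : ℕ)
    (e : J → NN n) (he : Function.Injective e) (hdep : ∀ i, depth d (e i).1 = j) (v : J → R)
    (h : ∀ μ, depF d μ = j → ∑ i, v i * coeff μ (bF (R := R) d (e i).1) = 0) : v = 0 := by
  have h1 : Function.extend e v 0 = 0 := by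
    apply block_li hz n j
    · intro κ hκ
      rw [Function.extend_apply']
      · rfl
      · rintro ⟨i, rfl⟩
        exact hκ (hdep i)
    · intro μ hμ
      refine Eq.trans ?_ (h μ hμ)
      rw [coeff_sum]
      symm
      apply Finset.sum_of_injOn e he.injOn (fun _ _ => Finset.mem_coe.mpr (Finset.mem_univ _))
      · intro κ _ hκ
        rw [Function.extend_apply']
        · simp
        · rintro ⟨i, rfl⟩
          exact hκ ⟨i, by simp, rfl⟩
      · intro i _
        rw [he.extend_apply, coeff_smul, smul_eq_mul]
  funext i
  have := congrFun h1 (e i)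
  rwa [he.extend_apply] at this

theorem coeff_bF_wt (d : ℕ+) (κ μ : Pt) (h : coeff μ (bF (R := R) d κ) ≠ 0) :
    wF μ = wF κ ∧ depth d κ ≤ depF d μ :=
  (mem_pS_iff _ _).mp (bF_mem_dS (R := R) d κ) μ h

theorem dgF_eq_zero (m : Pt) (h : dgF m = 0) : m = 0 := by
  by_contra hm
  obtain ⟨k, hk⟩ := Finsupp.ne_iff.mp hm
  have : m = (m - Finsupp.single k 1) + Finsupp.single k 1 := by
    rw [tsub_add_cancel_of_le]
    rw [Finsupp.single_le_iff]
    exact Nat.one_le_iff_ne_zero.mpr hk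
  rw [this, map_add, dgF_single] at h
  omega

theorem quoF_single (d r : ℕ+) (m : ℕ) :
    quoF d (Finsupp.single r (d * m)) = Finsupp.single r m := by
  rw [quoF, Finsupp.mapRange_single, Nat.mul_div_cancel_left _ d.pos]

theorem single_eq (d r : ℕ+) (m : ℕ) :
    (Finsupp.single r (d * m) : Pt) = (d : ℕ) • Finsupp.single r m := by
  rw [Finsupp.smul_single, smul_eq_mul]

theorem h2_aux (d r : ℕ+) (m : ℕ) (κ μ : Pt) (hd : dgF κ ≤ d * m)
    (hne : κ ≠ Finsupp.single r (d * m)) (hμ : depF d μ = depth d κ) :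
    coeff μ (bF (R := R) d κ) * coeff μ (bF (R := R) d (Finsupp.single r (d * m))) = 0 := by
  by_contra h
  have ha := left_ne_zero_of_mul h
  have hb := right_ne_zero_of_mul h
  have h1 := (coeff_bF_wt d _ _ hb).2
  rw [depth, quoF_single, dgF_single, hμ] at h1
  have h2 := congrArg dgF (qr_eq d κ)
  rw [map_add, map_nsmul, smul_eq_mul] at h2
  change d * depth d κ + _ = _ at h2
  have h3 : depth d κ = m := by
    apply le_antisymm _ h1
    have : (d : ℕ) * depth d κ ≤ d * m := by omega
    exact Nat.le_of_mul_le_mul_left this d.pos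
  have h4 : remF d κ = 0 := by
    apply dgF_eq_zero
    rw [h3] at h2
    omega
  have h5 : κ = (d : ℕ) • quoF d κ := by
    conv_lhs => rw [← qr_eq d κ, h4, add_zero]
  have h6 : μ = dmul d (quoF d κ) := by
    apply bF_lead (R := R)
    · rw [← h5]; exact ha
    · rw [hμ, depth]
  have h7 : μ = dmul d (Finsupp.single r m) := by
    apply bF_lead (R := R)
    · rw [← single_eq]; exact hb
    · rw [dgF_single, hμ, h3]
  have h8 := dmul_inj d (h6.symm.trans h7)
  apply hne
  rw [h5, h8, single_eq]

theorem bF_rect (d r : ℕ+) (m : ℕ) :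
    bF (R := R) d (Finsupp.single r (d * m)) = pleth ((X d : SymFn R) ^ m) (hsym (R := R) r) := by
  have h : remF d (Finsupp.single r (d * m)) = 0 := by
    ext k
    rw [remF_apply, Finsupp.single_apply]
    split_ifs <;> simp
  rw [bF, quoF_single, h, hF_zero, mul_one, hF_single, pleth, map_pow, map_pow, aeval_X]

theorem epsQ_rect (d r : ℕ+) (m : ℕ) :
    epsQ R d (Finsupp.single r m) = (-1) ^ ((r : ℕ) * m * (d - 1)) := by
  classical
  rw [epsQ]
  by_cases hm : m = 0
  · subst hm; simp
  · rw [Finsupp.support_single_ne_zero _ hm, Finset.prod_singleton, Finsupp.single_eq_same,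
      ← pow_mul]
    congr 1; ring

theorem pairL_wt (w : Pt → R) (n : ℕ) (f g : SymFn R) (hf : ∀ μ, coeff μ f ≠ 0 → wF μ = n) :
    pairL w f g = ∑ μ : NN n, coeff μ.1 f * coeff μ.1 g * w μ.1 := by
  rw [pairL_eq_sum]
  have hi : Function.Injective (Subtype.val : NN n → Pt) := Subtype.val_injective
  refine Eq.trans ?_ (Finset.sum_map Finset.univ ⟨_, hi⟩
    (fun μ => coeff μ f * coeff μ g * w μ))
  apply Finset.sum_subset
  · intro μ hμ
    rw [Finset.mem_map]
    exact ⟨⟨μ, hf μ (mem_support_iff.mp hμ)⟩, Finset.mem_univ _, rfl⟩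
  · intro μ _ hμ
    rw [notMem_support_iff.mp hμ, zero_mul, zero_mul]
end

theorem coeff_specT (c : KK) (f : SymFn FF) (μ : Pt) :
    coeff μ (specT c f) = evalT c (coeff μ f) := by
  classical
  rw [specT, coeff_sum]
  simp only [coeff_monomial]
  rw [Finset.sum_ite_eq']
  split_ifs with h
  · rfl
  · rw [notMem_support_iff.mp h, evalT, RatFunc.eval_zero]

section
theorem final_aux (r d : ℕ+) (m : ℕ) (zeta : ℂ) (hzeta : IsPrimitiveRoot zeta d)
    (P : Multiset ℕ+ → SymFn FF) (hP : IsMacdonaldBasis qF tF P) :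
    specT (RatFunc.C zeta) (Qprime qF tF P (Multiset.replicate (d * m) r)) =
      ((-1 : KK) ^ ((r : ℕ) * m * (d - 1))) • bF (R := KK) d (Finsupp.single r (d * m)) := by
  classical
  set l : ℕ := d * m with hl
  set n : ℕ := l * r with hn
  choose f hf hf0 using exists_fac d zeta hzeta
  have hzK : IsPrimitiveRoot (RatFunc.C zeta : KK) d :=
    hzeta.map_of_injective (RingHom.injective _)
  have hzF : IsPrimitiveRoot (RatFunc.C (RatFunc.C zeta) : FF) d :=
    hzK.map_of_injective (RingHom.injective _)
  obtain ⟨c, hc1, hc2, hc3, hc4⟩ := main_coeffs qF tF qF_ne tF_ne P hP l r hzF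
  set Q := Qprime qF tF P (Multiset.replicate l r) with hQ
  let κ0 : NN n := ⟨Finsupp.single r l, wF_single r l⟩
  let ι := {κ : NN n // dgF κ.1 ≤ l ∧ κ.1 ≠ Finsupp.single r l}
  set x : KK := RatFunc.C zeta with hx
  let bC : Pt → Pt → ℂ := fun κ μ => coeff μ (bF (R := ℂ) d κ)
  let β : ι → NN n → KK := fun κ μ => RatFunc.C (bC κ.1.1 μ.1)
  let β0 : NN n → KK := fun μ => RatFunc.C (bC κ0.1 μ.1)
  let c0 : KK := (-1 : KK) ^ ((r : ℕ) * m * (d - 1))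
  have hbF : ∀ κ μ, coeff μ (bF (R := FF) d κ) = RatFunc.C (RatFunc.C (bC κ μ)) := fun κ μ => by
    rw [coeff_bF (RatFunc.C : KK →+* FF), coeff_bF (RatFunc.C : ℂ →+* KK)]
  have hc0 : c κ0 = RatFunc.C c0 := by
    have h := hc3 κ0 rfl
    have h1 : quoF d κ0.1 = Finsupp.single r m := quoF_single d r m
    rw [h1, epsQ_rect] at h
    have h2 : RatFunc.C c0 = (-1 : FF) ^ ((r : ℕ) * m * (d - 1)) := by
      simp [c0]
    have h3 : (-1 : FF) ^ ((r : ℕ) * m * (d - 1)) * (-1 : FF) ^ ((r : ℕ) * m * (d - 1)) = 1 := by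
      rw [← mul_pow]; simp
    rw [h2]
    exact mul_left_cancel₀ (left_ne_zero_of_mul_eq_one h3) (h.trans h3.symm)
  have hcoef : ∀ μ : NN n, coeff μ.1 Q =
      ∑ κ : ι, c κ.1 * RatFunc.C (β κ μ) + RatFunc.C c0 * RatFunc.C (β0 μ) := by
    intro μ
    have h1 : coeff μ.1 Q = ∑ κ : NN n, c κ * RatFunc.C (RatFunc.C (bC κ.1 μ.1)) := by
      rw [hc1, coeff_sum]
      apply Finset.sum_congr rfl
      intro κ _
      rw [coeff_smul, smul_eq_mul, hbF]
    rw [h1, ← Finset.sum_erase_add _ _ (Finset.mem_univ κ0), hc0]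
    congr 1
    symm
    apply Finset.sum_of_injOn (fun κ : ι => κ.1) Subtype.val_injective.injOn
    · intro κ _
      rw [Finset.mem_coe, Finset.mem_erase]
      exact ⟨fun h => κ.2.2 (congrArg Subtype.val h), Finset.mem_univ _⟩
    · intro κ hκ hκ2
      rw [Finset.mem_erase] at hκ
      have : l < dgF κ.1 := by
        by_contra hlt
        exact hκ2 ⟨⟨κ, not_lt.mp hlt, fun h => hκ.1 (Subtype.ext h)⟩, by simp, rfl⟩
      rw [hc2 κ this, zero_mul]
    · intro κ _
      rfl
  have hmat := matH (K := KK) (ι := ι) (N := NN n) x β β0 (fun μ => depF d μ.1)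
    (fun κ => depth d κ.1.1) (fun μ => wHat f μ.1) ?_ ?_ ?_ (fun κ => c κ.1) c0 ?_
  · obtain ⟨D, p, hD, hp, hDp⟩ := hmat
    ext μ
    rw [coeff_specT, evalT, coeff_smul, smul_eq_mul, coeff_bF (RatFunc.C : ℂ →+* KK)]
    by_cases hμ : wF μ = n
    · have h1 : algebraMap (Polynomial KK) FF D * coeff μ Q = algebraMap (Polynomial KK) FF
          (∑ κ : ι, p κ * Polynomial.C (β κ ⟨μ, hμ⟩) +
            D * Polynomial.C (c0 * β0 ⟨μ, hμ⟩)) := by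
        rw [show coeff μ Q = _ from hcoef ⟨μ, hμ⟩, map_add, map_sum, mul_add, Finset.mul_sum,
          map_mul, RatFunc.algebraMap_C, map_mul RatFunc.C]
        congr 1
        apply Finset.sum_congr rfl
        intro κ _
        rw [← mul_assoc, hDp, map_mul, RatFunc.algebraMap_C]
      rw [eval_of_div x _ D _ hD h1, Polynomial.eval_add, Polynomial.eval_mul,
        Polynomial.eval_C, Polynomial.eval_finsetSum]
      rw [Finset.sum_eq_zero, zero_add, mul_div_cancel_left₀ _ hD]
      intro κ _
      rw [Polynomial.eval_mul, hp, zero_mul]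
    · have h0 : ∀ κ : Pt, wF κ = n → bC κ μ = 0 := by
        intro κ hκ
        by_contra h
        exact hμ ((coeff_bF_wt d κ μ h).1.trans hκ)
      have h1 : coeff μ Q = 0 := by
        rw [hc1, coeff_sum]
        apply Finset.sum_eq_zero
        intro κ _
        rw [coeff_smul, hbF, h0 κ.1 κ.2, map_zero, map_zero, smul_zero]
      have h2 := h0 κ0.1 κ0.2
      change coeff μ (bF (R := ℂ) d (Finsupp.single r l)) = 0 at h2
      rw [h1, h2, RatFunc.eval_zero, map_zero, mul_zero]
  · intro κ μ h
    have h1 : bC κ.1.1 μ.1 ≠ 0 := fun h0 => h (by simp [β, h0])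
    exact (coeff_bF_wt d _ _ h1).2
  · intro κ μ h
    have h1 := h2_aux (R := ℂ) d r m κ.1.1 μ.1 κ.2.1 κ.2.2 h
    have h2 := congrArg (RatFunc.C : ℂ →+* KK) h1
    rw [map_mul, map_zero] at h2
    exact h2
  · intro j v hv h
    let J := {κ : ι // depth d κ.1.1 = j}
    let e : J → NN n := fun κ => κ.1.1
    have he : Function.Injective e := Subtype.val_injective.comp Subtype.val_injective
    have hb := blockH (J := J) (N := NN n)
      (fun κ μ => if depF d μ.1 = j then bC κ.1.1.1 μ.1 else 0) ?_ ?_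
      (fun μ => zwtH (R := ℝ) μ.1) ?_ zeta (fun μ => fmu f μ.1)
      (fun μ => fmu_eval f zeta hf0 μ.1) (fun κ => v κ.1) ?_
    · funext κ
      by_cases hκ : depth d κ.1.1 = j
      · exact congrFun hb ⟨κ, hκ⟩
      · exact hv κ hκ
    · intro κ μ
      split_ifs
      · exact (coeff_bF (starRingEnd ℂ) d κ.1.1.1 μ.1).symm
      · exact map_zero _
    · intro u hu
      apply block_li_sub (d := d) hzeta n j e he (fun κ => κ.2)
      intro μ hμ
      by_cases hw : wF μ = n
      · have := hu ⟨μ, hw⟩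
        simp only [hμ, if_true] at this
        exact this
      · apply Finset.sum_eq_zero
        intro κ _
        by_contra hne
        exact hw ((coeff_bF_wt d _ _ (right_ne_zero_of_mul hne)).1.trans (e κ).2)
    · intro μ
      rw [zwtH]
      apply Finset.prod_pos
      intro k _
      have := Nat.factorial_pos (μ.1 k)
      have := k.pos
      positivity
    · intro κ
      have hk := congrArg (fun y => (qK - RatFunc.C zeta) ^ j * y) (h κ.1 κ.2)
      simp only [mul_zero] at hk
      refine Eq.trans ?_ hk
      rw [Finset.mul_sum]
      apply Finset.sum_of_injOn (fun κ : J => κ.1) Subtype.val_injective.injOn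
        (fun _ _ => Finset.mem_coe.mpr (Finset.mem_univ _))
      · intro κ' _ hκ'
        rw [hv κ' (fun h => hκ' ⟨⟨κ', h⟩, by simp, rfl⟩), mul_zero, mul_zero]
      · intro κ' _
        rw [← mul_assoc, Finset.mul_sum]
        congr 1
        apply Finset.sum_congr rfl
        intro μ _
        by_cases hμ : depF d μ.1 = j
        · have hw := wHat_eval f d zeta hf hf0 μ.1
          rw [hμ] at hw
          simp only [hμ, if_true]
          have hz : (RatFunc.C ((zwtH (R := ℝ) μ.1 : ℝ) : ℂ) : KK) = zwtH μ.1 := by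
            rw [← map_zwtH (RatFunc.C : ℂ →+* KK), ← map_zwtH Complex.ofRealHom]
            rfl
          rw [map_mul RatFunc.C, map_mul RatFunc.C, hz, mul_div_assoc, ← hw]
          simp only [β]
          ring
        · simp [hμ]
  · intro κ
    have h1 := hc4 κ.1 κ.2.1 κ.2.2
    rw [pairL_wt (wB qF tF) n _ _ (fun μ hμ => (coeff_bF_wt d _ _ hμ).1.trans κ.1.2)] at h1
    refine Eq.trans ?_ h1
    apply Finset.sum_congr rfl
    intro μ _
    rw [hbF, hcoef, wB_eq f d zeta hf]
end

theorem final_aux2 (r d : ℕ+) (m : ℕ) (zeta : ℂ) (hzeta : IsPrimitiveRoot zeta d)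
    (P : Multiset ℕ+ → SymFn FF) (hP : IsMacdonaldBasis qF tF P) :
    specT (RatFunc.C zeta) (Qprime qF tF P (Multiset.replicate (d * m) r)) =
      ((-1 : KK) ^ ((r : ℕ) * (d * m) * (d - 1) / d)) •
        pleth ((X d : SymFn KK) ^ (d * m / d : ℕ)) (hsym (R := KK) r) := by
  rw [final_aux r d m zeta hzeta P hP, bF_rect, Nat.mul_div_cancel_left _ d.pos]
  congr 2
  symm
  apply Nat.div_eq_of_eq_mul_right d.pos
  ring

/-- **Generalized plethystic formula for `Q'` at a `d`-th root of unity, `d ∣ l`**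
(Proposition 6.2 of the paper).  Let `r, l` be positive integers, `d ∣ l`, and `ζ_d` a
primitive `d`-th root of unity.  Then
`Q'_{(r^l)}(x; q, ζ_d) = (-1)^{rl(d-1)/d} (p_d^{l/d} ∘ h_r)(x)`. -/
theorem Qprime_rectangle_dth_root_of_unity
    (l r d : ℕ) (hl : 0 < l) (hr : 0 < r) (hd : 0 < d) (hdl : d ∣ l)
    (zeta : ℂ) (hzeta : IsPrimitiveRoot zeta d)
    (P : Multiset ℕ+ → SymFn FF) (hP : IsMacdonaldBasis qF tF P) :
    specT (RatFunc.C zeta) (Qprime qF tF P (Multiset.replicate l ⟨r, hr⟩)) =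
      ((-1 : KK) ^ (r * l * (d - 1) / d)) •
        pleth ((X (⟨d, hd⟩ : ℕ+) : SymFn KK) ^ (l / d)) (hsym (R := KK) r) := by
  obtain ⟨m, rfl⟩ := hdl
  exact final_aux2 ⟨r, hr⟩ ⟨d, hd⟩ m zeta hzeta P hP
end
end

section
/- Let τ be a cyclic permutation of length k, Γ the cyclic subgroup of the symmetric group S_k generated by τ, and j a nonnegative integer less than k. Then the Frobenius characteristic of the representation of S_k induced from the one-dimensional representation γ_j : τ ↦ ζ_k^j of Γ equals l_k^{(j)}(x) = (1/k) · Σ_{d | k} c(j,d) · p_d^{k/d}(x). -/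
open MvPolynomial

noncomputable section

open MvPolynomial

/-- `p_m = ∏ p_d` over a multiset `m` of natural numbers (over `ℂ`). -/
def pPartsC (m : Multiset ℕ) : SymFn ℂ := (m.map fun d => pN (R := ℂ) d).prod

/-- The Frobenius characteristic of a class function `χ` on `S_k`:
`(1/k!) ∑_{σ ∈ S_k} χ(σ) p_{cycle type(σ)}`. -/
def frobChar (k : ℕ) (chi : Equiv.Perm (Fin k) → ℂ) : SymFn ℂ :=
  ((Nat.factorial k : ℂ))⁻¹ • ∑ σ : Equiv.Perm (Fin k), chi σ • pPartsC σ.partition.parts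

/-- The extension by zero to `S_k` of the one-dimensional character `γ_j : τ^m ↦ ζ^{jm}`
of the cyclic subgroup generated by `τ` (for `τ` of order `k`, the exponent `m` with
`0 ≤ m < k` is unique). -/
def cyclicCharExt (k : ℕ) (tau : Equiv.Perm (Fin k)) (zeta : ℂ) (j : ℕ)
    (g : Equiv.Perm (Fin k)) : ℂ :=
  ∑ m ∈ Finset.range k, if g = tau ^ m then zeta ^ (j * m) else 0

/-- The character of the representation of `S_k` induced from the character `γ_j` of the
cyclic subgroup `Γ = ⟨τ⟩`, by the Frobenius formula
`ind(σ) = (1/|Γ|) ∑_{x ∈ S_k} γ_j°(x σ x⁻¹)`. -/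
def inducedCyclicChar (k : ℕ) (tau : Equiv.Perm (Fin k)) (zeta : ℂ) (j : ℕ)
    (σ : Equiv.Perm (Fin k)) : ℂ :=
  ((Nat.card (Subgroup.zpowers tau) : ℂ))⁻¹ *
    ∑ x : Equiv.Perm (Fin k), cyclicCharExt k tau zeta j (x * σ * x⁻¹)

theorem parts_of_period {k : ℕ} (hk : 0 < k) (σ : Equiv.Perm (Fin k)) (d : ℕ) 
    (h : ∀ (x : Fin k) (n : ℕ), (σ ^ n) x = x ↔ d ∣ n) :
    σ.partition.parts = Multiset.replicate (k / d) d := by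
  have x0 : Fin k := ⟨0, hk⟩
  have hσ : σ ^ d = 1 := by
    ext x
    have := (h x d).2 dvd_rfl
    simp [this]
  have hall : ∀ n ∈ σ.partition.parts, n = d := by
    intro n hn
    rw [Equiv.Perm.parts_partition, Multiset.mem_add] at hn
    rcases hn with hn | hn
    · apply Nat.dvd_antisymm
      · exact (Equiv.Perm.dvd_of_mem_cycleType hn).trans (orderOf_dvd_of_pow_eq_one hσ)
      · rw [Equiv.Perm.cycleType_def, Multiset.mem_map] at hn
        obtain ⟨c, hc, rfl⟩ := hn
        have hc' : c ∈ σ.cycleFactorsFinset := hc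
        have hcyc := (Equiv.Perm.mem_cycleFactorsFinset_iff.1 hc').1
        obtain ⟨x, hx⟩ := Finset.card_pos.1 (lt_trans zero_lt_one hcyc.two_le_card_support |>.trans_le le_rfl)
        have hcx := Equiv.Perm.cycle_is_cycleOf hx hc'
        rw [← h x]
        have h1 : (c ^ c.support.card) x = x := by
          rw [← hcyc.orderOf, pow_orderOf_eq_one]; rfl
        have h2 := Equiv.Perm.cycleOf_pow_apply_self σ x c.support.card
        rw [← hcx] at h2
        simpa using h2.symm.trans h1
    · obtain ⟨hne, rfl⟩ := Multiset.mem_replicate.1 hn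
      have : ∃ x, x ∉ σ.support := by
        by_contra hcon
        push Not at hcon
        apply hne
        rw [Finset.eq_univ_iff_forall.2 hcon]
        simp
      obtain ⟨x, hx⟩ := this
      have := (h x 1).1 (by simpa using hx)
      exact (Nat.dvd_one.1 this).symm
  have hrep := Multiset.eq_replicate_card.2 hall
  have hsum := σ.partition.parts_sum
  rw [hrep] at hsum
  simp only [Multiset.sum_replicate, smul_eq_mul, Fintype.card_fin] at hsum
  have hd : 0 < d := by
    rcases Nat.eq_zero_or_pos d with rfl | hd
    · omega
    · exact hd
  have hq : k / d = σ.partition.parts.card := by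
    apply Nat.div_eq_of_eq_mul_left hd hsum.symm
  rw [hq]
  exact hrep

theorem parts_conj {k : ℕ} (x g : Equiv.Perm (Fin k)) :
    (x⁻¹ * g * x).partition.parts = g.partition.parts := by
  have : (x⁻¹ * g * x).partition = g.partition := by
    rw [← Equiv.Perm.partition_eq_of_isConj, isConj_comm, isConj_iff]
    exact ⟨x⁻¹, by simp⟩
  rw [this]

theorem frob_step (k : ℕ) (tau : Equiv.Perm (Fin k)) (zeta : ℂ) (j : ℕ)
    (hc : Nat.card (Subgroup.zpowers tau) = k) :
    frobChar k (inducedCyclicChar k tau zeta j) =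
      (k : ℂ)⁻¹ • ∑ m ∈ Finset.range k, zeta ^ (j * m) • pPartsC (tau ^ m).partition.parts := by
  have key : ∀ x : Equiv.Perm (Fin k),
      ∑ σ : Equiv.Perm (Fin k), cyclicCharExt k tau zeta j (x * σ * x⁻¹) •
        pPartsC σ.partition.parts =
      ∑ m ∈ Finset.range k, zeta ^ (j * m) • pPartsC (tau ^ m).partition.parts := by
    intro x
    rw [← Equiv.sum_comp (MulAut.conj x⁻¹).toEquiv]
    simp only [MulEquiv.toEquiv_eq_coe, MulEquiv.coe_toEquiv, MulAut.conj_apply, inv_inv,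
      parts_conj]
    simp only [cyclicCharExt, Finset.sum_smul]
    rw [Finset.sum_comm]
    refine Finset.sum_congr rfl fun m _ => ?_
    rw [Finset.sum_eq_single (tau ^ m)]
    · simp [mul_assoc]
    · intro b _ hb
      rw [if_neg, zero_smul]
      simpa [mul_assoc] using hb
    · simp
  unfold frobChar inducedCyclicChar
  simp only [hc, mul_smul, Finset.sum_smul, ← Finset.smul_sum]
  rw [Finset.sum_comm]
  simp only [key, Finset.sum_const, Finset.card_univ, Fintype.card_perm, Fintype.card_fin]
  rw [smul_comm, ← Nat.cast_smul_eq_nsmul ℂ, inv_smul_smul₀]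
  exact_mod_cast k.factorial_ne_zero

theorem sum_roots (k : ℕ) (hk : 0 < k) (zeta : ℂ) (hzeta : IsPrimitiveRoot zeta k) (j : ℕ)
    (P : ℕ → SymFn ℂ) :
    ∑ m ∈ Finset.range k, zeta ^ (j * m) • P (orderOf (zeta ^ m)) =
      ∑ d ∈ Nat.divisors k, (cRam (R := ℂ) j d) • P d := by
  have hmaps : ∀ m ∈ Finset.range k, orderOf (zeta ^ m) ∈ Nat.divisors k := by
    intro m _
    rw [Nat.mem_divisors]
    refine ⟨orderOf_dvd_of_pow_eq_one ?_, hk.ne'⟩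
    rw [← pow_mul, mul_comm, pow_mul, hzeta.pow_eq_one, one_pow]
  rw [← Finset.sum_fiberwise_of_maps_to hmaps]
  refine Finset.sum_congr rfl fun d hd => ?_
  have hdk := Nat.dvd_of_mem_divisors hd
  have hd0 : 0 < d := Nat.pos_of_mem_divisors hd
  rw [cRam, Finset.sum_smul]
  refine Finset.sum_bij (fun m _ => zeta ^ m) ?_ ?_ ?_ ?_
  · intro m hm
    rw [mem_primitiveRoots hd0, ← (Finset.mem_filter.1 hm).2]
    exact IsPrimitiveRoot.orderOf _
  · intro a ha b hb hab
    exact hzeta.pow_inj (by simpa using (Finset.mem_filter.1 ha).1)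
      (by simpa using (Finset.mem_filter.1 hb).1) hab
  · intro z hz
    rw [mem_primitiveRoots hd0] at hz
    have : NeZero k := ⟨hk.ne'⟩
    obtain ⟨i, hi, rfl⟩ := hzeta.eq_pow_of_pow_eq_one ((hz.pow_eq_one_iff_dvd k).2 hdk)
    exact ⟨i, Finset.mem_filter.2 ⟨Finset.mem_range.2 hi, hz.eq_orderOf.symm⟩, rfl⟩
  · intro m hm
    rw [(Finset.mem_filter.1 hm).2, mul_comm, pow_mul]

/-- **Foulkes' formula for the Frobenius characteristic of induced cyclic characters**
(Proposition 7.1 of the paper).  Let `τ` be a cyclic permutation of length `k`, `Γ = ⟨τ⟩`,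
`ζ_k` a primitive `k`-th root of unity and `0 ≤ j < k`.  The Frobenius characteristic of
the representation of `S_k` induced from `γ_j : τ ↦ ζ_k^j` is
`l_k^{(j)} = (1/k) ∑_{d ∣ k} c(j,d) p_d^{k/d}`, where `c(j,d)` is the Ramanujan sum. -/
theorem frobenius_char_induced_cyclic
    (k : ℕ) (hk : 0 < k) (tau : Equiv.Perm (Fin k))
    (htau : tau.IsCycleOn Set.univ)
    (zeta : ℂ) (hzeta : IsPrimitiveRoot zeta k) (j : ℕ) (hj : j < k) :
    frobChar k (inducedCyclicChar k tau zeta j) = lchar (R := ℂ) k j := by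
  have hpow : ∀ (x : Fin k) (n : ℕ), (tau ^ n) x = x ↔ k ∣ n := by
    intro x n
    have h := Equiv.Perm.IsCycleOn.pow_apply_eq (s := Finset.univ) (f := tau) (a := x)
      (by simpa using htau) (Finset.mem_univ x) (n := n)
    simpa using h
  have hord : orderOf tau = k := by
    apply Nat.dvd_antisymm
    · apply orderOf_dvd_of_pow_eq_one
      ext x
      have := (hpow x k).2 dvd_rfl
      simp [this]
    · rw [← hpow ⟨0, hk⟩, pow_orderOf_eq_one]; rfl
  rw [frob_step k tau zeta j (by rw [Nat.card_zpowers, hord]), lchar,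
    ← sum_roots k hk zeta hzeta j (fun d => pN (R := ℂ) d ^ (k / d))]
  congr 1
  refine Finset.sum_congr rfl fun m _ => ?_
  rw [parts_of_period hk (tau ^ m) (orderOf (zeta ^ m)), pPartsC, Multiset.map_replicate,
    Multiset.prod_replicate]
  intro x n
  rw [← pow_mul, hpow, orderOf_dvd_iff_pow_eq_one, ← pow_mul, hzeta.pow_eq_one_iff_dvd]
end
end
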